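/- arXiv:1102.4020 — 2 statements merged into one kernel-verified Lean document; each statement's English description precedes it below -/
import Mathlib

section
/- Let u be a monotone traveling wave solution of the balanced Allen-Cahn equation in the plane, and let γ : ℝ → ℝ be the C¹ function whose graph y = γ(x) is the zero level set of u. Then γ'(x) → +∞ as x → +∞ and γ'(x) → −∞ as x → −∞ (i.e. the level curve opens upward at both ends). -/
open Real Filter MeasureTheory Metric

noncomputable def pdx (u : ℝ → ℝ → ℝ) (x y : ℝ) : ℝ := deriv (fun t => u t y) x

noncomputable def pdy (u : ℝ → ℝ → ℝ) (x y : ℝ) : ℝ := deriv (fun t => u x t) y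

noncomputable def pdxx (u : ℝ → ℝ → ℝ) (x y : ℝ) : ℝ := deriv (fun t => pdx u t y) x

noncomputable def pdyy (u : ℝ → ℝ → ℝ) (x y : ℝ) : ℝ := deriv (fun t => pdy u x t) y

/-- `F` is a balanced double-well potential. -/
def BalancedDoubleWell (F : ℝ → ℝ) : Prop :=
  ContDiff ℝ 3 F ∧ deriv F (-1) = 0 ∧ deriv F 1 = 0 ∧
  0 < deriv (deriv F) (-1) ∧ 0 < deriv (deriv F) 1 ∧
  (∀ s ∈ Set.Ioo (-1 : ℝ) 0, 0 < deriv F s) ∧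
  (∀ s ∈ Set.Ioo (0 : ℝ) 1, deriv F s < 0) ∧
  F (-1) = 0 ∧ F 1 = 0

/-- `u` is a `C³` solution of `Δu + c uᵧ = F'(u)` on `ℝ²` with `|u| ≤ 1`
which is monotone in `y`. -/
def IsSolution (F : ℝ → ℝ) (c : ℝ) (u : ℝ → ℝ → ℝ) : Prop :=
  ContDiff ℝ 3 (fun p : ℝ × ℝ => u p.1 p.2) ∧
  (∀ x y : ℝ, pdxx u x y + pdyy u x y + c * pdy u x y = deriv F (u x y)) ∧
  (∀ x y : ℝ, |u x y| ≤ 1) ∧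
  (∀ x y : ℝ, 0 < pdy u x y)

/-- A monotone traveling wave solution connecting `-1` to `1`. -/
def IsTravelingWave (F : ℝ → ℝ) (c : ℝ) (u : ℝ → ℝ → ℝ) : Prop :=
  IsSolution F c u ∧
  (∀ x : ℝ, Tendsto (fun y => u x y) atTop (nhds 1)) ∧
  (∀ x : ℝ, Tendsto (fun y => u x y) atBot (nhds (-1)))

/-- The partial derivative in the first variable. -/
noncomputable def dx (f : ℝ × ℝ → ℝ) (p : ℝ × ℝ) : ℝ := fderiv ℝ f p (1, 0)

/-- The partial derivative in the second variable. -/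
noncomputable def dy (f : ℝ × ℝ → ℝ) (p : ℝ × ℝ) : ℝ := fderiv ℝ f p (0, 1)

section Calculus

variable {f : ℝ × ℝ → ℝ} {n m : WithTop ℕ∞}

lemma contDiff_dx (hf : ContDiff ℝ n f) (h : m + 1 ≤ n) : ContDiff ℝ m (dx f) :=
  (hf.fderiv_right h).clm_apply contDiff_const

lemma contDiff_dy (hf : ContDiff ℝ n f) (h : m + 1 ≤ n) : ContDiff ℝ m (dy f) :=
  (hf.fderiv_right h).clm_apply contDiff_const

lemma hasDerivAt_along_x {x y : ℝ} (hf : DifferentiableAt ℝ f (x, y)) :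
    HasDerivAt (fun t => f (t, y)) (dx f (x, y)) x :=
  HasFDerivAt.comp_hasDerivAt (f := fun t : ℝ => (t, y)) x hf.hasFDerivAt
    ((hasDerivAt_id x).prodMk (hasDerivAt_const x y))

lemma hasDerivAt_along_y {x y : ℝ} (hf : DifferentiableAt ℝ f (x, y)) :
    HasDerivAt (fun t => f (x, t)) (dy f (x, y)) y :=
  HasFDerivAt.comp_hasDerivAt (f := fun t : ℝ => (x, t)) y hf.hasFDerivAt
    ((hasDerivAt_const y x).prodMk (hasDerivAt_id y))

lemma dx_eq_of_hasDerivAt {x y d : ℝ} (hf : DifferentiableAt ℝ f (x, y))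
    (h : HasDerivAt (fun t => f (t, y)) d x) : dx f (x, y) = d :=
  (hasDerivAt_along_x hf).unique h

lemma dy_eq_of_hasDerivAt {x y d : ℝ} (hf : DifferentiableAt ℝ f (x, y))
    (h : HasDerivAt (fun t => f (x, t)) d y) : dy f (x, y) = d :=
  (hasDerivAt_along_y hf).unique h

lemma dx_dy_comm (hf : ContDiff ℝ 2 f) : dx (dy f) = dy (dx f) := by
  funext p
  have hd : DifferentiableAt ℝ (fderiv ℝ f) p :=
    ((hf.fderiv_right (m := 1) (by norm_num)).differentiable (by norm_num)).differentiableAt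
  have hs : IsSymmSndFDerivAt ℝ f p :=
    hf.contDiffAt.isSymmSndFDerivAt (by simp)
  have h1 : ∀ v : ℝ × ℝ, fderiv ℝ (fun q => fderiv ℝ f q v) p
      = (fderiv ℝ (fderiv ℝ f) p).flip v := by
    intro v
    rw [fderiv_clm_apply hd (differentiableAt_const v)]
    simp
  unfold dx dy
  rw [h1, h1]
  exact hs.eq _ _

lemma second_deriv_nonpos_of_isLocalMax {g g' : ℝ → ℝ} {x d : ℝ}
    (hg : ∀ t, HasDerivAt g (g' t) t) (hg' : HasDerivAt g' d x) (hmax : IsLocalMax g x) :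
    d ≤ 0 := by
  by_contra! hd
  have e1 : deriv g = g' := funext fun t => (hg t).deriv
  have h0 : g' x = 0 := hmax.hasDerivAt_eq_zero (hg x)
  have hmin : IsLocalMin g x := by
    apply isLocalMin_of_deriv_deriv_pos
    · rw [e1, hg'.deriv]; exact hd
    · rw [e1]; exact h0
    · exact (hg x).continuousAt
  have hc : g =ᶠ[nhds x] fun _ => g x := by
    filter_upwards [hmax, hmin] with t h1 h2 using le_antisymm h1 h2
  have h1 : deriv g =ᶠ[nhds x] deriv (fun _ : ℝ => g x) := hc.deriv
  have h2 := h1.deriv_eq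
  rw [e1, hg'.deriv] at h2
  simp at h2
  exact hd.ne' h2

end Calculus

section GradientEstimate

variable {w : ℝ × ℝ → ℝ}

lemma odd_part_le_barrier (hw : ContDiff ℝ 2 w) (a b : ℝ) {M N : ℝ}
    (hM : ∀ q ∈ closedBall (a, b) 1, |w q| ≤ M)
    (hN : ∀ q ∈ closedBall (a, b) 1, |dx (dx w) q + dy (dy w) q| < N)
    {x y : ℝ} (hx : x ∈ Set.Icc (-1 : ℝ) 1) (hy : y ∈ Set.Icc (0 : ℝ) 1) :
    (w (a + x, b + y) - w (a + x, b - y)) / 2 - M * (x ^ 2 + y * (2 - y))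
      - N / 2 * (y * (1 - y)) ≤ 0 := by
  set h : ℝ × ℝ → ℝ := fun q => (w (a + q.1, b + q.2) - w (a + q.1, b - q.2)) / 2
      - M * (q.1 ^ 2 + q.2 * (2 - q.2)) - N / 2 * (q.2 * (1 - q.2)) with hdef
  have hwc : Continuous w := hw.continuous
  have hcont : Continuous h := by rw [hdef]; fun_prop
  have hmem : ∀ x y : ℝ, x ∈ Set.Icc (-1 : ℝ) 1 → y ∈ Set.Icc (0 : ℝ) 1 →
      (a + x, b + y) ∈ closedBall (a, b) 1 ∧ (a + x, b - y) ∈ closedBall (a, b) 1 := by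
    intro x y hx hy
    have h1 : |x| ≤ 1 := abs_le.2 hx
    have h2 : |y| ≤ 1 := abs_le.2 ⟨by linarith [hy.1], hy.2⟩
    constructor <;> rw [mem_closedBall, Prod.dist_eq] <;> simp [h1, h2]
  have hM0 : 0 ≤ M := (abs_nonneg _).trans (hM (a, b) (mem_closedBall_self zero_le_one))
  have hN0 : 0 < N := (abs_nonneg _).trans_lt (hN (a, b) (mem_closedBall_self zero_le_one))
  have hcompact : IsCompact (Set.Icc (-1 : ℝ) 1 ×ˢ Set.Icc (0 : ℝ) 1) :=
    isCompact_Icc.prod isCompact_Icc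
  obtain ⟨⟨X, Y⟩, ⟨hX, hY⟩, hmax⟩ :=
    hcompact.exists_isMaxOn ⟨(x, y), ⟨hx, hy⟩⟩ hcont.continuousOn
  simp only at hX hY
  have hle : h (x, y) ≤ h (X, Y) := hmax ⟨hx, hy⟩
  suffices h (X, Y) ≤ 0 from hle.trans this
  by_contra! hpos
  obtain ⟨m1, m2⟩ := hmem X Y hX hY
  have hw1 := abs_le.1 (hM _ m1)
  have hw2 := abs_le.1 (hM _ m2)
  have hval : h (X, Y) = (w (a + X, b + Y) - w (a + X, b - Y)) / 2
      - M * (X ^ 2 + Y * (2 - Y)) - N / 2 * (Y * (1 - Y)) := rfl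
  have hNY : 0 ≤ N / 2 * (Y * (1 - Y)) :=
    mul_nonneg (half_pos hN0).le (mul_nonneg hY.1 (by linarith [hY.2]))
  have hMY : 0 ≤ M * (Y * (2 - Y)) := mul_nonneg hM0 (mul_nonneg hY.1 (by linarith [hY.2]))
  have hMX : 0 ≤ M * X ^ 2 := by positivity
  have hX1 : -1 < X := by
    rcases hX.1.lt_or_eq with h1 | h1
    · exact h1
    · subst h1; nlinarith
  have hX2 : X < 1 := by
    rcases hX.2.lt_or_eq with h1 | h1
    · exact h1
    · subst h1; nlinarith
  have hY1 : 0 < Y := by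
    rcases hY.1.lt_or_eq with h1 | h1
    · exact h1
    · subst h1; simp at hval; nlinarith
  have hY2 : Y < 1 := by
    rcases hY.2.lt_or_eq with h1 | h1
    · exact h1
    · subst h1; nlinarith
  have hloc : IsLocalMax h (X, Y) :=
    hmax.isLocalMax (prod_mem_nhds (Icc_mem_nhds hX1 hX2) (Icc_mem_nhds hY1 hY2))
  have hd0 : Differentiable ℝ w := hw.differentiable (by norm_num)
  have hdx : Differentiable ℝ (dx w) :=
    (contDiff_dx (m := 1) hw (by norm_num)).differentiable (by norm_num)
  have hdy : Differentiable ℝ (dy w) :=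
    (contDiff_dy (m := 1) hw (by norm_num)).differentiable (by norm_num)
  have hxx : (dx (dx w) (a + X, b + Y) - dx (dx w) (a + X, b - Y)) / 2 - 2 * M ≤ 0 := by
    have hsh : ∀ {f : ℝ × ℝ → ℝ} (_ : Differentiable ℝ f) (t e : ℝ),
        HasDerivAt (fun t => f (a + t, e)) (dx f (a + t, e)) t := fun hf t e =>
      (hasDerivAt_along_x (hf (a + t, e))).comp_const_add a t
    refine second_deriv_nonpos_of_isLocalMax (g := fun t => h (t, Y))
      (g' := fun t => (dx w (a + t, b + Y) - dx w (a + t, b - Y)) / 2 - M * (2 * t)) (x := X)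
      (fun t => ?_) ?_ ?_
    · have := ((((hsh hd0 t (b + Y)).sub (hsh hd0 t (b - Y))).div_const 2).sub
        ((((hasDerivAt_id t).pow 2).add_const (Y * (2 - Y))).const_mul M)).sub_const
          (N / 2 * (Y * (1 - Y)))
      refine this.congr_deriv ?_
      simp
    · have := (((hsh hdx X (b + Y)).sub (hsh hdx X (b - Y))).div_const 2).sub
        (((hasDerivAt_id X).const_mul 2).const_mul M)
      refine this.congr_deriv ?_
      ring
    · exact hloc.comp_continuous (g := fun t : ℝ => (t, Y)) (b := X)
        (by fun_prop)
  have hyy : (dy (dy w) (a + X, b + Y) - dy (dy w) (a + X, b - Y)) / 2 + 2 * M + N ≤ 0 := by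
    have hs1 : ∀ {f : ℝ × ℝ → ℝ} (_ : Differentiable ℝ f) (t e : ℝ),
        HasDerivAt (fun t => f (e, b + t)) (dy f (e, b + t)) t := fun hf t e =>
      (hasDerivAt_along_y (hf (e, b + t))).comp_const_add b t
    have hs2 : ∀ {f : ℝ × ℝ → ℝ} (_ : Differentiable ℝ f) (t e : ℝ),
        HasDerivAt (fun t => f (e, b - t)) (-dy f (e, b - t)) t := fun hf t e =>
      (hasDerivAt_along_y (hf (e, b - t))).comp_const_sub b t
    refine second_deriv_nonpos_of_isLocalMax (g := fun t => h (X, t))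
      (g' := fun t => (dy w (a + X, b + t) + dy w (a + X, b - t)) / 2 - M * (2 - 2 * t)
        - N / 2 * (1 - 2 * t)) (x := Y)
      (fun t => ?_) ?_ ?_
    · have := ((((hs1 hd0 t (a + X)).sub (hs2 hd0 t (a + X))).div_const 2).sub
        ((((hasDerivAt_id t).mul ((hasDerivAt_id t).const_sub 2)).const_add (X ^ 2)).const_mul
          M)).sub (((hasDerivAt_id t).mul ((hasDerivAt_id t).const_sub 1)).const_mul (N / 2))
      refine this.congr_deriv ?_
      simp
      ring
    · have := ((((hs1 hdy Y (a + X)).add (hs2 hdy Y (a + X))).div_const 2).sub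
        ((((hasDerivAt_id Y).const_mul 2).const_sub 2).const_mul M)).sub
          ((((hasDerivAt_id Y).const_mul 2).const_sub 1).const_mul (N / 2))
      refine this.congr_deriv ?_
      ring
    · exact hloc.comp_continuous (g := fun t : ℝ => (X, t)) (b := Y)
        (by fun_prop)
  have l1 := (abs_lt.1 (hN _ m1)).1
  have l2 := (abs_lt.1 (hN _ m2)).2
  linarith

lemma dy_le_of_laplacian (hw : ContDiff ℝ 2 w) (p : ℝ × ℝ) {M N : ℝ}
    (hM : ∀ q ∈ closedBall p 1, |w q| ≤ M)
    (hN : ∀ q ∈ closedBall p 1, |dx (dx w) q + dy (dy w) q| < N) :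
    dy w p ≤ 2 * M + N / 2 := by
  obtain ⟨a, b⟩ := p
  have hd0 : Differentiable ℝ w := hw.differentiable (by norm_num)
  have hs1 : HasDerivAt (fun t => w (a, b + t)) (dy w (a, b)) 0 := by
    have := (hasDerivAt_along_y (hd0 (a, b + 0))).comp_const_add b 0
    simpa using this
  have hs2 : HasDerivAt (fun t => w (a, b - t)) (-dy w (a, b)) 0 := by
    have := (hasDerivAt_along_y (hd0 (a, b - 0))).comp_const_sub b 0
    simpa using this
  have hg : HasDerivAt (fun t => (w (a, b + t) - w (a, b - t)) / 2 - M * (t * (2 - t))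
      - N / 2 * (t * (1 - t))) (dy w (a, b) - 2 * M - N / 2) 0 := by
    have := (((hs1.sub hs2).div_const 2).sub
        (((hasDerivAt_id (0 : ℝ)).mul ((hasDerivAt_id (0 : ℝ)).const_sub 2)).const_mul
          M)).sub (((hasDerivAt_id (0 : ℝ)).mul ((hasDerivAt_id (0 : ℝ)).const_sub 1)).const_mul
            (N / 2))
    refine this.congr_deriv ?_
    simp
    ring
  have hlim := hg.tendsto_slope_zero_right
  have hle : dy w (a, b) - 2 * M - N / 2 ≤ 0 := by
    refine le_of_tendsto hlim ?_
    filter_upwards [Ioc_mem_nhdsGT (zero_lt_one (α := ℝ))] with t ht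
    have := odd_part_le_barrier hw a b hM hN (x := 0) (y := t) (by simp) ⟨ht.1.le, ht.2⟩
    simp only [add_zero, zero_add, smul_eq_mul, sub_zero, zero_mul, mul_zero, sub_self,
      zero_div]
    refine mul_nonpos_of_nonneg_of_nonpos (inv_nonneg.2 ht.1.le) ?_
    simpa using this
  linarith

lemma abs_dy_le_of_laplacian (hw : ContDiff ℝ 2 w) (p : ℝ × ℝ) {M N : ℝ}
    (hM : ∀ q ∈ closedBall p 1, |w q| ≤ M)
    (hN : ∀ q ∈ closedBall p 1, |dx (dx w) q + dy (dy w) q| < N) :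
    |dy w p| ≤ 2 * M + N / 2 := by
  have hx : ∀ f : ℝ × ℝ → ℝ, dx (-f) = -dx f := fun f => by
    funext q; simp [dx, fderiv_neg]
  have hy : ∀ f : ℝ × ℝ → ℝ, dy (-f) = -dy f := fun f => by
    funext q; simp [dy, fderiv_neg]
  have h1 := dy_le_of_laplacian hw p hM hN
  have h2 := dy_le_of_laplacian (w := -w) hw.neg p (M := M) (N := N)
    (fun q hq => by simpa using hM q hq)
    (fun q hq => by
      rw [hx, hx, hy, hy, Pi.neg_apply, Pi.neg_apply, ← neg_add, abs_neg]
      exact hN q hq)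
  rw [hy, Pi.neg_apply] at h2
  exact abs_le.2 ⟨by linarith, h1⟩

lemma abs_dx_le_of_laplacian (hw : ContDiff ℝ 2 w) (p : ℝ × ℝ) {M N : ℝ}
    (hM : ∀ q ∈ closedBall p 1, |w q| ≤ M)
    (hN : ∀ q ∈ closedBall p 1, |dx (dx w) q + dy (dy w) q| < N) :
    |dx w p| ≤ 2 * M + N / 2 := by
  have hx : ∀ f : ℝ × ℝ → ℝ, Differentiable ℝ f → dx (f ∘ Prod.swap) = dy f ∘ Prod.swap := by
    rintro f hf
    funext ⟨x, y⟩
    exact dx_eq_of_hasDerivAt (hf.comp (ContinuousLinearEquiv.prodComm ℝ ℝ ℝ).differentiable _)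
      (hasDerivAt_along_y (hf (y, x)))
  have hy : ∀ f : ℝ × ℝ → ℝ, Differentiable ℝ f → dy (f ∘ Prod.swap) = dx f ∘ Prod.swap := by
    rintro f hf
    funext ⟨x, y⟩
    exact dy_eq_of_hasDerivAt (hf.comp (ContinuousLinearEquiv.prodComm ℝ ℝ ℝ).differentiable _)
      (hasDerivAt_along_x (hf (y, x)))
  have hd0 : Differentiable ℝ w := hw.differentiable (by norm_num)
  have hdx : Differentiable ℝ (dx w) :=
    (contDiff_dx (m := 1) hw (by norm_num)).differentiable (by norm_num)
  have hdy : Differentiable ℝ (dy w) :=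
    (contDiff_dy (m := 1) hw (by norm_num)).differentiable (by norm_num)
  have hball : ∀ q ∈ closedBall p.swap (1 : ℝ), q.swap ∈ closedBall p (1 : ℝ) := by
    intro q hq
    rw [mem_closedBall, Prod.dist_eq] at hq ⊢
    rwa [max_comm] at hq
  have h := abs_dy_le_of_laplacian (w := w ∘ Prod.swap)
    (hw.comp (ContinuousLinearEquiv.prodComm ℝ ℝ ℝ).contDiff) p.swap (M := M) (N := N)
    (fun q hq => hM _ (hball q hq))
    (fun q hq => by
      rw [hx _ hd0, hy _ hd0, hx _ hdy, hy _ hdx, add_comm]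
      exact hN _ (hball q hq))
  rw [hy _ hd0] at h
  simpa using h

/-- Interior gradient estimate for the operator `Δ + c ∂_y`. -/
lemma exists_gradient_estimate (c : ℝ) : ∃ C : ℝ, 0 < C ∧ ∀ w : ℝ × ℝ → ℝ, ContDiff ℝ 2 w →
    ∀ (p : ℝ × ℝ) (M N : ℝ), (∀ q ∈ closedBall p 1, |w q| ≤ M) →
    (∀ q ∈ closedBall p 1, |dx (dx w) q + dy (dy w) q + c * dy w q| ≤ N) →
    |dx w p| ≤ C * (M + N) ∧ |dy w p| ≤ C * (M + N) := by
  set E := exp (|c| / 2) with hE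
  have hE0 : 0 < E := exp_pos _
  refine ⟨2 * E + E * (1 + c ^ 2 / 4) + |c|, by positivity, ?_⟩
  intro w hw p M N hM hN
  have hM0 : 0 ≤ M := (abs_nonneg _).trans (hM p (mem_closedBall_self zero_le_one))
  have hN0 : 0 ≤ N := (abs_nonneg _).trans (hN p (mem_closedBall_self zero_le_one))
  set e : ℝ → ℝ := fun t => exp (c / 2 * (t - p.2)) with he
  have hed : ∀ t, HasDerivAt e (c / 2 * e t) t := fun t => by
    have := (((hasDerivAt_id t).sub_const p.2).const_mul (c / 2)).exp
    refine this.congr_deriv ?_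
    simp [he]; ring
  set v : ℝ × ℝ → ℝ := fun q => e q.2 * w q with hv
  have hvC : ContDiff ℝ 2 v := by rw [hv, he]; fun_prop
  have hd0 : Differentiable ℝ w := hw.differentiable (by norm_num)
  have hdx : Differentiable ℝ (dx w) :=
    (contDiff_dx (m := 1) hw (by norm_num)).differentiable (by norm_num)
  have hdy : Differentiable ℝ (dy w) :=
    (contDiff_dy (m := 1) hw (by norm_num)).differentiable (by norm_num)
  have hv0 : Differentiable ℝ v := hvC.differentiable (by norm_num)
  have hvx : Differentiable ℝ (dx v) :=
    (contDiff_dx (m := 1) hvC (by norm_num)).differentiable (by norm_num)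
  have hvy : Differentiable ℝ (dy v) :=
    (contDiff_dy (m := 1) hvC (by norm_num)).differentiable (by norm_num)
  have e1 : dx v = fun q => e q.2 * dx w q := by
    funext ⟨x, y⟩
    exact dx_eq_of_hasDerivAt (hv0 _) ((hasDerivAt_along_x (hd0 _)).const_mul (e y))
  have e2 : dy v = fun q => e q.2 * (dy w q + c / 2 * w q) := by
    funext ⟨x, y⟩
    refine dy_eq_of_hasDerivAt (hv0 _) (((hed y).mul (hasDerivAt_along_y (hd0 _))).congr_deriv ?_)
    ring
  have e3 : ∀ q, dx (dx v) q = e q.2 * dx (dx w) q := by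
    rintro ⟨x, y⟩
    refine dx_eq_of_hasDerivAt (hvx _) ?_
    rw [e1]
    exact (hasDerivAt_along_x (hdx _)).const_mul (e y)
  have e4 : ∀ q, dy (dy v) q = e q.2 * (dy (dy w) q + c * dy w q + c ^ 2 / 4 * w q) := by
    rintro ⟨x, y⟩
    refine dy_eq_of_hasDerivAt (hvy _) ?_
    rw [e2]
    refine ((hed y).mul ((hasDerivAt_along_y (hdy _)).add
      ((hasDerivAt_along_y (hd0 _)).const_mul (c / 2)))).congr_deriv ?_
    simp
    ring
  have heE : ∀ q ∈ closedBall p 1, e q.2 ≤ E := by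
    intro q hq
    rw [mem_closedBall, Prod.dist_eq] at hq
    have h2 : |q.2 - p.2| ≤ 1 := (le_max_right _ _).trans hq
    apply exp_le_exp.2
    calc c / 2 * (q.2 - p.2) ≤ |c / 2 * (q.2 - p.2)| := le_abs_self _
      _ = |c| / 2 * |q.2 - p.2| := by rw [abs_mul, abs_div]; norm_num
      _ ≤ |c| / 2 * 1 := by gcongr
      _ = |c| / 2 := by ring
  have hM' : ∀ q ∈ closedBall p 1, |v q| ≤ E * M := by
    intro q hq
    rw [hv, abs_mul, abs_of_pos (exp_pos _)]
    exact mul_le_mul (heE q hq) (hM q hq) (abs_nonneg _) hE0.le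
  have hN' : ∀ q ∈ closedBall p 1, |dx (dx v) q + dy (dy v) q| ≤ E * (N + c ^ 2 / 4 * M) := by
    intro q hq
    rw [e3, e4, ← mul_add, abs_mul, abs_of_pos (exp_pos _)]
    refine mul_le_mul (heE q hq) ?_ (abs_nonneg _) hE0.le
    have : dx (dx w) q + (dy (dy w) q + c * dy w q + c ^ 2 / 4 * w q)
      = (dx (dx w) q + dy (dy w) q + c * dy w q) + c ^ 2 / 4 * w q := by ring
    rw [this]
    refine (abs_add_le _ _).trans (add_le_add (hN q hq) ?_)
    rw [abs_mul, abs_of_nonneg (by positivity : (0 : ℝ) ≤ c ^ 2 / 4)]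
    exact mul_le_mul_of_nonneg_left (hM q hq) (by positivity)
  have hep : e p.2 = 1 := by simp [he]
  have k1 : |dx v p| ≤ 2 * (E * M) + E * (N + c ^ 2 / 4 * M) := by
    refine le_of_forall_pos_le_add fun ε hε => ?_
    have := abs_dx_le_of_laplacian hvC p hM' (N := E * (N + c ^ 2 / 4 * M) + ε)
      (fun q hq => (hN' q hq).trans_lt (by linarith))
    have : 0 ≤ E * (N + c ^ 2 / 4 * M) := by positivity
    linarith
  have k2 : |dy v p| ≤ 2 * (E * M) + E * (N + c ^ 2 / 4 * M) := by
    refine le_of_forall_pos_le_add fun ε hε => ?_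
    have := abs_dy_le_of_laplacian hvC p hM' (N := E * (N + c ^ 2 / 4 * M) + ε)
      (fun q hq => (hN' q hq).trans_lt (by linarith))
    have : 0 ≤ E * (N + c ^ 2 / 4 * M) := by positivity
    linarith
  rw [e1] at k1
  rw [e2] at k2
  simp only [hep, one_mul] at k1 k2
  have hb : 2 * (E * M) + E * (N + c ^ 2 / 4 * M) + |c| * M
      ≤ (2 * E + E * (1 + c ^ 2 / 4) + |c|) * (M + N) := by
    have : 0 ≤ E * M := by positivity
    have : 0 ≤ E * N := by positivity
    have : 0 ≤ c ^ 2 / 4 * (E * N) := by positivity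
    have : 0 ≤ |c| * N := by positivity
    linarith
  have hcM : 0 ≤ |c| * M := by positivity
  refine ⟨by linarith, ?_⟩
  have h3 : |c / 2 * w p| ≤ |c| * M := by
    have := hM p (mem_closedBall_self zero_le_one)
    rw [abs_mul]
    refine mul_le_mul ?_ this (abs_nonneg _) (abs_nonneg _)
    rw [abs_div]
    norm_num
  have h4 : |dy w p| ≤ |dy w p + c / 2 * w p| + |c / 2 * w p| := by
    have := abs_sub (dy w p + c / 2 * w p) (c / 2 * w p)
    simpa using this
  linarith

end GradientEstimate

section Potential

variable {F : ℝ → ℝ}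

lemma BalancedDoubleWell.contDiff_deriv (hF : BalancedDoubleWell F) : ContDiff ℝ 2 (deriv F) :=
  ((contDiff_succ_iff_deriv (n := 2)).1 (by simpa [two_add_one_eq_three] using hF.1)).2.2

lemma BalancedDoubleWell.differentiable (hF : BalancedDoubleWell F) : Differentiable ℝ F :=
  hF.1.differentiable (by norm_num)

lemma BalancedDoubleWell.differentiable_deriv (hF : BalancedDoubleWell F) :
    Differentiable ℝ (deriv F) :=
  hF.contDiff_deriv.differentiable (by norm_num)

lemma BalancedDoubleWell.exists_deriv_bound (hF : BalancedDoubleWell F) :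
    ∃ B : ℝ, 0 < B ∧ (∀ s ∈ Set.Icc (-1 : ℝ) 1, |deriv (deriv F) s| ≤ B) ∧
      ∀ s ∈ Set.Icc (-1 : ℝ) 1, ∀ t ∈ Set.Icc (-1 : ℝ) 1,
        |deriv F s - deriv F t| ≤ B * |s - t| := by
  have hc : Continuous (deriv (deriv F)) := hF.contDiff_deriv.continuous_deriv (by norm_num)
  obtain ⟨B, hB⟩ := isCompact_Icc.exists_bound_of_continuousOn (s := Set.Icc (-1 : ℝ) 1)
    hc.continuousOn
  have hB' : ∀ s ∈ Set.Icc (-1 : ℝ) 1, |deriv (deriv F) s| ≤ max B 1 := fun s hs =>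
    (hB s hs).trans (le_max_left _ _)
  refine ⟨max B 1, by positivity, hB', fun s hs t ht => ?_⟩
  exact (convex_Icc (-1 : ℝ) 1).norm_image_sub_le_of_norm_deriv_le
    (fun x _ => hF.differentiable_deriv x) hB' ht hs

lemma BalancedDoubleWell.monotoneOn (hF : BalancedDoubleWell F) :
    StrictMonoOn F (Set.Icc (-1) 0) :=
  strictMonoOn_of_deriv_pos (convex_Icc _ _) hF.differentiable.continuous.continuousOn
    (by simpa using hF.2.2.2.2.2.1)

lemma BalancedDoubleWell.antitoneOn (hF : BalancedDoubleWell F) :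
    StrictAntiOn F (Set.Icc 0 1) :=
  strictAntiOn_of_deriv_neg (convex_Icc _ _) hF.differentiable.continuous.continuousOn
    (by simpa using hF.2.2.2.2.2.2.1)

lemma BalancedDoubleWell.nonneg (hF : BalancedDoubleWell F) {s : ℝ}
    (hs : s ∈ Set.Icc (-1 : ℝ) 1) : 0 ≤ F s := by
  rcases le_total s 0 with h | h
  · rw [← hF.2.2.2.2.2.2.2.1]
    exact hF.monotoneOn.monotoneOn (by simp) ⟨hs.1, h⟩ hs.1
  · rw [← hF.2.2.2.2.2.2.2.2]
    exact hF.antitoneOn.antitoneOn ⟨h, hs.2⟩ (by simp) hs.2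

lemma BalancedDoubleWell.zero_pos (hF : BalancedDoubleWell F) : 0 < F 0 := by
  have h := hF.antitoneOn (a := 0) (b := 1) (by simp) (by simp) zero_lt_one
  rwa [hF.2.2.2.2.2.2.2.2] at h

end Potential

/-- A monotone traveling wave, with the partial derivatives expressed through `dx` and `dy`. -/
structure PlaneWave (F : ℝ → ℝ) (c : ℝ) (U : ℝ × ℝ → ℝ) : Prop where
  well : BalancedDoubleWell F
  speed : 0 < c
  smooth : ContDiff ℝ 3 U
  eqn : ∀ p, dx (dx U) p + dy (dy U) p + c * dy U p = deriv F (U p)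
  bound : ∀ p, |U p| ≤ 1
  dy_pos : ∀ p, 0 < dy U p
  top : ∀ x, Tendsto (fun y => U (x, y)) atTop (nhds 1)
  bot : ∀ x, Tendsto (fun y => U (x, y)) atBot (nhds (-1))

namespace PlaneWave

variable {F : ℝ → ℝ} {c : ℝ} {U : ℝ × ℝ → ℝ}

lemma mem_Icc (h : PlaneWave F c U) (p : ℝ × ℝ) : U p ∈ Set.Icc (-1 : ℝ) 1 :=
  abs_le.1 (h.bound p)

lemma contDiff_two (h : PlaneWave F c U) : ContDiff ℝ 2 U := h.smooth.of_le (by norm_num)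

lemma diff (h : PlaneWave F c U) : Differentiable ℝ U := h.smooth.differentiable (by norm_num)

lemma contDiff_dx (h : PlaneWave F c U) : ContDiff ℝ 2 (dx U) :=
  _root_.contDiff_dx h.smooth (by norm_num)

lemma contDiff_dy (h : PlaneWave F c U) : ContDiff ℝ 2 (dy U) :=
  _root_.contDiff_dy h.smooth (by norm_num)

lemma diff_dx (h : PlaneWave F c U) : Differentiable ℝ (dx U) :=
  h.contDiff_dx.differentiable (by norm_num)

lemma diff_dy (h : PlaneWave F c U) : Differentiable ℝ (dy U) :=
  h.contDiff_dy.differentiable (by norm_num)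

lemma strictMono (h : PlaneWave F c U) (x : ℝ) : StrictMono fun y => U (x, y) :=
  strictMono_of_deriv_pos fun y => by
    rw [(hasDerivAt_along_y (h.diff (x, y))).deriv]; exact h.dy_pos _

lemma eqn_dy (h : PlaneWave F c U) (p : ℝ × ℝ) :
    dx (dx (dy U)) p + dy (dy (dy U)) p + c * dy (dy U) p
      = deriv (deriv F) (U p) * dy U p := by
  obtain ⟨x, y⟩ := p
  rw [dx_dy_comm h.contDiff_two, dx_dy_comm h.contDiff_dx]
  have hxx : Differentiable ℝ (dx (dx U)) :=
    (_root_.contDiff_dx (m := 1) h.contDiff_dx (by norm_num)).differentiable (by norm_num)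
  have hyy : Differentiable ℝ (dy (dy U)) :=
    (_root_.contDiff_dy (m := 1) h.contDiff_dy (by norm_num)).differentiable (by norm_num)
  have h1 := ((hasDerivAt_along_y (hxx (x, y))).add (hasDerivAt_along_y (hyy (x, y)))).add
    ((hasDerivAt_along_y (h.diff_dy (x, y))).const_mul c)
  have h2 : HasDerivAt (fun t => deriv F (U (x, t))) (deriv (deriv F) (U (x, y)) * dy U (x, y)) y :=
    HasDerivAt.comp y (h.well.differentiable_deriv _).hasDerivAt (hasDerivAt_along_y (h.diff (x, y)))
  exact (h1.congr_of_eventuallyEq (Eventually.of_forall fun t => (h.eqn (x, t)).symm)).unique h2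

lemma exists_gradient_bound (h : PlaneWave F c U) :
    ∃ K : ℝ, 0 < K ∧ ∀ p, |dx U p| ≤ K ∧ |dy U p| ≤ K := by
  obtain ⟨C, hC, hest⟩ := exists_gradient_estimate c
  obtain ⟨B, hB, -, hlip⟩ := h.well.exists_deriv_bound
  refine ⟨C * (1 + B * 2), by positivity, fun p => ?_⟩
  refine hest U h.contDiff_two p 1 (B * 2) (fun q _ => h.bound q) fun q _ => ?_
  rw [h.eqn]
  have h1 := hlip (U q) (h.mem_Icc q) 1 (by simp)
  rw [h.well.2.2.1, sub_zero] at h1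
  refine h1.trans (mul_le_mul_of_nonneg_left ?_ hB.le)
  have := h.mem_Icc q
  exact abs_le.2 ⟨by linarith [this.1], by linarith [this.2]⟩

lemma tendsto_gradient (h : PlaneWave F c U) {l : Filter ℝ} {ℓ x : ℝ} (hℓ : deriv F ℓ = 0)
    (hℓ' : ℓ ∈ Set.Icc (-1 : ℝ) 1)
    (hunif : ∀ ε > 0, ∀ᶠ y in l, ∀ q ∈ closedBall (x, y) 1, |U q - ℓ| ≤ ε) :
    Tendsto (fun y => dx U (x, y)) l (nhds 0) ∧ Tendsto (fun y => dy U (x, y)) l (nhds 0) := by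
  obtain ⟨C, hC, hest⟩ := exists_gradient_estimate c
  obtain ⟨B, hB, -, hlip⟩ := h.well.exists_deriv_bound
  have hxs : dx (fun q => U q - ℓ) = dx U := by
    funext q; simp [dx, fderiv_sub_const]
  have hys : dy (fun q => U q - ℓ) = dy U := by
    funext q; simp [dy, fderiv_sub_const]
  have key : ∀ ε > 0, ∀ᶠ y in l, |dx U (x, y)| < ε ∧ |dy U (x, y)| < ε := by
    intro ε hε
    set δ := ε / (2 * C * (1 + B)) with hδ
    have hδ0 : 0 < δ := by positivity
    filter_upwards [hunif δ hδ0] with y hy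
    have := hest (fun q => U q - ℓ) (h.contDiff_two.sub contDiff_const) (x, y) δ (B * δ) hy
      (fun q hq => by
        rw [hxs, hys, h.eqn]
        have h1 := hlip (U q) (h.mem_Icc q) ℓ hℓ'
        rw [hℓ, sub_zero] at h1
        exact h1.trans (mul_le_mul_of_nonneg_left (hy q hq) hB.le))
    rw [hxs, hys] at this
    have e : C * (δ + B * δ) = ε / 2 := by rw [hδ]; field_simp
    rw [e] at this
    exact ⟨this.1.trans_lt (half_lt_self hε), this.2.trans_lt (half_lt_self hε)⟩
  constructor <;> rw [Metric.tendsto_nhds] <;> intro ε hε <;>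
    filter_upwards [key ε hε] with y hy <;> rw [Real.dist_0_eq_abs]
  exacts [hy.1, hy.2]

lemma tendsto_gradient_atTop (h : PlaneWave F c U) (x : ℝ) :
    Tendsto (fun y => dx U (x, y)) atTop (nhds 0) ∧
      Tendsto (fun y => dy U (x, y)) atTop (nhds 0) := by
  refine h.tendsto_gradient h.well.2.2.1 (by simp) fun ε hε => ?_
  have hU : Continuous U := h.smooth.continuous
  have hdini := Monotone.tendstoUniformlyOn_of_forall_tendsto
    (F := fun y t => U (t, y)) (f := fun _ => (1 : ℝ)) (isCompact_Icc (a := x - 1) (b := x + 1))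
    (fun y => by fun_prop) (fun t _ => (h.strictMono t).monotone) continuousOn_const
    (fun t _ => h.top t)
  have h1 := Metric.tendstoUniformlyOn_iff.1 hdini ε hε
  filter_upwards [(tendsto_atTop_add_const_right atTop (-1 : ℝ) tendsto_id).eventually h1] with y hy
  rintro ⟨q1, q2⟩ hq
  rw [mem_closedBall, Prod.dist_eq, max_le_iff] at hq
  have hq1 := abs_le.1 hq.1
  have hq2 := abs_le.1 hq.2
  simp only at hq1 hq2
  have h2 := hy q1 ⟨by linarith, by linarith⟩
  rw [Real.dist_eq] at h2
  have h3 : U (q1, y + -1) ≤ U (q1, q2) := (h.strictMono q1).monotone (by linarith)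
  have h4 := (h.mem_Icc (q1, q2)).2
  have h5 := (abs_lt.1 h2).2
  simp only [id] at h5
  exact abs_le.2 ⟨by linarith, by linarith⟩

lemma tendsto_gradient_atBot (h : PlaneWave F c U) (x : ℝ) :
    Tendsto (fun y => dx U (x, y)) atBot (nhds 0) ∧
      Tendsto (fun y => dy U (x, y)) atBot (nhds 0) := by
  refine h.tendsto_gradient h.well.2.1 (by simp) fun ε hε => ?_
  have hU : Continuous U := h.smooth.continuous
  have hdini := Antitone.tendstoUniformlyOn_of_forall_tendsto
    (F := fun y t => U (t, -y)) (f := fun _ => (-1 : ℝ)) (isCompact_Icc (a := x - 1) (b := x + 1))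
    (fun y => by fun_prop) (fun t _ a b hab => (h.strictMono t).monotone (neg_le_neg hab))
    continuousOn_const (fun t _ => (h.bot t).comp tendsto_neg_atTop_atBot)
  have h1 := Metric.tendstoUniformlyOn_iff.1 hdini ε hε
  filter_upwards [(tendsto_atTop_add_const_right atBot (-1 : ℝ)
    tendsto_neg_atBot_atTop).eventually h1] with y hy
  rintro ⟨q1, q2⟩ hq
  rw [mem_closedBall, Prod.dist_eq, max_le_iff] at hq
  have hq1 := abs_le.1 hq.1
  have hq2 := abs_le.1 hq.2
  simp only at hq1 hq2
  have h2 := hy q1 ⟨by linarith, by linarith⟩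
  rw [Real.dist_eq] at h2
  have h3 : U (q1, q2) ≤ U (q1, -(-y + -1)) := (h.strictMono q1).monotone (by linarith)
  have h4 := (h.mem_Icc (q1, q2)).1
  have h5 := (abs_lt.1 h2).1
  exact abs_le.2 ⟨by linarith, by linarith⟩

end PlaneWave

/-- The flux in `y` of the momentum balance in the `y` direction. -/
noncomputable def stress (F : ℝ → ℝ) (U : ℝ × ℝ → ℝ) (p : ℝ × ℝ) : ℝ :=
  dy U p ^ 2 / 2 - dx U p ^ 2 / 2 - F (U p)

namespace PlaneWave

variable {F : ℝ → ℝ} {c : ℝ} {U : ℝ × ℝ → ℝ}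

lemma continuous_dx (h : PlaneWave F c U) : Continuous (dx U) := h.contDiff_dx.continuous

lemma continuous_dy (h : PlaneWave F c U) : Continuous (dy U) := h.contDiff_dy.continuous

lemma continuous_potential (h : PlaneWave F c U) : Continuous fun p => F (U p) :=
  h.well.differentiable.continuous.comp h.diff.continuous

lemma continuous_stress (h : PlaneWave F c U) : Continuous (stress F U) :=
  (((h.continuous_dy.pow 2).div_const 2).sub ((h.continuous_dx.pow 2).div_const 2)).sub
    h.continuous_potential

lemma differentiable_stress (h : PlaneWave F c U) : Differentiable ℝ (stress F U) := by
  have h1 : Differentiable ℝ fun p => dy U p ^ 2 * (2 : ℝ)⁻¹ - dx U p ^ 2 * (2 : ℝ)⁻¹ - F (U p) :=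
    (((h.diff_dy.pow 2).mul_const _).sub ((h.diff_dx.pow 2).mul_const _)).sub
      (h.well.differentiable.comp h.diff)
  simp only [← div_eq_mul_inv] at h1
  exact h1

lemma momentum_balance (h : PlaneWave F c U) (p : ℝ × ℝ) :
    dx (fun q => dx U q * dy U q) p + dy (stress F U) p = -(c * dy U p ^ 2) := by
  obtain ⟨x, y⟩ := p
  have e1 : dx (fun q => dx U q * dy U q) (x, y)
      = dx (dx U) (x, y) * dy U (x, y) + dx U (x, y) * dx (dy U) (x, y) :=
    dx_eq_of_hasDerivAt ((h.diff_dx.mul h.diff_dy) _)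
      ((hasDerivAt_along_x (h.diff_dx _)).mul (hasDerivAt_along_x (h.diff_dy _)))
  have e2 : dy (stress F U) (x, y) = dy U (x, y) * dy (dy U) (x, y)
      - dx U (x, y) * dy (dx U) (x, y) - deriv F (U (x, y)) * dy U (x, y) := by
    refine dy_eq_of_hasDerivAt (h.differentiable_stress _) ?_
    have hFU : HasDerivAt (fun t => F (U (x, t))) (deriv F (U (x, y)) * dy U (x, y)) y :=
      HasDerivAt.comp y (h.well.differentiable _).hasDerivAt (hasDerivAt_along_y (h.diff (x, y)))
    refine (((((hasDerivAt_along_y (h.diff_dy (x, y))).pow 2).div_const 2).sub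
      (((hasDerivAt_along_y (h.diff_dx (x, y))).pow 2).div_const 2)).sub hFU).congr_deriv ?_
    simp
    ring
  rw [e1, e2, dx_dy_comm h.contDiff_two, ← h.eqn]
  ring

lemma integral_momentum_balance (h : PlaneWave F c U) {a b s t : ℝ} (hab : a ≤ b) (hst : s ≤ t) :
    c * ∫ p in Set.Icc (a, s) (b, t), dy U p ^ 2 =
      (∫ y in s..t, dx U (a, y) * dy U (a, y)) - (∫ y in s..t, dx U (b, y) * dy U (b, y))
        + (∫ x in a..b, stress F U (x, s)) - ∫ x in a..b, stress F U (x, t) := by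
  have hP : Differentiable ℝ fun q => dx U q * dy U q := h.diff_dx.mul h.diff_dy
  have hdyc := h.continuous_dy
  have hmb : (fun p => fderiv ℝ (fun q => dx U q * dy U q) p (1, 0)
      + fderiv ℝ (stress F U) p (0, 1)) = fun p => -(c * dy U p ^ 2) :=
    funext h.momentum_balance
  have := integral_divergence_prod_Icc_of_hasFDerivAt_of_le (fun q => dx U q * dy U q)
    (stress F U) (fderiv ℝ fun q => dx U q * dy U q) (fderiv ℝ (stress F U)) (a, s) (b, t)
    ⟨hab, hst⟩ hP.continuous.continuousOn h.continuous_stress.continuousOn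
    (fun x _ => (hP x).hasFDerivAt) (fun x _ => (h.differentiable_stress x).hasFDerivAt)
    (by
      rw [hmb]
      exact Continuous.integrableOn_Icc (by fun_prop))
  rw [hmb, integral_neg, integral_const_mul] at this
  simp only at this
  linarith

lemma integral_dy (h : PlaneWave F c U) (x s t : ℝ) :
    ∫ y in s..t, dy U (x, y) = U (x, t) - U (x, s) := by
  have := h.continuous_dy
  exact intervalIntegral.integral_eq_sub_of_hasDerivAt
    (fun y _ => hasDerivAt_along_y (h.diff (x, y)))
    (Continuous.intervalIntegrable (by fun_prop) _ _)

/-- Integrating against `dy U` along a vertical line costs at most the oscillation of `U`. -/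
lemma abs_integral_mul_dy_le (h : PlaneWave F c U) {g : ℝ → ℝ} {K x s t : ℝ}
    (hK : ∀ y, |g y| ≤ K) (hst : s ≤ t) : |∫ y in s..t, g y * dy U (x, y)| ≤ 2 * K := by
  have hc := h.continuous_dy
  have h1 : ‖∫ y in s..t, g y * dy U (x, y)‖ ≤ ∫ y in s..t, K * dy U (x, y) := by
    refine intervalIntegral.norm_integral_le_of_norm_le hst (ae_of_all _ fun y _ => ?_)
      (Continuous.intervalIntegrable (by fun_prop) _ _)
    rw [norm_mul, Real.norm_eq_abs, Real.norm_eq_abs, abs_of_pos (h.dy_pos _)]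
    exact mul_le_mul_of_nonneg_right (hK y) (h.dy_pos _).le
  rw [intervalIntegral.integral_const_mul, h.integral_dy] at h1
  have hK0 : 0 ≤ K := (abs_nonneg _).trans (hK 0)
  have h2 : U (x, t) - U (x, s) ≤ 2 := by
    linarith [(h.mem_Icc (x, t)).2, (h.mem_Icc (x, s)).1]
  rw [Real.norm_eq_abs] at h1
  nlinarith

lemma tendsto_integral_stress (h : PlaneWave F c U) {l : Filter ℝ} [l.IsCountablyGenerated] {ℓ : ℝ}
    (hℓ : F ℓ = 0) (hU : ∀ x, Tendsto (fun y => U (x, y)) l (nhds ℓ))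
    (hg : ∀ x, Tendsto (fun y => dx U (x, y)) l (nhds 0) ∧
      Tendsto (fun y => dy U (x, y)) l (nhds 0)) (a b : ℝ) :
    Tendsto (fun y => ∫ x in a..b, stress F U (x, y)) l (nhds 0) := by
  obtain ⟨K, hK, hgrad⟩ := h.exists_gradient_bound
  obtain ⟨A, hA⟩ := isCompact_Icc.exists_bound_of_continuousOn (s := Set.Icc (-1 : ℝ) 1)
    h.well.differentiable.continuous.continuousOn
  have hsc := h.continuous_stress
  have := intervalIntegral.tendsto_integral_filter_of_dominated_convergence (μ := volume)
    (a := a) (b := b) (l := l) (F := fun y x => stress F U (x, y)) (f := fun _ => (0 : ℝ))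
    (fun _ => K ^ 2 + A)
    (Eventually.of_forall fun y => Continuous.aestronglyMeasurable (by fun_prop))
    (Eventually.of_forall fun y => ae_of_all _ fun x _ => ?_)
    (by simp) (ae_of_all _ fun x _ => ?_)
  · simpa using this
  · have h1 := sq_le_sq' (abs_le.1 (hgrad (x, y)).1).1 (abs_le.1 (hgrad (x, y)).1).2
    have h2 := sq_le_sq' (abs_le.1 (hgrad (x, y)).2).1 (abs_le.1 (hgrad (x, y)).2).2
    have h3 := abs_le.1 (hA _ (h.mem_Icc (x, y)))
    have h4 := sq_nonneg (dx U (x, y))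
    have h5 := sq_nonneg (dy U (x, y))
    unfold stress
    exact abs_le.2 ⟨by linarith [h3.2], by linarith [h3.1]⟩
  · have hF := (h.well.differentiable.continuous.tendsto ℓ).comp (hU x)
    have := ((((hg x).2.pow 2).div_const 2).sub (((hg x).1.pow 2).div_const 2)).sub hF
    simpa [hℓ, stress] using this

lemma tendsto_integral_stress_atTop (h : PlaneWave F c U) (a b : ℝ) :
    Tendsto (fun y => ∫ x in a..b, stress F U (x, y)) atTop (nhds 0) :=
  h.tendsto_integral_stress h.well.2.2.2.2.2.2.2.2 h.top h.tendsto_gradient_atTop a b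

lemma tendsto_integral_stress_atBot (h : PlaneWave F c U) (a b : ℝ) :
    Tendsto (fun y => ∫ x in a..b, stress F U (x, y)) atBot (nhds 0) :=
  h.tendsto_integral_stress h.well.2.2.2.2.2.2.2.1 h.bot h.tendsto_gradient_atBot a b

lemma continuous_dy_sq (h : PlaneWave F c U) : Continuous fun p => dy U p ^ 2 :=
  h.continuous_dy.pow 2

lemma exists_integral_dy_sq_bound (h : PlaneWave F c U) :
    ∃ S : ℝ, 0 < S ∧ ∀ a b s t : ℝ, a ≤ b → s ≤ t →
      c * ∫ p in Set.Icc (a, s) (b, t), dy U p ^ 2 ≤ S := by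
  obtain ⟨K, hK, hgrad⟩ := h.exists_gradient_bound
  refine ⟨4 * K + 2, by positivity, fun a b s t hab hst => ?_⟩
  have e1 := (h.tendsto_integral_stress_atTop a b).eventually
    (Ioo_mem_nhds (neg_lt_zero.2 one_pos) one_pos)
  have e2 := (h.tendsto_integral_stress_atBot a b).eventually
    (Ioo_mem_nhds (neg_lt_zero.2 one_pos) one_pos)
  obtain ⟨T, hT, hTt⟩ := (e1.and (eventually_ge_atTop t)).exists
  obtain ⟨S, hS, hSs⟩ := (e2.and (eventually_le_atBot s)).exists
  have hST : S ≤ T := hSs.trans (hst.trans hTt)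
  have hmono : ∫ p in Set.Icc (a, s) (b, t), dy U p ^ 2 ≤
      ∫ p in Set.Icc (a, S) (b, T), dy U p ^ 2 :=
    setIntegral_mono_set h.continuous_dy_sq.integrableOn_Icc
      (ae_of_all _ fun p => sq_nonneg _)
      (Set.Icc_subset_Icc (Prod.mk_le_mk.2 ⟨le_rfl, hSs⟩)
        (Prod.mk_le_mk.2 ⟨le_rfl, hTt⟩)).eventuallyLE
  have hid := h.integral_momentum_balance hab hST
  have h1 := abs_le.1 (h.abs_integral_mul_dy_le (x := a) (fun y => (hgrad (a, y)).1) hST)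
  have h2 := abs_le.1 (h.abs_integral_mul_dy_le (x := b) (fun y => (hgrad (b, y)).1) hST)
  have h3 := mul_le_mul_of_nonneg_left hmono h.speed.le
  linarith [hT.1, hT.2, hS.1, hS.2, h1.1, h1.2, h2.1, h2.2]

lemma exists_integral_stress_bound (h : PlaneWave F c U) :
    ∃ S : ℝ, 0 < S ∧ ∀ a b y : ℝ, a ≤ b → -S ≤ ∫ x in a..b, stress F U (x, y) := by
  obtain ⟨K, hK, hgrad⟩ := h.exists_gradient_bound
  refine ⟨4 * K + 1, by positivity, fun a b y hab => ?_⟩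
  have e1 := (h.tendsto_integral_stress_atTop a b).eventually
    (Ioo_mem_nhds (neg_lt_zero.2 one_pos) one_pos)
  obtain ⟨T, hT, hTt⟩ := (e1.and (eventually_ge_atTop y)).exists
  have hid := h.integral_momentum_balance hab hTt
  have h1 := abs_le.1 (h.abs_integral_mul_dy_le (x := a) (fun y => (hgrad (a, y)).1) hTt)
  have h2 := abs_le.1 (h.abs_integral_mul_dy_le (x := b) (fun y => (hgrad (b, y)).1) hTt)
  have h3 : 0 ≤ c * ∫ p in Set.Icc (a, y) (b, T), dy U p ^ 2 :=
    mul_nonneg h.speed.le (integral_nonneg fun p => sq_nonneg _)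
  linarith [hT.1, hT.2, h1.1, h1.2, h2.1, h2.2]

lemma integrable_dy_sq (h : PlaneWave F c U) : Integrable fun p => dy U p ^ 2 := by
  obtain ⟨S, hS, hbound⟩ := h.exists_integral_dy_sq_bound
  have hcover : AECover (volume : Measure (ℝ × ℝ)) atTop
      fun R : ℝ => closedBall (0 : ℝ × ℝ) R := aecover_closedBall tendsto_id
  refine hcover.integrable_of_integral_bounded_of_nonneg_ae (S / c)
    (fun R => h.continuous_dy_sq.continuousOn.integrableOn_compact (isCompact_closedBall _ _))
    (ae_of_all _ fun p => sq_nonneg _) ?_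
  filter_upwards [eventually_ge_atTop (0 : ℝ)] with R hR
  rw [le_div_iff₀ h.speed, mul_comm]
  have hball : closedBall (0 : ℝ × ℝ) R = Set.Icc (-R, -R) (R, R) := by
    rw [Prod.zero_eq_mk, ← closedBall_prod_same, Real.closedBall_eq_Icc, Set.Icc_prod_Icc]
    simp
  rw [hball]
  exact hbound _ _ _ _ (by linarith) (by linarith)

lemma exists_tail_small (h : PlaneWave F c U) {ε : ℝ} (hε : 0 < ε) :
    ∃ X : ℝ, ∫ p in {p : ℝ × ℝ | X ≤ |p.1|}, dy U p ^ 2 < ε := by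
  have ht := tendsto_setIntegral_of_antitone (μ := (volume : Measure (ℝ × ℝ)))
    (f := fun p => dy U p ^ 2) (s := fun X : ℝ => {p : ℝ × ℝ | X ≤ |p.1|})
    (fun X => measurableSet_le measurable_const (measurable_fst.abs))
    (fun X Y hXY p hp => le_trans hXY hp) ⟨0, h.integrable_dy_sq.integrableOn⟩
  have hempty : (⋂ X : ℝ, {p : ℝ × ℝ | X ≤ |p.1|}) = ∅ := by
    ext p
    simp only [Set.mem_iInter, Set.mem_ofPred_eq, Set.mem_empty_iff_false, iff_false, not_forall,
      not_le]
    exact exists_gt _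
  rw [hempty, setIntegral_empty] at ht
  exact (ht.eventually (gt_mem_nhds hε)).exists

end PlaneWave

namespace PlaneWave

variable {F : ℝ → ℝ} {c : ℝ} {U : ℝ × ℝ → ℝ}

lemma exists_gradient_dy_estimate (h : PlaneWave F c U) :
    ∃ D : ℝ, 0 < D ∧ ∀ (p : ℝ × ℝ) (m : ℝ), (∀ q ∈ closedBall p 1, |dy U q| ≤ m) →
      |dx (dy U) p| ≤ D * m ∧ |dy (dy U) p| ≤ D * m := by
  obtain ⟨C, hC, hest⟩ := exists_gradient_estimate c
  obtain ⟨B, hB, hF2, -⟩ := h.well.exists_deriv_bound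
  refine ⟨C * (1 + B), by positivity, fun p m hm => ?_⟩
  have := hest (dy U) h.contDiff_dy p m (B * m) hm fun q hq => by
    rw [h.eqn_dy, abs_mul]
    exact mul_le_mul (hF2 _ (h.mem_Icc q)) (hm q hq) (abs_nonneg _) hB.le
  rwa [show C * (m + B * m) = C * (1 + B) * m by ring] at this

lemma exists_lipschitz_dy (h : PlaneWave F c U) :
    ∃ L : ℝ, 0 < L ∧ ∀ p q, |dy U q - dy U p| ≤ L * dist q p := by
  obtain ⟨K, hK, hgrad⟩ := h.exists_gradient_bound
  obtain ⟨D, hD, hest⟩ := h.exists_gradient_dy_estimate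
  refine ⟨2 * (D * K), by positivity, fun p q => ?_⟩
  rw [dist_eq_norm]
  refine convex_univ.norm_image_sub_le_of_norm_fderiv_le (𝕜 := ℝ) (f := dy U)
    (fun r _ => h.diff_dy r) (fun r _ => ?_) (Set.mem_univ p) (Set.mem_univ q)
  refine ContinuousLinearMap.opNorm_le_bound _ (by positivity) fun v => ?_
  obtain ⟨h1, h2⟩ := hest r K fun q _ => (hgrad q).2
  have e : fderiv ℝ (dy U) r v = v.1 * dx (dy U) r + v.2 * dy (dy U) r := by
    have : v = v.1 • ((1 : ℝ), (0 : ℝ)) + v.2 • ((0 : ℝ), (1 : ℝ)) := by ext <;> simp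
    conv_lhs => rw [this, map_add, map_smul, map_smul]
    rfl
  rw [e, Real.norm_eq_abs]
  have hv1 : |v.1| ≤ ‖v‖ := norm_fst_le v
  have hv2 : |v.2| ≤ ‖v‖ := norm_snd_le v
  calc |v.1 * dx (dy U) r + v.2 * dy (dy U) r|
      ≤ |v.1| * |dx (dy U) r| + |v.2| * |dy (dy U) r| := by
        rw [← abs_mul, ← abs_mul]; exact abs_add_le _ _
    _ ≤ ‖v‖ * (D * K) + ‖v‖ * (D * K) := by gcongr
    _ = 2 * (D * K) * ‖v‖ := by ring

lemma exists_dy_le (h : PlaneWave F c U) {ε : ℝ} (hε : 0 < ε) :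
    ∃ X : ℝ, ∀ p : ℝ × ℝ, X ≤ |p.1| → dy U p ≤ ε := by
  obtain ⟨L, hL, hlip⟩ := h.exists_lipschitz_dy
  set r := min 1 (ε / (2 * L)) with hr
  have hr0 : 0 < r := by positivity
  have hLr : L * r ≤ ε / 2 := by
    calc L * r ≤ L * (ε / (2 * L)) := by gcongr; exact min_le_right _ _
      _ = ε / 2 := by field_simp
  set A := volume.real (closedBall (0 : ℝ × ℝ) r) with hA
  have hA0 : 0 < A := ENNReal.toReal_pos (measure_closedBall_pos _ _ hr0).ne'
    measure_closedBall_lt_top.ne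
  obtain ⟨X, hX⟩ := h.exists_tail_small (ε := (ε / 2) ^ 2 * A) (by positivity)
  refine ⟨X + 1, fun p hp => ?_⟩
  by_contra! hlt
  have hsub : closedBall p r ⊆ {q : ℝ × ℝ | X ≤ |q.1|} := by
    intro q hq
    rw [mem_closedBall, Prod.dist_eq, max_le_iff] at hq
    have h1 : |q.1 - p.1| ≤ 1 := hq.1.trans (min_le_left _ _)
    have h2 := abs_sub_abs_le_abs_sub p.1 q.1
    rw [abs_sub_comm] at h2
    change X ≤ |q.1|
    linarith
  have hmono : ∫ q in closedBall p r, dy U q ^ 2 ≤ ∫ q in {q : ℝ × ℝ | X ≤ |q.1|}, dy U q ^ 2 :=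
    setIntegral_mono_set h.integrable_dy_sq.integrableOn
      (ae_of_all _ fun p => sq_nonneg _) hsub.eventuallyLE
  have hlow : (ε / 2) ^ 2 * volume.real (closedBall p r) ≤ ∫ q in closedBall p r, dy U q ^ 2 := by
    refine setIntegral_ge_of_const_le_real measurableSet_closedBall measure_closedBall_lt_top.ne
      (fun q hq => ?_) h.integrable_dy_sq.integrableOn
    have h1 := (abs_le.1 (hlip p q)).1
    have h2 : L * dist q p ≤ L * r := mul_le_mul_of_nonneg_left hq hL.le
    exact pow_le_pow_left₀ (by positivity) (by linarith) 2
  have hvol : volume.real (closedBall p r) = A := Measure.addHaar_real_closedBall_center _ p r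
  rw [hvol] at hlow
  linarith

lemma exists_dy_derivatives_le (h : PlaneWave F c U) {ε : ℝ} (hε : 0 < ε) :
    ∃ X : ℝ, ∀ p : ℝ × ℝ, X ≤ |p.1| → |dy U p| ≤ ε ∧ |dy (dy U) p| ≤ ε := by
  obtain ⟨D, hD, hest⟩ := h.exists_gradient_dy_estimate
  obtain ⟨X, hX⟩ := h.exists_dy_le (ε := min ε (ε / D)) (by positivity)
  refine ⟨X + 1, fun p hp => ?_⟩
  have hball : ∀ q ∈ closedBall p 1, |dy U q| ≤ min ε (ε / D) := by
    intro q hq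
    rw [abs_of_pos (h.dy_pos q)]
    apply hX
    rw [mem_closedBall, Prod.dist_eq, max_le_iff] at hq
    have h1 : |q.1 - p.1| ≤ 1 := hq.1
    have h2 := abs_sub_abs_le_abs_sub p.1 q.1
    rw [abs_sub_comm] at h2
    linarith
  refine ⟨(hball p (mem_closedBall_self zero_le_one)).trans (min_le_left _ _), ?_⟩
  calc |dy (dy U) p| ≤ D * min ε (ε / D) := (hest p _ hball).2
    _ ≤ D * (ε / D) := by gcongr; exact min_le_right _ _
    _ = ε := by field_simp

/-- Far away in `x`, the wave almost conserves the energy of the one-dimensional profile. -/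
lemma exists_energy_le (h : PlaneWave F c U) {ε : ℝ} (hε : 0 < ε) :
    ∃ X : ℝ, ∀ x y : ℝ, X ≤ |x| → |dx U (x, y) ^ 2 - 2 * F (U (x, y))| ≤ ε := by
  obtain ⟨K, hK, hgrad⟩ := h.exists_gradient_bound
  obtain ⟨S, hS, hstress⟩ := h.exists_integral_stress_bound
  have hc := h.speed
  set R := 16 * S / ε with hR
  have hR0 : 0 < R := by positivity
  set η := min 1 (min (ε / 4) (ε / (8 * (K * (1 + c)) * R))) with hη
  have hη0 : 0 < η := by positivity
  have hη1 : η ≤ 1 := min_le_left _ _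
  have hη2 : η ≤ ε / 4 := (min_le_right _ _).trans (min_le_left _ _)
  have hη3 : K * (1 + c) * η * R ≤ ε / 8 := by
    calc K * (1 + c) * η * R ≤ K * (1 + c) * (ε / (8 * (K * (1 + c)) * R)) * R := by
          gcongr; exact (min_le_right _ _).trans (min_le_right _ _)
      _ = ε / 8 := by field_simp
  obtain ⟨X, hX⟩ := h.exists_dy_derivatives_le hη0
  have key : ∀ a y : ℝ, (∀ t ∈ Set.Icc a (a + R), X ≤ |t|) → ∀ t ∈ Set.Icc a (a + R),
      |dx U (t, y) ^ 2 - 2 * F (U (t, y))| ≤ ε := by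
    intro a y ha t ht
    obtain ⟨t₀, ht₀, hlow⟩ : ∃ t₀ ∈ Set.Icc a (a + R),
        dx U (t₀, y) ^ 2 / 2 + F (U (t₀, y)) ≤ ε / 4 := by
      by_contra! hcon
      have h1 := hstress a (a + R) y (by linarith)
      have hsc := h.continuous_stress
      have h2 : ∫ x in a..(a + R), stress F U (x, y) ≤ ∫ _ in a..(a + R), (-(ε / 8) : ℝ) := by
        refine intervalIntegral.integral_mono_on (by linarith)
          (Continuous.intervalIntegrable (by fun_prop) _ _) (by simp) fun x hx => ?_
        have h3 := hcon x hx
        have h4 := abs_le.1 (hX (x, y) (ha x hx)).1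
        unfold stress
        nlinarith [h4.1, h4.2]
      rw [intervalIntegral.integral_const, smul_eq_mul] at h2
      have h5 : (a + R - a) * -(ε / 8) = -(2 * S) := by rw [hR]; field_simp; ring
      linarith
    have hderiv : ∀ s, HasDerivAt (fun s => dx U (s, y) ^ 2 / 2 - F (U (s, y)))
        (dx U (s, y) * (-dy (dy U) (s, y) - c * dy U (s, y))) s := by
      intro s
      have hFU : HasDerivAt (fun t => F (U (t, y))) (deriv F (U (s, y)) * dx U (s, y)) s :=
        HasDerivAt.comp s (h.well.differentiable _).hasDerivAt (hasDerivAt_along_x (h.diff (s, y)))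
      refine ((((hasDerivAt_along_x (h.diff_dx (s, y))).pow 2).div_const 2).sub hFU).congr_deriv ?_
      rw [← h.eqn]
      simp
      ring
    have hmvt := (convex_Icc a (a + R)).norm_image_sub_le_of_norm_hasDerivWithin_le
      (C := K * (1 + c) * η) (fun s _ => (hderiv s).hasDerivWithinAt) (fun s hs => by
        rw [norm_mul, Real.norm_eq_abs, Real.norm_eq_abs, mul_assoc]
        refine mul_le_mul (hgrad _).1 ?_ (abs_nonneg _) hK.le
        obtain ⟨h4, h5⟩ := hX (s, y) (ha s hs)
        have h6 : |c * dy U (s, y)| ≤ c * η := by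
          rw [abs_mul, abs_of_pos hc]; gcongr
        have h7 := abs_le.1 h5
        have h8 := abs_le.1 h6
        exact abs_le.2 ⟨by linarith [h7.2, h8.2], by linarith [h7.1, h8.1]⟩) ht₀ ht
    have hdist : ‖t - t₀‖ ≤ R := by
      rw [Real.norm_eq_abs]
      exact abs_le.2 ⟨by linarith [ht.1, ht₀.2], by linarith [ht.2, ht₀.1]⟩
    have hmvt' := abs_le.1 ((hmvt.trans (mul_le_mul_of_nonneg_left hdist (by positivity))).trans hη3)
    have hF0 := h.well.nonneg (h.mem_Icc (t₀, y))
    have hsq := sq_nonneg (dx U (t₀, y))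
    exact abs_le.2 ⟨by linarith [hmvt'.1], by linarith [hmvt'.2]⟩
  refine ⟨max X 0, fun x y hx => ?_⟩
  have hx1 := (le_max_left X 0).trans hx
  rcases le_total 0 x with h0 | h0
  · rw [abs_of_nonneg h0] at hx1
    refine key x y (fun t ht => ?_) x ⟨le_rfl, by linarith⟩
    rw [abs_of_nonneg (h0.trans ht.1)]
    exact hx1.trans ht.1
  · rw [abs_of_nonpos h0] at hx1
    refine key (x - R) y (fun t ht => ?_) x ⟨by linarith, by linarith⟩
    have ht2 : t ≤ x := by linarith [ht.2]
    rw [abs_of_nonpos (ht2.trans h0)]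
    linarith

end PlaneWave

/-- The energy of the one-dimensional transition between the two wells. -/
noncomputable def transitionEnergy (F : ℝ → ℝ) : ℝ := ∫ s in (-1 : ℝ)..1, √(2 * F s)

lemma transitionEnergy_nonneg (F : ℝ → ℝ) : 0 ≤ transitionEnergy F :=
  intervalIntegral.integral_nonneg (by norm_num) fun _ _ => sqrt_nonneg _

lemma abs_abs_sub_sqrt_le {p q δ : ℝ} (hδ : 0 ≤ δ) (hq : 0 ≤ q) (h : |p ^ 2 - q| ≤ δ ^ 2) :
    |(|p| - √q)| ≤ δ := by
  have hs : √q ^ 2 = q := sq_sqrt hq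
  have hs0 := sqrt_nonneg q
  have hp0 := abs_nonneg p
  have h1 := abs_le.1 h
  rw [← sq_abs p] at h1
  refine abs_le.2 ⟨?_, ?_⟩ <;> by_contra! hcon <;> nlinarith [h1.1, h1.2]

namespace PlaneWave

variable {F : ℝ → ℝ} {c : ℝ} {U : ℝ × ℝ → ℝ}

/-- If the energy is almost conserved along a vertical line, then `dx U` has along the whole line
the sign it has on the zero level set, up to a small error. -/
lemma abs_dx_sub_le (h : PlaneWave F c U) {x y₀ δ σ : ℝ} (hδ : 0 ≤ δ)
    (hen : ∀ y, |dx U (x, y) ^ 2 - 2 * F (U (x, y))| ≤ δ ^ 2) (hy₀ : U (x, y₀) = 0)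
    (hσ : σ = 1 ∨ σ = -1) (hsign : 0 ≤ σ * dx U (x, y₀)) (y : ℝ) :
    |dx U (x, y) - σ * √(2 * F (U (x, y)))| ≤ 3 * δ := by
  have hσ2 : σ * σ = 1 := by rcases hσ with rfl | rfl <;> norm_num
  have hσa : |σ| = 1 := by rcases hσ with rfl | rfl <;> norm_num
  have hF : ∀ y, 0 ≤ 2 * F (U (x, y)) := fun y =>
    mul_nonneg zero_le_two (h.well.nonneg (h.mem_Icc _))
  have e : dx U (x, y) - σ * √(2 * F (U (x, y)))
      = σ * (σ * dx U (x, y) - √(2 * F (U (x, y)))) := by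
    rw [mul_sub, ← mul_assoc, hσ2, one_mul]
  have eabs : |dx U (x, y)| = |σ * dx U (x, y)| := by rw [abs_mul, hσa, one_mul]
  have hclose := abs_abs_sub_sqrt_le hδ (hF y) (hen y)
  rw [e, abs_mul, hσa, one_mul]
  rcases le_or_gt 0 (σ * dx U (x, y)) with hpos | hneg
  · rw [eabs, abs_of_nonneg hpos] at hclose
    linarith
  · have hc : Continuous fun t => σ * dx U (x, t) := by
      have := h.continuous_dx
      fun_prop
    obtain ⟨z, hz, hz0⟩ := intermediate_value_uIcc (a := y₀) (b := y) hc.continuousOn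
      (show (0 : ℝ) ∈ Set.uIcc _ _ from Set.mem_uIcc.2 (Or.inr ⟨hneg.le, hsign⟩))
    have hdz : dx U (x, z) = 0 := by
      rcases mul_eq_zero.1 hz0 with h1 | h1
      · rw [h1] at hσ2; norm_num at hσ2
      · exact h1
    have hFz := hen z
    rw [hdz, zero_pow two_ne_zero, zero_sub, abs_neg, abs_of_nonneg (hF z)] at hFz
    have hmono := (h.strictMono x).monotone
    have hFle : F (U (x, y)) ≤ F (U (x, z)) := by
      rcases Set.mem_uIcc.1 hz with ⟨h1, h2⟩ | ⟨h1, h2⟩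
      · have k1 : U (x, y₀) ≤ U (x, z) := hmono h1
        have k2 : U (x, z) ≤ U (x, y) := hmono h2
        rw [hy₀] at k1
        exact h.well.antitoneOn.antitoneOn ⟨k1, (h.mem_Icc _).2⟩
          ⟨k1.trans k2, (h.mem_Icc _).2⟩ k2
      · have k1 : U (x, y) ≤ U (x, z) := hmono h1
        have k2 : U (x, z) ≤ U (x, y₀) := hmono h2
        rw [hy₀] at k2
        exact h.well.monotoneOn.monotoneOn ⟨(h.mem_Icc _).1, k1.trans k2⟩
          ⟨(h.mem_Icc _).1, k2⟩ k1
    have hsq : √(2 * F (U (x, y))) ≤ δ := by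
      rw [← sqrt_sq hδ]
      exact sqrt_le_sqrt (by linarith)
    have hsq0 := sqrt_nonneg (2 * F (U (x, y)))
    rw [eabs, abs_of_neg hneg] at hclose
    have := abs_le.1 hclose
    exact abs_le.2 ⟨by linarith [this.2], by linarith⟩

lemma tendsto_integral_sqrt_potential (h : PlaneWave F c U) (x : ℝ) :
    Tendsto (fun R => ∫ y in (-R)..R, √(2 * F (U (x, y))) * dy U (x, y)) atTop
      (nhds (transitionEnergy F)) := by
  have hc : Continuous fun s => √(2 * F s) := by
    have := h.well.differentiable.continuous
    fun_prop
  have hdy := h.continuous_dy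
  set G : ℝ → ℝ := fun s => ∫ t in (0 : ℝ)..s, √(2 * F t) with hG
  have hGc : Continuous G := intervalIntegral.continuous_primitive
    (fun a b => hc.intervalIntegrable a b) 0
  have e1 : ∀ R, ∫ y in (-R)..R, √(2 * F (U (x, y))) * dy U (x, y)
      = G (U (x, R)) - G (U (x, -R)) := by
    intro R
    rw [hG]
    simp only
    rw [intervalIntegral.integral_interval_sub_left (hc.intervalIntegrable _ _)
      (hc.intervalIntegrable _ _)]
    exact intervalIntegral.integral_comp_mul_deriv (g := fun s => √(2 * F s))
      (fun y _ => hasDerivAt_along_y (h.diff (x, y))) (by fun_prop) hc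
  have e2 : transitionEnergy F = G 1 - G (-1) := by
    rw [hG]
    simp only
    rw [intervalIntegral.integral_interval_sub_left (hc.intervalIntegrable _ _)
      (hc.intervalIntegrable _ _)]
    rfl
  simp only [e1]
  rw [e2]
  exact ((hGc.tendsto 1).comp (h.top x)).sub
    ((hGc.tendsto (-1)).comp ((h.bot x).comp tendsto_neg_atTop_atBot))

lemma eventually_momentum_close (h : PlaneWave F c U) {x y₀ δ σ : ℝ} (hδ : 0 < δ)
    (hen : ∀ y, |dx U (x, y) ^ 2 - 2 * F (U (x, y))| ≤ δ ^ 2) (hy₀ : U (x, y₀) = 0)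
    (hσ : σ = 1 ∨ σ = -1) (hsign : 0 ≤ σ * dx U (x, y₀)) :
    ∀ᶠ R in atTop, |(∫ y in (-R)..R, dx U (x, y) * dy U (x, y)) - σ * transitionEnergy F|
      ≤ 7 * δ := by
  have hσa : |σ| = 1 := by rcases hσ with rfl | rfl <;> norm_num
  have hc : Continuous fun s => √(2 * F s) := by
    have := h.well.differentiable.continuous
    fun_prop
  have hU := h.diff.continuous
  have hdx := h.continuous_dx
  have hdy := h.continuous_dy
  filter_upwards [Metric.tendsto_nhds.1 (h.tendsto_integral_sqrt_potential x) δ hδ,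
    eventually_ge_atTop (0 : ℝ)] with R hR hR0
  have h1 := h.abs_integral_mul_dy_le (x := x) (h.abs_dx_sub_le hδ.le hen hy₀ hσ hsign)
    (show -R ≤ R by linarith)
  have e : ∫ y in (-R)..R, (dx U (x, y) - σ * √(2 * F (U (x, y)))) * dy U (x, y)
      = (∫ y in (-R)..R, dx U (x, y) * dy U (x, y))
        - σ * ∫ y in (-R)..R, √(2 * F (U (x, y))) * dy U (x, y) := by
    rw [← intervalIntegral.integral_const_mul, ← intervalIntegral.integral_sub]
    · congr 1
      funext y
      ring
    · exact Continuous.intervalIntegrable (by fun_prop) _ _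
    · have : Continuous fun y => √(2 * F (U (x, y))) := hc.comp (by fun_prop)
      exact Continuous.intervalIntegrable (by fun_prop) _ _
  rw [e] at h1
  have h2 : |σ * (∫ y in (-R)..R, √(2 * F (U (x, y))) * dy U (x, y)) - σ * transitionEnergy F|
      ≤ δ := by
    rw [← mul_sub, abs_mul, hσa, one_mul]
    exact hR.le
  have := abs_sub_le (∫ y in (-R)..R, dx U (x, y) * dy U (x, y))
    (σ * ∫ y in (-R)..R, √(2 * F (U (x, y))) * dy U (x, y)) (σ * transitionEnergy F)
  linarith

/-- The momentum drop across a vertical strip bounds the dissipation inside. -/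
lemma eventually_momentum_drop (h : PlaneWave F c U) {a b ε : ℝ} (ha : a ≤ -1) (hb : 1 ≤ b)
    (hε : 0 < ε) : ∀ᶠ R in atTop,
      (c * ∫ p in Set.Icc ((-1 : ℝ), (-1 : ℝ)) (1, 1), dy U p ^ 2) - ε ≤
        (∫ y in (-R)..R, dx U (a, y) * dy U (a, y))
          - ∫ y in (-R)..R, dx U (b, y) * dy U (b, y) := by
  have e1 := Metric.tendsto_nhds.1 (h.tendsto_integral_stress_atTop a b) (ε / 2) (half_pos hε)
  have e2 := tendsto_neg_atTop_atBot.eventually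
    (Metric.tendsto_nhds.1 (h.tendsto_integral_stress_atBot a b) (ε / 2) (half_pos hε))
  filter_upwards [e1, e2, eventually_ge_atTop (1 : ℝ)] with R h1 h2 hR
  rw [Real.dist_0_eq_abs] at h1 h2
  have hid := h.integral_momentum_balance (show a ≤ b by linarith) (show -R ≤ R by linarith)
  have hmono : ∫ p in Set.Icc ((-1 : ℝ), (-1 : ℝ)) (1, 1), dy U p ^ 2 ≤
      ∫ p in Set.Icc (a, -R) (b, R), dy U p ^ 2 :=
    setIntegral_mono_set h.continuous_dy_sq.integrableOn_Icc
      (ae_of_all _ fun p => sq_nonneg _)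
      (Set.Icc_subset_Icc (Prod.mk_le_mk.2 ⟨ha, by linarith⟩)
        (Prod.mk_le_mk.2 ⟨hb, hR⟩)).eventuallyLE
  have h3 := mul_le_mul_of_nonneg_left hmono h.speed.le
  linarith [(abs_lt.1 h1).1, (abs_lt.1 h2).2]

lemma integral_dy_sq_unit_square_pos (h : PlaneWave F c U) :
    0 < ∫ p in Set.Icc ((-1 : ℝ), (-1 : ℝ)) (1, 1), dy U p ^ 2 := by
  rw [setIntegral_pos_iff_support_of_nonneg_ae (ae_of_all _ fun p => sq_nonneg _)
    h.continuous_dy_sq.integrableOn_Icc]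
  have : Function.support (fun p => dy U p ^ 2) = Set.univ :=
    Set.eq_univ_of_forall fun p => (pow_pos (h.dy_pos p) 2).ne'
  rw [this, Set.univ_inter, ← Set.Icc_prod_Icc, Measure.volume_eq_prod, Measure.prod_prod,
    Real.volume_Icc]
  norm_num

lemma exists_dx_sign (h : PlaneWave F c U) : ∃ X : ℝ, ∀ a b ya yb : ℝ, a ≤ -X → X ≤ b →
    U (a, ya) = 0 → U (b, yb) = 0 → 0 < dx U (a, ya) ∧ dx U (b, yb) < 0 := by
  set d := c * ∫ p in Set.Icc ((-1 : ℝ), (-1 : ℝ)) (1, 1), dy U p ^ 2 with hd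
  have hd0 : 0 < d := mul_pos h.speed h.integral_dy_sq_unit_square_pos
  have hF0 := h.well.zero_pos
  set δ := min (d / 56) (√(F 0)) with hδ
  have hδ0 : 0 < δ := lt_min (by positivity) (sqrt_pos.2 hF0)
  have hδd : 7 * δ ≤ d / 8 := by linarith [min_le_left (d / 56) (√(F 0))]
  have hδF : δ ^ 2 ≤ F 0 := by
    calc δ ^ 2 ≤ √(F 0) ^ 2 := pow_le_pow_left₀ hδ0.le (min_le_right _ _) 2
      _ = F 0 := sq_sqrt hF0.le
  obtain ⟨X, hX⟩ := h.exists_energy_le (pow_pos hδ0 2)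
  have hE := transitionEnergy_nonneg F
  refine ⟨max X 1, fun a b ya yb ha hb hUa hUb => ?_⟩
  have hX1 := le_max_left X 1
  have hX2 := le_max_right X 1
  have hXa : X ≤ |a| := by linarith [neg_le_abs a]
  have hXb : X ≤ |b| := by linarith [le_abs_self b]
  have hne : ∀ {x y : ℝ}, X ≤ |x| → U (x, y) = 0 → dx U (x, y) ≠ 0 := by
    intro x y hx hU h0
    have h1 := hX x y hx
    rw [hU, h0, zero_pow two_ne_zero, zero_sub, abs_neg, abs_of_pos (by positivity)] at h1
    linarith
  have hsgn : ∀ t : ℝ, ∃ σ : ℝ, (σ = 1 ∨ σ = -1) ∧ 0 ≤ σ * t ∧ (σ = 1 → 0 ≤ t) ∧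
      (σ = -1 → t ≤ 0) := by
    intro t
    rcases le_total 0 t with ht | ht
    · exact ⟨1, by norm_num, by simpa using ht, fun _ => ht, by norm_num⟩
    · exact ⟨-1, by norm_num, by simpa using ht, by norm_num, fun _ => ht⟩
  obtain ⟨σ, hσ, hσs, hσ1, hσ2⟩ := hsgn (dx U (a, ya))
  obtain ⟨τ, hτ, hτs, hτ1, hτ2⟩ := hsgn (dx U (b, yb))
  obtain ⟨R, ⟨hRa, hRb⟩, hRd⟩ :=
    (((h.eventually_momentum_close hδ0 (fun y => hX a y hXa) hUa hσ hσs).and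
      (h.eventually_momentum_close hδ0 (fun y => hX b y hXb) hUb hτ hτs)).and
      (h.eventually_momentum_drop (show a ≤ -1 by linarith) (show 1 ≤ b by linarith)
        (show 0 < d / 4 by positivity))).exists
  have k1 := abs_le.1 hRa
  have k2 := abs_le.1 hRb
  have hgap : d / 2 ≤ σ * transitionEnergy F - τ * transitionEnergy F := by
    linarith [k1.2, k2.1]
  have hst : σ = 1 ∧ τ = -1 := by
    rcases hσ with rfl | rfl <;> rcases hτ with rfl | rfl
    · linarith
    · exact ⟨rfl, rfl⟩
    · linarith
    · linarith
  exact ⟨lt_of_le_of_ne (hσ1 hst.1) (hne hXa hUa).symm, lt_of_le_of_ne (hτ2 hst.2) (hne hXb hUb)⟩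

/-- Far away in `x`, `dx U` dominates any multiple of `dy U` on the zero level set. -/
lemma exists_dy_mul_le_abs_dx (h : PlaneWave F c U) {A : ℝ} (hA : 0 < A) :
    ∃ X : ℝ, ∀ x y : ℝ, X ≤ |x| → U (x, y) = 0 → A * dy U (x, y) ≤ |dx U (x, y)| := by
  have hF0 := h.well.zero_pos
  obtain ⟨X, hX⟩ := h.exists_energy_le hF0
  obtain ⟨Y, hY⟩ := h.exists_dy_le (ε := √(F 0) / A) (by positivity)
  refine ⟨max X Y, fun x y hx hU => ?_⟩
  have h1 := hX x y ((le_max_left _ _).trans hx)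
  have h2 := hY (x, y) ((le_max_right _ _).trans hx)
  rw [hU] at h1
  have h3 : F 0 ≤ dx U (x, y) ^ 2 := by linarith [(abs_le.1 h1).1]
  rw [le_div_iff₀ hA] at h2
  calc A * dy U (x, y) ≤ √(F 0) := by linarith
    _ ≤ |dx U (x, y)| := by rw [← sqrt_sq_eq_abs]; exact sqrt_le_sqrt h3

end PlaneWave

lemma IsTravelingWave.planeWave {F : ℝ → ℝ} {c : ℝ} {u : ℝ → ℝ → ℝ} (hF : BalancedDoubleWell F)
    (hc : 0 < c) (hu : IsTravelingWave F c u) : PlaneWave F c fun p => u p.1 p.2 := by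
  obtain ⟨⟨hsm, heq, hb, hpos⟩, htop, hbot⟩ := hu
  set U : ℝ × ℝ → ℝ := fun p => u p.1 p.2 with hU
  have hd : Differentiable ℝ U := hsm.differentiable (by norm_num)
  have hdx : Differentiable ℝ (dx U) :=
    (contDiff_dx (m := 2) hsm (by norm_num)).differentiable (by norm_num)
  have hdy : Differentiable ℝ (dy U) :=
    (contDiff_dy (m := 2) hsm (by norm_num)).differentiable (by norm_num)
  have e1 : ∀ x y, pdx u x y = dx U (x, y) := fun x y => (hasDerivAt_along_x (hd (x, y))).deriv
  have e2 : ∀ x y, pdy u x y = dy U (x, y) := fun x y => (hasDerivAt_along_y (hd (x, y))).deriv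
  refine ⟨hF, hc, hsm, fun p => ?_, fun p => hb _ _, fun p => ?_, htop, hbot⟩
  · obtain ⟨x, y⟩ := p
    have h1 := heq x y
    unfold pdxx pdyy at h1
    simp only [e1, e2] at h1
    rwa [(hasDerivAt_along_x (hdx (x, y))).deriv, (hasDerivAt_along_y (hdy (x, y))).deriv] at h1
  · rw [← e2]
    exact hpos _ _

lemma PlaneWave.dx_add_dy_mul_deriv_eq_zero {F : ℝ → ℝ} {c : ℝ} {U : ℝ × ℝ → ℝ}
    (h : PlaneWave F c U) {γ : ℝ → ℝ} (hγ : Differentiable ℝ γ) (hlevel : ∀ x, U (x, γ x) = 0)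
    (x : ℝ) : dx U (x, γ x) + dy U (x, γ x) * deriv γ x = 0 := by
  have h1 : HasDerivAt (fun t => U (t, γ t)) (fderiv ℝ U (x, γ x) (1, deriv γ x)) x :=
    HasFDerivAt.comp_hasDerivAt (f := fun t : ℝ => (t, γ t)) x (h.diff _).hasFDerivAt
      ((hasDerivAt_id x).prodMk (hγ x).hasDerivAt)
  have h2 : HasDerivAt (fun t => U (t, γ t)) 0 x := by
    simp only [hlevel]
    exact hasDerivAt_const x 0
  have e : ((1 : ℝ), deriv γ x) = (1, 0) + deriv γ x • ((0 : ℝ), (1 : ℝ)) := by ext <;> simp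
  have h3 := h1.unique h2
  rw [e, map_add, map_smul, smul_eq_mul, mul_comm] at h3
  exact h3

/-- The zero level curve opens upward at both ends: `γ'(x) → +∞` as `x → +∞`
and `γ'(x) → -∞` as `x → -∞` (Lemma 2.6). -/
theorem level_curve_opens_upward
    (F : ℝ → ℝ) (hF : BalancedDoubleWell F) (c : ℝ) (hc : 0 < c)
    (u : ℝ → ℝ → ℝ) (hu : IsTravelingWave F c u)
    (γ : ℝ → ℝ) (hγ : ContDiff ℝ 1 γ)
    (hγlevel : ∀ x y : ℝ, u x y = 0 ↔ y = γ x) :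
    Tendsto (deriv γ) atTop atTop ∧ Tendsto (deriv γ) atBot atBot := by
  have h := hu.planeWave hF hc
  have hlevel : ∀ x, (fun p : ℝ × ℝ => u p.1 p.2) (x, γ x) = 0 := fun x => (hγlevel x (γ x)).2 rfl
  have hslope := h.dx_add_dy_mul_deriv_eq_zero (hγ.differentiable (by norm_num)) hlevel
  obtain ⟨X, hX⟩ := h.exists_dx_sign
  constructor
  · refine tendsto_atTop.2 fun A => ?_
    obtain ⟨Y, hY⟩ := h.exists_dy_mul_le_abs_dx (A := |A| + 1) (by positivity)
    filter_upwards [eventually_ge_atTop X, eventually_ge_atTop Y] with x hx hx'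
    have h1 := hY x (γ x) (hx'.trans (le_abs_self x)) (hlevel x)
    rw [abs_of_neg (hX (-X) x _ _ le_rfl hx (hlevel _) (hlevel x)).2] at h1
    have h2 : (|A| + 1) * dy _ (x, γ x) ≤ deriv γ x * dy _ (x, γ x) :=
      h1.trans (by linarith [hslope x])
    linarith [le_of_mul_le_mul_right h2 (h.dy_pos _), le_abs_self A]
  · refine tendsto_atBot.2 fun A => ?_
    obtain ⟨Y, hY⟩ := h.exists_dy_mul_le_abs_dx (A := |A| + 1) (by positivity)
    filter_upwards [eventually_le_atBot (-X), eventually_le_atBot (-Y)] with x hx hx'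
    have h1 := hY x (γ x) (by linarith [neg_le_abs x]) (hlevel x)
    rw [abs_of_pos (hX x X _ _ hx le_rfl (hlevel x) (hlevel _)).1] at h1
    have h2 : (|A| + 1) * dy _ (x, γ x) ≤ -deriv γ x * dy _ (x, γ x) :=
      h1.trans (by linarith [hslope x])
    linarith [le_of_mul_le_mul_right h2 (h.dy_pos _), neg_le_abs A]
end

section
/- Let u be a monotone traveling wave solution of the balanced Allen-Cahn equation in the plane, and let ρ(y) := ∫_ℝ [ ½((∂u/∂x(x,y))² − (∂u/∂y(x,y))²) + F(u(x,y)) ] dx. Then lim_{y→−∞} ρ(y) = 0, lim_{y→+∞} ρ(y) = 2𝔢, and consequently c ∫_{ℝ²} (∂u/∂y)² dx dy = 2𝔢, where 𝔢 := ∫_{−1}^{1} √(2F(s)) ds. -/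
open Real Filter MeasureTheory Metric

/-! ### Partial derivatives of functions on the plane -/

theorem pdx_eq_fderiv {u : ℝ → ℝ → ℝ} (hu : ContDiff ℝ 1 (fun p : ℝ × ℝ => u p.1 p.2)) (x y : ℝ) :
    HasDerivAt (fun t => u t y) (fderiv ℝ (fun p : ℝ × ℝ => u p.1 p.2) (x, y) (1, 0)) x := by
  have h := ((hu.differentiable one_ne_zero) (x, y)).hasFDerivAt
  exact h.comp_hasDerivAt (f := fun t : ℝ => (t, y)) x
    ((hasDerivAt_id x).prodMk (hasDerivAt_const x y))

theorem pdy_eq_fderiv {u : ℝ → ℝ → ℝ} (hu : ContDiff ℝ 1 (fun p : ℝ × ℝ => u p.1 p.2)) (x y : ℝ) :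
    HasDerivAt (fun t => u x t) (fderiv ℝ (fun p : ℝ × ℝ => u p.1 p.2) (x, y) (0, 1)) y := by
  have h := ((hu.differentiable one_ne_zero) (x, y)).hasFDerivAt
  exact h.comp_hasDerivAt (f := fun t : ℝ => (x, t)) y
    ((hasDerivAt_const y x).prodMk (hasDerivAt_id y))

theorem hasDerivAt_pdx {u : ℝ → ℝ → ℝ} (hu : ContDiff ℝ 1 (fun p : ℝ × ℝ => u p.1 p.2))
    (x y : ℝ) : HasDerivAt (fun t => u t y) (pdx u x y) x :=
  (pdx_eq_fderiv hu x y).differentiableAt.hasDerivAt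

theorem hasDerivAt_pdy {u : ℝ → ℝ → ℝ} (hu : ContDiff ℝ 1 (fun p : ℝ × ℝ => u p.1 p.2))
    (x y : ℝ) : HasDerivAt (fun t => u x t) (pdy u x y) y :=
  (pdy_eq_fderiv hu x y).differentiableAt.hasDerivAt

theorem contDiff_pdx {u : ℝ → ℝ → ℝ} {n : ℕ}
    (hu : ContDiff ℝ (n + 1 : ℕ) (fun p : ℝ × ℝ => u p.1 p.2)) :
    ContDiff ℝ n (fun p : ℝ × ℝ => pdx u p.1 p.2) := by
  have h1 : ContDiff ℝ 1 (fun p : ℝ × ℝ => u p.1 p.2) := hu.of_le (by exact_mod_cast (by omega))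
  have : (fun p : ℝ × ℝ => pdx u p.1 p.2) =
      fun p => fderiv ℝ (fun p : ℝ × ℝ => u p.1 p.2) p (1, 0) := by
    ext p; exact (pdx_eq_fderiv h1 p.1 p.2).deriv
  rw [this]
  exact (hu.fderiv_right (by push_cast; exact le_rfl)).clm_apply contDiff_const

theorem contDiff_pdy {u : ℝ → ℝ → ℝ} {n : ℕ}
    (hu : ContDiff ℝ (n + 1 : ℕ) (fun p : ℝ × ℝ => u p.1 p.2)) :
    ContDiff ℝ n (fun p : ℝ × ℝ => pdy u p.1 p.2) := by
  have h1 : ContDiff ℝ 1 (fun p : ℝ × ℝ => u p.1 p.2) := hu.of_le (by exact_mod_cast (by omega))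
  have : (fun p : ℝ × ℝ => pdy u p.1 p.2) =
      fun p => fderiv ℝ (fun p : ℝ × ℝ => u p.1 p.2) p (0, 1) := by
    ext p; exact (pdy_eq_fderiv h1 p.1 p.2).deriv
  rw [this]
  exact (hu.fderiv_right (by push_cast; exact le_rfl)).clm_apply contDiff_const

theorem pdx_pdy_comm {u : ℝ → ℝ → ℝ} (hu : ContDiff ℝ 2 (fun p : ℝ × ℝ => u p.1 p.2)) :
    pdx (pdy u) = pdy (pdx u) := by
  ext x y
  set U := fun p : ℝ × ℝ => u p.1 p.2 with hU
  have h1 : ContDiff ℝ 1 U := hu.of_le (by norm_num)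
  have hx : pdx u = fun x y => fderiv ℝ U (x, y) (1, 0) := by
    ext x y; exact (pdx_eq_fderiv h1 x y).deriv
  have hy : pdy u = fun x y => fderiv ℝ U (x, y) (0, 1) := by
    ext x y; exact (pdy_eq_fderiv h1 x y).deriv
  have hD : ContDiff ℝ 1 (fderiv ℝ U) := hu.fderiv_right (by norm_num)
  have hd := ((hD.differentiable one_ne_zero) (x, y)).hasFDerivAt
  have hsymm : IsSymmSndFDerivAt ℝ U (x, y) :=
    hu.contDiffAt.isSymmSndFDerivAt (by simp)
  have e1 : pdx (pdy u) x y = fderiv ℝ (fderiv ℝ U) (x, y) (1, 0) (0, 1) := by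
    have := hd.comp_hasDerivAt (f := fun t : ℝ => (t, y)) x
      ((hasDerivAt_id x).prodMk (hasDerivAt_const x y))
    rw [hy]
    exact (this.clm_apply (hasDerivAt_const x ((0 : ℝ), (1 : ℝ)))).deriv.trans (by simp)
  have e2 : pdy (pdx u) x y = fderiv ℝ (fderiv ℝ U) (x, y) (0, 1) (1, 0) := by
    have := hd.comp_hasDerivAt (f := fun t : ℝ => (x, t)) y
      ((hasDerivAt_const y x).prodMk (hasDerivAt_id y))
    rw [hx]
    exact (this.clm_apply (hasDerivAt_const y ((1 : ℝ), (0 : ℝ)))).deriv.trans (by simp)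
  rw [e1, e2]
  exact hsymm _ _

/-! ### The maximum principle -/

theorem deriv_eq_zero_and_snd_nonpos_of_isLocalMax {f f' : ℝ → ℝ} {f'' x : ℝ}
    (hf : ∀ t, HasDerivAt f (f' t) t) (hf' : HasDerivAt f' f'' x) (h : IsLocalMax f x) :
    f' x = 0 ∧ f'' ≤ 0 := by
  have h0 : f' x = 0 := h.hasDerivAt_eq_zero (hf x)
  have hd : deriv f = f' := funext fun t => (hf t).deriv
  refine ⟨h0, ?_⟩
  by_contra! hpos
  have hmin : IsLocalMin f x :=
    isLocalMin_of_deriv_deriv_pos (by rw [hd, hf'.deriv]; exact hpos) (by rw [hd, h0])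
      (hf x).continuousAt
  have heq : f =ᶠ[nhds x] fun _ => f x := by
    filter_upwards [h, hmin] with t h1 h2 using le_antisymm h1 h2
  have h1 : deriv f =ᶠ[nhds x] deriv fun _ => f x := heq.deriv
  have h2 := h1.deriv_eq
  rw [hd, hf'.deriv] at h2
  simp at h2
  linarith

/-- Weak maximum principle for `∂ₓₓ + ∂ᵧᵧ + c ∂ᵧ` on a rectangle. -/
theorem rectangle_max_principle {g gx gxx gy gyy : ℝ → ℝ → ℝ} {c a b a' b' : ℝ}
    (hcont : Continuous fun p : ℝ × ℝ => g p.1 p.2)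
    (hx : ∀ x y, HasDerivAt (fun t => g t y) (gx x y) x)
    (hxx : ∀ x y, HasDerivAt (fun t => gx t y) (gxx x y) x)
    (hy : ∀ x y, HasDerivAt (fun t => g x t) (gy x y) y)
    (hyy : ∀ x y, HasDerivAt (fun t => gy x t) (gyy x y) y)
    (hbx : ∀ y ∈ Set.Icc a' b', g a y ≤ 0 ∧ g b y ≤ 0)
    (hby : ∀ x ∈ Set.Icc a b, g x a' ≤ 0 ∧ g x b' ≤ 0)
    (hsub : ∀ x ∈ Set.Icc a b, ∀ y ∈ Set.Icc a' b', 0 < g x y →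
      0 < gxx x y + gyy x y + c * gy x y)
    {x y : ℝ} (hx₀ : x ∈ Set.Icc a b) (hy₀ : y ∈ Set.Icc a' b') : g x y ≤ 0 := by
  obtain ⟨⟨p, q⟩, ⟨hp, hq⟩, hmax⟩ := (isCompact_Icc.prod isCompact_Icc).exists_isMaxOn
    (s := Set.Icc a b ×ˢ Set.Icc a' b') ⟨(x, y), hx₀, hy₀⟩ hcont.continuousOn
  simp only at hp hq
  refine (hmax (Set.mk_mem_prod hx₀ hy₀)).trans ?_
  by_contra! hpos
  simp only at hpos
  have hpa : a < p := lt_of_le_of_ne hp.1 fun h => by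
    have := (hbx q hq).1; rw [h] at this; linarith
  have hpb : p < b := lt_of_le_of_ne hp.2 fun h => by
    have := (hbx q hq).2; rw [← h] at this; linarith
  have hqa : a' < q := lt_of_le_of_ne hq.1 fun h => by
    have := (hby p hp).1; rw [h] at this; linarith
  have hqb : q < b' := lt_of_le_of_ne hq.2 fun h => by
    have := (hby p hp).2; rw [← h] at this; linarith
  have hmx : IsLocalMax (fun t => g t q) p := by
    filter_upwards [Icc_mem_nhds hpa hpb] with t ht using hmax (Set.mk_mem_prod ht hq)
  have hmy : IsLocalMax (fun t => g p t) q := by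
    filter_upwards [Icc_mem_nhds hqa hqb] with t ht using hmax (Set.mk_mem_prod hp ht)
  have h1 := deriv_eq_zero_and_snd_nonpos_of_isLocalMax (fun t => hx t q) (hxx p q) hmx
  have h2 := deriv_eq_zero_and_snd_nonpos_of_isLocalMax (fun t => hy p t) (hyy p q) hmy
  have h3 := hsub p hp q hq hpos
  rw [h2.1] at h3
  linarith [h1.2, h2.2]

/-! ### Interior gradient estimates -/

theorem deriv_nonpos_of_nonpos_right {h : ℝ → ℝ} {h' : ℝ} (hd : HasDerivAt h h' 0) (h0 : h 0 = 0)
    (hle : ∀ s ∈ Set.Icc (0 : ℝ) 1, h s ≤ 0) : h' ≤ 0 := by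
  refine le_of_tendsto hd.tendsto_slope_zero_right ?_
  filter_upwards [Ioc_mem_nhdsGT (zero_lt_one' ℝ)] with t ht
  simp only [zero_add, h0, sub_zero, smul_eq_mul]
  exact mul_nonpos_of_nonneg_of_nonpos (inv_nonneg.2 ht.1.le) (hle t ⟨ht.1.le, ht.2⟩)

theorem interior_deriv_bound {v vx vxx vy vyy : ℝ → ℝ → ℝ} {c x₀ y₀ M N : ℝ} (hc : 0 ≤ c)
    (hcont : Continuous fun p : ℝ × ℝ => v p.1 p.2)
    (hx : ∀ x y, HasDerivAt (fun t => v t y) (vx x y) x)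
    (hxx : ∀ x y, HasDerivAt (fun t => vx t y) (vxx x y) x)
    (hy : ∀ x y, HasDerivAt (fun t => v x t) (vy x y) y)
    (hyy : ∀ x y, HasDerivAt (fun t => vy x t) (vyy x y) y)
    (hM : ∀ x y, |x - x₀| ≤ 1 → |y - y₀| ≤ 1 → |v x y| ≤ M)
    (hN : ∀ x y, |x - x₀| ≤ 1 → |y - y₀| ≤ 1 → |vxx x y + vyy x y + c * vy x y| ≤ N) :
    vx x₀ y₀ ≤ N / 2 + (2 + c) * M := by
  have hM0 : 0 ≤ M := (abs_nonneg _).trans (hM x₀ y₀ (by simp) (by simp))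
  have hN0 : 0 ≤ N := (abs_nonneg _).trans (hN x₀ y₀ (by simp) (by simp))
  refine le_of_forall_pos_le_add fun ε hε => ?_
  set B : ℝ := (N + M * (2 + 2 * c)) / 2 + ε with hB
  have hB0 : 0 ≤ B := by positivity
  have key : ∀ s ∈ Set.Icc (0 : ℝ) 1,
      1 / 2 * (v (x₀ + s) y₀ - v (x₀ - s) y₀) - (M * (y₀ - y₀) ^ 2 + (B + M) * s - B * s ^ 2) ≤ 0 := by
    intro s hs
    refine rectangle_max_principle (c := c) (a := 0) (b := 1) (a' := y₀ - 1) (b' := y₀ + 1)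
      (g := fun s t => 1 / 2 * (v (x₀ + s) t - v (x₀ - s) t)
        - (M * (t - y₀) ^ 2 + (B + M) * s - B * s ^ 2))
      (gx := fun s t => 1 / 2 * (vx (x₀ + s) t + vx (x₀ - s) t) - ((B + M) - 2 * B * s))
      (gxx := fun s t => 1 / 2 * (vxx (x₀ + s) t - vxx (x₀ - s) t) + 2 * B)
      (gy := fun s t => 1 / 2 * (vy (x₀ + s) t - vy (x₀ - s) t) - 2 * M * (t - y₀))
      (gyy := fun s t => 1 / 2 * (vyy (x₀ + s) t - vyy (x₀ - s) t) - 2 * M)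
      ?_ ?_ ?_ ?_ ?_ ?_ ?_ ?_ hs (by constructor <;> linarith)
    · have h1 : Continuous fun p : ℝ × ℝ => v (x₀ + p.1) p.2 :=
        hcont.comp (f := fun p : ℝ × ℝ => (x₀ + p.1, p.2)) (by fun_prop)
      have h2 : Continuous fun p : ℝ × ℝ => v (x₀ - p.1) p.2 :=
        hcont.comp (f := fun p : ℝ × ℝ => (x₀ - p.1, p.2)) (by fun_prop)
      fun_prop
    · intro s t
      have h1 := (hx (x₀ + s) t).comp_const_add x₀ s
      have h2 := (hx (x₀ - s) t).comp_const_sub x₀ s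
      have h3 := ((hasDerivAt_id s).const_mul (B + M)).const_add (M * (t - y₀) ^ 2)
      have h4 := ((hasDerivAt_id s).pow 2).const_mul B
      refine HasDerivAt.congr_deriv (((h1.sub h2).const_mul (1 / 2)).sub (h3.sub h4)) ?_
      simp; ring
    · intro s t
      have h1 := (hxx (x₀ + s) t).comp_const_add x₀ s
      have h2 := (hxx (x₀ - s) t).comp_const_sub x₀ s
      have h3 := ((hasDerivAt_id s).const_mul (2 * B)).const_sub (B + M)
      refine HasDerivAt.congr_deriv (((h1.add h2).const_mul (1 / 2)).sub h3) ?_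
      simp; ring
    · intro s t
      have h3 := (((hasDerivAt_id t).sub_const y₀).pow 2).const_mul M
      refine HasDerivAt.congr_deriv ((((hy (x₀ + s) t).sub (hy (x₀ - s) t)).const_mul (1 / 2)).sub
        ((h3.add_const ((B + M) * s)).sub_const (B * s ^ 2))) ?_
      simp; ring
    · intro s t
      have h3 := ((hasDerivAt_id t).sub_const y₀).const_mul (2 * M)
      refine HasDerivAt.congr_deriv ((((hyy (x₀ + s) t).sub (hyy (x₀ - s) t)).const_mul (1 / 2)).sub h3) ?_
      simp
    · intro t ht
      have ht' : |t - y₀| ≤ 1 := abs_le.2 ⟨by linarith [ht.1], by linarith [ht.2]⟩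
      have h1 := abs_le.1 (hM (x₀ + 1) t (by simp) ht')
      have h2 := abs_le.1 (hM (x₀ - 1) t (by simp) ht')
      have h3 : 0 ≤ M * (t - y₀) ^ 2 := by positivity
      constructor
      · simp; linarith
      · nlinarith [h1.1, h1.2, h2.1, h2.2]
    · intro s hs
      have hs1 : |x₀ + s - x₀| ≤ 1 := abs_le.2 ⟨by linarith [hs.1], by linarith [hs.2]⟩
      have hs2 : |x₀ - s - x₀| ≤ 1 := abs_le.2 ⟨by linarith [hs.2], by linarith [hs.1]⟩
      have h1 := abs_le.1 (hM (x₀ + s) (y₀ - 1) hs1 (by simp))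
      have h2 := abs_le.1 (hM (x₀ - s) (y₀ - 1) hs2 (by simp))
      have h3 := abs_le.1 (hM (x₀ + s) (y₀ + 1) hs1 (by simp))
      have h4 := abs_le.1 (hM (x₀ - s) (y₀ + 1) hs2 (by simp))
      have h5 : 0 ≤ B * (s * (1 - s)) := mul_nonneg hB0 (mul_nonneg hs.1 (by linarith [hs.2]))
      have h6 : 0 ≤ M * s := mul_nonneg hM0 hs.1
      constructor
      · nlinarith [h1.1, h1.2, h2.1, h2.2]
      · nlinarith [h3.1, h3.2, h4.1, h4.2]
    · intro s hs t ht _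
      have hs1 : |x₀ + s - x₀| ≤ 1 := abs_le.2 ⟨by linarith [hs.1], by linarith [hs.2]⟩
      have hs2 : |x₀ - s - x₀| ≤ 1 := abs_le.2 ⟨by linarith [hs.2], by linarith [hs.1]⟩
      have ht' : |t - y₀| ≤ 1 := abs_le.2 ⟨by linarith [ht.1], by linarith [ht.2]⟩
      have h1 := abs_le.1 (hN (x₀ + s) t hs1 ht')
      have h2 := abs_le.1 (hN (x₀ - s) t hs2 ht')
      have h3 : 0 ≤ M * c * (1 - (t - y₀)) :=
        mul_nonneg (mul_nonneg hM0 hc) (by linarith [(abs_le.1 ht').2])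
      nlinarith [h1.1, h2.2]
  have h1 : HasDerivAt (fun s => 1 / 2 * (v (x₀ + s) y₀ - v (x₀ - s) y₀)
      - (M * (y₀ - y₀) ^ 2 + (B + M) * s - B * s ^ 2)) (vx x₀ y₀ - (B + M)) 0 := by
    have h1 : HasDerivAt (fun s => v (x₀ + s) y₀) (vx x₀ y₀) 0 :=
      HasDerivAt.comp_const_add x₀ 0 (by simpa using hx x₀ y₀)
    have h2 : HasDerivAt (fun s => v (x₀ - s) y₀) (-vx x₀ y₀) 0 :=
      HasDerivAt.comp_const_sub x₀ 0 (by simpa using hx x₀ y₀)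
    have h3 := ((hasDerivAt_id (0 : ℝ)).const_mul (B + M)).const_add (M * (y₀ - y₀) ^ 2)
    have h4 := ((hasDerivAt_id (0 : ℝ)).pow 2).const_mul B
    refine HasDerivAt.congr_deriv (((h1.sub h2).const_mul (1 / 2)).sub (h3.sub h4)) ?_
    simp; ring
  have h2 := deriv_nonpos_of_nonpos_right h1 (by simp) key
  rw [hB] at h2
  linarith

theorem interior_deriv_bound_transverse {v vx vxx vy vyy : ℝ → ℝ → ℝ} {c x₀ y₀ M N : ℝ}
    (hc : 0 ≤ c)
    (hcont : Continuous fun p : ℝ × ℝ => v p.1 p.2)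
    (hx : ∀ x y, HasDerivAt (fun t => v t y) (vx x y) x)
    (hxx : ∀ x y, HasDerivAt (fun t => vx t y) (vxx x y) x)
    (hy : ∀ x y, HasDerivAt (fun t => v x t) (vy x y) y)
    (hyy : ∀ x y, HasDerivAt (fun t => vy x t) (vyy x y) y)
    (hM : ∀ x y, |x - x₀| ≤ 1 → |y - y₀| ≤ 1 → |v x y| ≤ M)
    (hN : ∀ x y, |x - x₀| ≤ 1 → |y - y₀| ≤ 1 → |vxx x y + vyy x y + c * vy x y| ≤ N) :
    vy x₀ y₀ ≤ exp (c / 2) * ((N + c ^ 2 / 4 * M) / 2 + 2 * M) + c / 2 * M := by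
  have hexp : ∀ s, |s - y₀| ≤ 1 → exp (c / 2 * (s - y₀)) ≤ exp (c / 2) := fun s hs =>
    exp_le_exp.2 (by nlinarith [(abs_le.1 hs).2])
  have hexpd : ∀ s, HasDerivAt (fun s => exp (c / 2 * (s - y₀)))
      (exp (c / 2 * (s - y₀)) * (c / 2)) s := fun s => by
    simpa using (((hasDerivAt_id s).sub_const y₀).const_mul (c / 2)).exp
  have key := interior_deriv_bound (c := 0) (x₀ := y₀) (y₀ := x₀) (M := exp (c / 2) * M)
    (N := exp (c / 2) * (N + c ^ 2 / 4 * M)) le_rfl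
    (v := fun s t => exp (c / 2 * (s - y₀)) * v t s)
    (vx := fun s t => exp (c / 2 * (s - y₀)) * (vy t s + c / 2 * v t s))
    (vxx := fun s t => exp (c / 2 * (s - y₀)) * (vyy t s + c * vy t s + c ^ 2 / 4 * v t s))
    (vy := fun s t => exp (c / 2 * (s - y₀)) * vx t s)
    (vyy := fun s t => exp (c / 2 * (s - y₀)) * vxx t s) ?_ ?_ ?_ ?_ ?_ ?_ ?_
  · have hv := (abs_le.1 (hM x₀ y₀ (by simp) (by simp))).1
    simp only [sub_self, mul_zero, exp_zero, one_mul] at key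
    nlinarith
  · have h1 : Continuous fun p : ℝ × ℝ => v p.2 p.1 :=
      hcont.comp (f := fun p : ℝ × ℝ => (p.2, p.1)) (by fun_prop)
    fun_prop
  · intro s t
    refine HasDerivAt.congr_deriv ((hexpd s).mul (hy t s)) ?_
    ring
  · intro s t
    refine HasDerivAt.congr_deriv ((hexpd s).mul ((hyy t s).add ((hy t s).const_mul (c / 2)))) ?_
    ring
  · intro s t
    exact (hx t s).const_mul _
  · intro s t
    exact (hxx t s).const_mul _
  · intro s t hs ht
    rw [abs_mul, abs_of_pos (exp_pos _)]
    exact mul_le_mul (hexp s hs) (hM t s ht hs) (abs_nonneg _) (exp_pos _).le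
  · intro s t hs ht
    have : exp (c / 2 * (s - y₀)) * (vyy t s + c * vy t s + c ^ 2 / 4 * v t s)
        + exp (c / 2 * (s - y₀)) * vxx t s + 0 * (exp (c / 2 * (s - y₀)) * vx t s)
        = exp (c / 2 * (s - y₀)) * ((vxx t s + vyy t s + c * vy t s) + c ^ 2 / 4 * v t s) := by ring
    rw [this, abs_mul, abs_of_pos (exp_pos _)]
    refine mul_le_mul (hexp s hs) ((abs_add_le _ _).trans (add_le_add (hN t s ht hs) ?_))
      (abs_nonneg _) (exp_pos _).le
    rw [abs_mul, abs_of_nonneg (by positivity : 0 ≤ c ^ 2 / 4)]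
    exact mul_le_mul_of_nonneg_left (hM t s ht hs) (by positivity)

/-- The operator `∂ₓₓ + ∂ᵧᵧ + c ∂ᵧ`. -/
noncomputable def driftLaplacian (c : ℝ) (w : ℝ → ℝ → ℝ) (x y : ℝ) : ℝ :=
  pdxx w x y + pdyy w x y + c * pdy w x y

theorem hasDerivAt_pdxx {u : ℝ → ℝ → ℝ} (hu : ContDiff ℝ 2 (fun p : ℝ × ℝ => u p.1 p.2))
    (x y : ℝ) : HasDerivAt (fun t => pdx u t y) (pdxx u x y) x :=
  hasDerivAt_pdx (contDiff_pdx (n := 1) (by exact_mod_cast hu)) x y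

theorem hasDerivAt_pdyy {u : ℝ → ℝ → ℝ} (hu : ContDiff ℝ 2 (fun p : ℝ × ℝ => u p.1 p.2))
    (x y : ℝ) : HasDerivAt (fun t => pdy u x t) (pdyy u x y) y :=
  hasDerivAt_pdy (contDiff_pdy (n := 1) (by exact_mod_cast hu)) x y

theorem exists_gradient_bound {c : ℝ} (hc : 0 ≤ c) : ∃ C > 0, ∀ w : ℝ → ℝ → ℝ,
    ContDiff ℝ 2 (fun p : ℝ × ℝ => w p.1 p.2) → ∀ x₀ y₀ M N : ℝ,
    (∀ x y, |x - x₀| ≤ 1 → |y - y₀| ≤ 1 → |w x y| ≤ M) →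
    (∀ x y, |x - x₀| ≤ 1 → |y - y₀| ≤ 1 → |driftLaplacian c w x y| ≤ N) →
    |pdx w x₀ y₀| ≤ C * (M + N) ∧ |pdy w x₀ y₀| ≤ C * (M + N) := by
  set C₁ : ℝ := 2 + c
  set C₂ : ℝ := exp (c / 2) * (c ^ 2 / 8 + 2) + c / 2
  have h1 : 0 < C₁ := by positivity
  have h2 : 0 < C₂ := by positivity
  have h3 : exp (c / 2) / 2 ≤ C₂ := by
    have : 0 < exp (c / 2) := exp_pos _
    have : 0 ≤ exp (c / 2) * (c ^ 2 / 8) := by positivity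
    simp only [C₂]; nlinarith
  refine ⟨C₁ + C₂, by positivity, fun w hw x₀ y₀ M N hM hN => ?_⟩
  have hM0 : 0 ≤ M := (abs_nonneg _).trans (hM x₀ y₀ (by simp) (by simp))
  have hN0 : 0 ≤ N := (abs_nonneg _).trans (hN x₀ y₀ (by simp) (by simp))
  have hw1 : ContDiff ℝ 1 (fun p : ℝ × ℝ => w p.1 p.2) := hw.of_le (by norm_num)
  have hM' : ∀ x y, |x - x₀| ≤ 1 → |y - y₀| ≤ 1 → |-w x y| ≤ M := by simpa using hM
  have hN' : ∀ x y, |x - x₀| ≤ 1 → |y - y₀| ≤ 1 →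
      |-pdxx w x y + -pdyy w x y + c * -pdy w x y| ≤ N := by
    intro x y h h'
    convert hN x y h h' using 1
    rw [driftLaplacian, ← abs_neg]; congr 1; ring
  have a1 := interior_deriv_bound hc hw.continuous (hasDerivAt_pdx hw1) (hasDerivAt_pdxx hw)
    (hasDerivAt_pdy hw1) (hasDerivAt_pdyy hw) hM hN
  have a2 := interior_deriv_bound hc hw.continuous.neg (fun x y => (hasDerivAt_pdx hw1 x y).neg)
    (fun x y => (hasDerivAt_pdxx hw x y).neg) (fun x y => (hasDerivAt_pdy hw1 x y).neg)
    (fun x y => (hasDerivAt_pdyy hw x y).neg) hM' hN'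
  have a3 := interior_deriv_bound_transverse hc hw.continuous (hasDerivAt_pdx hw1)
    (hasDerivAt_pdxx hw) (hasDerivAt_pdy hw1) (hasDerivAt_pdyy hw) hM hN
  have a4 := interior_deriv_bound_transverse hc hw.continuous.neg
    (fun x y => (hasDerivAt_pdx hw1 x y).neg)
    (fun x y => (hasDerivAt_pdxx hw x y).neg) (fun x y => (hasDerivAt_pdy hw1 x y).neg)
    (fun x y => (hasDerivAt_pdyy hw x y).neg) hM' hN'
  have e1 : N / 2 + (2 + c) * M ≤ (C₁ + C₂) * (M + N) := by
    have : N / 2 ≤ C₁ * N := by simp only [C₁]; nlinarith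
    have : 0 ≤ C₂ * (M + N) := by positivity
    simp only [C₁] at *; nlinarith
  have e2 : exp (c / 2) * ((N + c ^ 2 / 4 * M) / 2 + 2 * M) + c / 2 * M
      ≤ (C₁ + C₂) * (M + N) := by
    have e : exp (c / 2) * ((N + c ^ 2 / 4 * M) / 2 + 2 * M) + c / 2 * M
      = exp (c / 2) / 2 * N + C₂ * M := by simp only [C₂]; ring
    rw [e]
    have := mul_le_mul_of_nonneg_right h3 hN0
    have : 0 ≤ C₁ * (M + N) := by positivity
    nlinarith
  exact ⟨abs_le.2 ⟨by linarith, by linarith⟩, abs_le.2 ⟨by linarith, by linarith⟩⟩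

/-- A bounded nonnegative function with `Δv + c vᵧ ≥ μ v` on a square is exponentially small at the
centre. -/
theorem exp_small_at_center {v : ℝ → ℝ → ℝ} (hv : ContDiff ℝ 2 (fun p : ℝ × ℝ => v p.1 p.2))
    {c μ k r x₀ y₀ : ℝ} (hc : 0 ≤ c) (hμ : 0 < μ) (hk : 0 < k) (hkμ : k ^ 2 + c * k ≤ μ)
    (hr : 0 ≤ r)
    (h1 : ∀ x y, |x - x₀| ≤ r → |y - y₀| ≤ r → v x y ≤ 1)
    (hL : ∀ x y, |x - x₀| ≤ r → |y - y₀| ≤ r → μ * v x y ≤ driftLaplacian c v x y) :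
    v x₀ y₀ ≤ 4 * exp (-(k * r)) := by
  have hv1 : ContDiff ℝ 1 (fun p : ℝ × ℝ => v p.1 p.2) := hv.of_le (by norm_num)
  set A := (cosh (k * r))⁻¹ with hA
  have hA0 : 0 < A := inv_pos.2 (cosh_pos _)
  have hAr : cosh (k * r) * A = 1 := mul_inv_cancel₀ (cosh_pos _).ne'
  have hAr' : cosh (k * -r) * A = 1 := by rw [mul_neg, cosh_neg, hAr]
  have habs : ∀ {t s : ℝ}, t ∈ Set.Icc (s - r) (s + r) → |t - s| ≤ r := fun ht =>
    abs_le.2 ⟨by linarith [ht.1], by linarith [ht.2]⟩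
  have key : v x₀ y₀ - (cosh (k * (x₀ - x₀)) + cosh (k * (y₀ - y₀))) * A ≤ 0 := by
    have dcosh : ∀ z s, HasDerivAt (fun s => cosh (k * (s - z))) (sinh (k * (s - z)) * k) s :=
      fun z s => by simpa using (((hasDerivAt_id s).sub_const z).const_mul k).cosh
    have dsinh : ∀ z s, HasDerivAt (fun s => sinh (k * (s - z))) (cosh (k * (s - z)) * k) s :=
      fun z s => by simpa using (((hasDerivAt_id s).sub_const z).const_mul k).sinh
    refine rectangle_max_principle (c := c) (a := x₀ - r) (b := x₀ + r) (a' := y₀ - r)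
      (b' := y₀ + r)
      (g := fun x y => v x y - (cosh (k * (x - x₀)) + cosh (k * (y - y₀))) * A)
      (gx := fun x y => pdx v x y - sinh (k * (x - x₀)) * k * A)
      (gxx := fun x y => pdxx v x y - cosh (k * (x - x₀)) * k * k * A)
      (gy := fun x y => pdy v x y - sinh (k * (y - y₀)) * k * A)
      (gyy := fun x y => pdyy v x y - cosh (k * (y - y₀)) * k * k * A)
      ?_ ?_ ?_ ?_ ?_ ?_ ?_ ?_ (by constructor <;> linarith) (by constructor <;> linarith)
    · have := hv.continuous
      have h1 : Continuous fun p : ℝ × ℝ => cosh (k * (p.1 - x₀)) :=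
        continuous_cosh.comp (by fun_prop)
      have h2 : Continuous fun p : ℝ × ℝ => cosh (k * (p.2 - y₀)) :=
        continuous_cosh.comp (by fun_prop)
      fun_prop
    · exact fun x y => (hasDerivAt_pdx hv1 x y).sub (((dcosh x₀ x).add_const _).mul_const A)
    · exact fun x y => (hasDerivAt_pdxx hv x y).sub (((dsinh x₀ x).mul_const k).mul_const A)
    · exact fun x y => (hasDerivAt_pdy hv1 x y).sub (((dcosh y₀ y).const_add _).mul_const A)
    · exact fun x y => (hasDerivAt_pdyy hv x y).sub (((dsinh y₀ y).mul_const k).mul_const A)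
    · intro y hy
      have hp : 0 ≤ cosh (k * (y - y₀)) * A := mul_nonneg (cosh_pos _).le hA0.le
      have b1 := h1 (x₀ - r) y (by simp [abs_of_nonneg hr]) (habs hy)
      have b2 := h1 (x₀ + r) y (by simp [abs_of_nonneg hr]) (habs hy)
      simp only [add_mul, add_sub_cancel_left, sub_sub_cancel_left, hAr, hAr']
      constructor <;> linarith
    · intro x hx
      have hp : 0 ≤ cosh (k * (x - x₀)) * A := mul_nonneg (cosh_pos _).le hA0.le
      have b1 := h1 x (y₀ - r) (habs hx) (by simp [abs_of_nonneg hr])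
      have b2 := h1 x (y₀ + r) (habs hx) (by simp [abs_of_nonneg hr])
      simp only [add_mul, add_sub_cancel_left, sub_sub_cancel_left, hAr, hAr']
      constructor <;> linarith
    · intro x hx y hy hpos
      have hLv := hL x y (habs hx) (habs hy)
      rw [driftLaplacian] at hLv
      have hsc : sinh (k * (y - y₀)) ≤ cosh (k * (y - y₀)) := by
        have h := cosh_sub_sinh (k * (y - y₀))
        linarith [exp_pos (-(k * (y - y₀)))]
      have p1 : 0 < cosh (k * (x - x₀)) * A := mul_pos (cosh_pos _) hA0
      have p2 : 0 < cosh (k * (y - y₀)) * A := mul_pos (cosh_pos _) hA0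
      have p3 := mul_le_mul_of_nonneg_left hsc (by positivity : 0 ≤ c * k * A)
      have p4 := mul_le_mul_of_nonneg_right hkμ (add_pos p1 p2).le
      have p5 : 0 ≤ c * k * (cosh (k * (x - x₀)) * A) := by positivity
      have p6 := mul_pos hμ hpos
      nlinarith
  have hA2 : A ≤ 2 * exp (-(k * r)) := by
    rw [hA, inv_le_iff_one_le_mul₀ (cosh_pos _), cosh_eq]
    have : exp (-(k * r)) * exp (k * r) = 1 := by rw [← exp_add]; simp
    nlinarith [exp_pos (-(k * r))]
  simp at key
  linarith

/-! ### The double-well potential -/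

namespace BalancedDoubleWell

variable {F : ℝ → ℝ}

theorem hasDerivAt (hF : BalancedDoubleWell F) (s : ℝ) : HasDerivAt F (deriv F s) s :=
  (hF.1.differentiable (by norm_num) s).hasDerivAt

theorem contDiff_deriv_s8 (hF : BalancedDoubleWell F) : ContDiff ℝ 2 (deriv F) :=
  ((contDiff_succ_iff_deriv (n := 2)).1 (by exact_mod_cast hF.1)).2.2

theorem hasDerivAt_deriv (hF : BalancedDoubleWell F) (s : ℝ) :
    HasDerivAt (deriv F) (deriv (deriv F) s) s :=
  (hF.contDiff_deriv_s8.differentiable (by norm_num) s).hasDerivAt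

theorem continuous_deriv_deriv (hF : BalancedDoubleWell F) : Continuous (deriv (deriv F)) :=
  hF.contDiff_deriv_s8.continuous_deriv (by norm_num)

theorem monotoneOn_s8 (hF : BalancedDoubleWell F) : MonotoneOn F (Set.Icc (-1) 0) := by
  refine monotoneOn_of_deriv_nonneg (convex_Icc _ _) hF.1.continuous.continuousOn
    (hF.1.differentiable (by norm_num)).differentiableOn fun s hs => ?_
  rw [interior_Icc] at hs
  exact (hF.2.2.2.2.2.1 s hs).le

theorem antitoneOn_s8 (hF : BalancedDoubleWell F) : AntitoneOn F (Set.Icc 0 1) := by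
  refine antitoneOn_of_deriv_nonpos (convex_Icc _ _) hF.1.continuous.continuousOn
    (hF.1.differentiable (by norm_num)).differentiableOn fun s hs => ?_
  rw [interior_Icc] at hs
  exact (hF.2.2.2.2.2.2.1 s hs).le

theorem nonneg_s8 (hF : BalancedDoubleWell F) {s : ℝ} (hs : |s| ≤ 1) : 0 ≤ F s := by
  obtain ⟨h1, h2⟩ := abs_le.1 hs
  have hm := hF.2.2.2.2.2.2.2.1
  have hp := hF.2.2.2.2.2.2.2.2
  rcases le_total s 0 with h | h
  · rw [← hm]; exact hF.monotoneOn_s8 ⟨le_rfl, by norm_num⟩ ⟨h1, h⟩ h1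
  · rw [← hp]; exact hF.antitoneOn_s8 ⟨h, h2⟩ ⟨by norm_num, le_rfl⟩ h2

theorem le_zero (hF : BalancedDoubleWell F) {s : ℝ} (hs : |s| ≤ 1) : F s ≤ F 0 := by
  obtain ⟨h1, h2⟩ := abs_le.1 hs
  rcases le_total s 0 with h | h
  · exact hF.monotoneOn_s8 ⟨h1, h⟩ ⟨by norm_num, le_rfl⟩ h
  · exact hF.antitoneOn_s8 ⟨le_rfl, by norm_num⟩ ⟨h, h2⟩ h

theorem pos (hF : BalancedDoubleWell F) {s : ℝ} (hs : s ∈ Set.Ioc (-1 : ℝ) 0) : 0 < F s := by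
  have h : StrictMonoOn F (Set.Icc (-1) 0) := by
    refine strictMonoOn_of_deriv_pos (convex_Icc _ _) hF.1.continuous.continuousOn fun s hs => ?_
    rw [interior_Icc] at hs
    exact hF.2.2.2.2.2.1 s hs
  rw [← hF.2.2.2.2.2.2.2.1]
  exact h ⟨le_rfl, by norm_num⟩ ⟨hs.1.le, hs.2⟩ hs.1

/-- `F` is quasiconcave on `[-1, 1]`. -/
theorem lt_of_mem_Icc (hF : BalancedDoubleWell F) {a b s δ : ℝ} (ha : -1 ≤ a) (hb : b ≤ 1)
    (hs : s ∈ Set.Icc a b) (hFa : δ < F a) (hFb : δ < F b) : δ < F s := by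
  rcases le_total s 0 with h | h
  · exact hFa.trans_le (hF.monotoneOn_s8 ⟨ha, hs.1.trans h⟩ ⟨ha.trans hs.1, h⟩ hs.1)
  · exact hFb.trans_le (hF.antitoneOn_s8 ⟨h, hs.2.trans hb⟩ ⟨h.trans hs.2, hb⟩ hs.2)

theorem exists_bound (hF : BalancedDoubleWell F) : ∃ K > 0, ∀ s, |s| ≤ 1 →
    |F s| ≤ K ∧ |deriv F s| ≤ K ∧ |deriv (deriv F) s| ≤ K := by
  obtain ⟨K₀, h0⟩ := isCompact_Icc.exists_bound_of_continuousOn (s := Set.Icc (-1 : ℝ) 1)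
    hF.1.continuous.continuousOn
  obtain ⟨K₁, h1⟩ := isCompact_Icc.exists_bound_of_continuousOn (s := Set.Icc (-1 : ℝ) 1)
    hF.contDiff_deriv_s8.continuous.continuousOn
  obtain ⟨K₂, h2⟩ := isCompact_Icc.exists_bound_of_continuousOn (s := Set.Icc (-1 : ℝ) 1)
    hF.continuous_deriv_deriv.continuousOn
  refine ⟨|K₀| + |K₁| + |K₂| + 1, by positivity, fun s hs => ?_⟩
  have e0 := (h0 s (abs_le.1 hs)).trans (le_abs_self _)
  have e1 := (h1 s (abs_le.1 hs)).trans (le_abs_self _)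
  have e2 := (h2 s (abs_le.1 hs)).trans (le_abs_self _)
  rw [Real.norm_eq_abs] at e0 e1 e2
  have := abs_nonneg K₀
  have := abs_nonneg K₁
  have := abs_nonneg K₂
  exact ⟨by linarith, by linarith, by linarith⟩

/-- Near the well `-1` the derivative of `F` grows at least linearly. -/
theorem exists_linear_lower_bound (hF : BalancedDoubleWell F) : ∃ μ > 0, ∃ δ > 0, δ < 1 ∧
    ∀ s ∈ Set.Icc (-1 : ℝ) (-1 + δ), μ * (s + 1) ≤ deriv F s := by
  have hpos := hF.2.2.2.1
  have hev : ∀ᶠ s in nhds (-1 : ℝ), deriv (deriv F) (-1) / 2 < deriv (deriv F) s :=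
    hF.continuous_deriv_deriv.continuousAt.eventually (lt_mem_nhds (by linarith))
  obtain ⟨δ, hδ, h⟩ := Metric.eventually_nhds_iff.1 hev
  refine ⟨deriv (deriv F) (-1) / 2, by linarith, min (δ / 2) (1 / 2), by positivity,
    (min_le_right _ _).trans_lt (by norm_num), fun s hs => ?_⟩
  rcases hs.1.eq_or_lt with rfl | hlt
  · simp [hF.2.1]
  obtain ⟨ξ, hξ, he⟩ := exists_deriv_eq_slope (deriv F) hlt
    hF.contDiff_deriv_s8.continuous.continuousOn
    (hF.contDiff_deriv_s8.differentiable (by norm_num)).differentiableOn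
  have hξ' : deriv (deriv F) (-1) / 2 < deriv (deriv F) ξ := by
    refine h ?_
    rw [Real.dist_eq, abs_of_pos (by linarith [hξ.1])]
    linarith [hξ.2, hs.2, min_le_left (δ / 2) (1 / 2 : ℝ)]
  rw [he, hF.2.1, sub_zero, lt_div_iff₀ (by linarith)] at hξ'
  linarith

theorem exists_linear_upper_bound (hF : BalancedDoubleWell F) : ∃ K > 0, ∀ s, |s| ≤ 1 →
    |deriv F s| ≤ K * (s + 1) ∧ F s ≤ K * (s + 1) := by
  obtain ⟨K, hK, h⟩ := hF.exists_bound
  refine ⟨K, hK, fun s hs => ?_⟩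
  have hs' := abs_le.1 hs
  have hm : (-1 : ℝ) ∈ Set.Icc (-1 : ℝ) 1 := ⟨le_rfl, by norm_num⟩
  have h1 := (convex_Icc (-1 : ℝ) 1).norm_image_sub_le_of_norm_hasDerivWithin_le
    (fun t _ => (hF.hasDerivAt_deriv t).hasDerivWithinAt) (fun t ht => (h t (abs_le.2 ht)).2.2)
    hm hs'
  have h2 := (convex_Icc (-1 : ℝ) 1).norm_image_sub_le_of_norm_hasDerivWithin_le
    (fun t _ => (hF.hasDerivAt t).hasDerivWithinAt) (fun t ht => (h t (abs_le.2 ht)).2.1)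
    hm hs'
  rw [hF.2.1, sub_zero, Real.norm_eq_abs, Real.norm_eq_abs, sub_neg_eq_add,
    abs_of_nonneg (by linarith : 0 ≤ s + 1)] at h1
  rw [hF.2.2.2.2.2.2.2.1, sub_zero, Real.norm_eq_abs, Real.norm_eq_abs, sub_neg_eq_add,
    abs_of_nonneg (by linarith : 0 ≤ s + 1)] at h2
  exact ⟨h1, (le_abs_self _).trans h2⟩

end BalancedDoubleWell

/-! ### Regularity of bounded solutions -/

namespace IsSolution

variable {F : ℝ → ℝ} {c : ℝ} {u : ℝ → ℝ → ℝ}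

theorem contDiff_one (hu : IsSolution F c u) : ContDiff ℝ 1 (fun p : ℝ × ℝ => u p.1 p.2) :=
  hu.1.of_le (by norm_num)

theorem contDiff_two (hu : IsSolution F c u) : ContDiff ℝ 2 (fun p : ℝ × ℝ => u p.1 p.2) :=
  hu.1.of_le (by norm_num)

theorem contDiff_dx (hu : IsSolution F c u) : ContDiff ℝ 2 (fun p : ℝ × ℝ => pdx u p.1 p.2) :=
  contDiff_pdx (n := 2) (by exact_mod_cast hu.1)

theorem contDiff_dy (hu : IsSolution F c u) : ContDiff ℝ 2 (fun p : ℝ × ℝ => pdy u p.1 p.2) :=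
  contDiff_pdy (n := 2) (by exact_mod_cast hu.1)

theorem contDiff_dx_one (hu : IsSolution F c u) : ContDiff ℝ 1 (fun p : ℝ × ℝ => pdx u p.1 p.2) :=
  hu.contDiff_dx.of_le (by norm_num)

theorem contDiff_dy_one (hu : IsSolution F c u) : ContDiff ℝ 1 (fun p : ℝ × ℝ => pdy u p.1 p.2) :=
  hu.contDiff_dy.of_le (by norm_num)

theorem driftLaplacian_dx (hF : BalancedDoubleWell F) (hu : IsSolution F c u) (x y : ℝ) :
    driftLaplacian c (pdx u) x y = deriv (deriv F) (u x y) * pdx u x y := by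
  have hxx := contDiff_pdx (n := 1) (by exact_mod_cast hu.contDiff_dx)
  have hyy := contDiff_pdy (n := 1) (by exact_mod_cast hu.contDiff_dy)
  have h1 := ((hasDerivAt_pdx (by exact_mod_cast hxx) x y).add
    (hasDerivAt_pdx (by exact_mod_cast hyy) x y)).add
    ((hasDerivAt_pdx hu.contDiff_dy_one x y).const_mul c)
  have h2 := (hF.hasDerivAt_deriv (u x y)).comp x (hasDerivAt_pdx hu.contDiff_one x y)
  have e1 : pdx (pdy (pdy u)) = pdy (pdy (pdx u)) := by
    rw [pdx_pdy_comm hu.contDiff_dy, pdx_pdy_comm hu.contDiff_two]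
  rw [e1, pdx_pdy_comm hu.contDiff_two] at h1
  exact h1.unique (h2.congr_of_eventuallyEq (Eventually.of_forall fun t => hu.2.1 t y))

theorem driftLaplacian_dy (hF : BalancedDoubleWell F) (hu : IsSolution F c u) (x y : ℝ) :
    driftLaplacian c (pdy u) x y = deriv (deriv F) (u x y) * pdy u x y := by
  have hxx := contDiff_pdx (n := 1) (by exact_mod_cast hu.contDiff_dx)
  have hyy := contDiff_pdy (n := 1) (by exact_mod_cast hu.contDiff_dy)
  have h1 := ((hasDerivAt_pdy (by exact_mod_cast hxx) x y).add
    (hasDerivAt_pdy (by exact_mod_cast hyy) x y)).add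
    ((hasDerivAt_pdy hu.contDiff_dy_one x y).const_mul c)
  have h2 := (hF.hasDerivAt_deriv (u x y)).comp y (hasDerivAt_pdy hu.contDiff_one x y)
  have e1 : pdy (pdx (pdx u)) = pdx (pdx (pdy u)) := by
    rw [← pdx_pdy_comm hu.contDiff_dx, pdx_pdy_comm hu.contDiff_two]
  rw [e1] at h1
  exact h1.unique (h2.congr_of_eventuallyEq (Eventually.of_forall fun t => hu.2.1 x t))

theorem exists_derivative_bound (hF : BalancedDoubleWell F) (hc : 0 ≤ c) (hu : IsSolution F c u) :
    ∃ C > 0, ∀ x y, |pdx u x y| ≤ C ∧ |pdy u x y| ≤ C ∧ |pdx (pdx u) x y| ≤ C ∧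
      |pdy (pdx u) x y| ≤ C ∧ |pdx (pdy u) x y| ≤ C ∧ |pdy (pdy u) x y| ≤ C := by
  obtain ⟨C, hC, hgrad⟩ := exists_gradient_bound hc
  obtain ⟨K, hK, hb⟩ := hF.exists_bound
  have g1 : ∀ x y, |pdx u x y| ≤ C * (1 + K) ∧ |pdy u x y| ≤ C * (1 + K) := fun x y =>
    hgrad u hu.contDiff_two x y 1 K (fun x y _ _ => hu.2.2.1 x y) fun x y _ _ => by
      rw [driftLaplacian, hu.2.1]; exact (hb _ (hu.2.2.1 x y)).2.1
  set D := C * (1 + K) with hD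
  have hD0 : 0 < D := by positivity
  have g2 : ∀ x y, |pdx (pdx u) x y| ≤ C * (D + K * D) ∧ |pdy (pdx u) x y| ≤ C * (D + K * D) :=
    fun x y => hgrad _ hu.contDiff_dx x y D (K * D) (fun x y _ _ => (g1 x y).1) fun x y _ _ => by
      rw [hu.driftLaplacian_dx hF, abs_mul]
      exact mul_le_mul (hb _ (hu.2.2.1 x y)).2.2 (g1 x y).1 (abs_nonneg _) hK.le
  have g3 : ∀ x y, |pdx (pdy u) x y| ≤ C * (D + K * D) ∧ |pdy (pdy u) x y| ≤ C * (D + K * D) :=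
    fun x y => hgrad _ hu.contDiff_dy x y D (K * D) (fun x y _ _ => (g1 x y).2) fun x y _ _ => by
      rw [hu.driftLaplacian_dy hF, abs_mul]
      exact mul_le_mul (hb _ (hu.2.2.1 x y)).2.2 (g1 x y).2 (abs_nonneg _) hK.le
  have hE : 0 < C * (D + K * D) := by positivity
  refine ⟨D + C * (D + K * D), by positivity, fun x y => ⟨?_, ?_, ?_, ?_, ?_, ?_⟩⟩
  · linarith [(g1 x y).1]
  · linarith [(g1 x y).2]
  · linarith [(g2 x y).1]
  · linarith [(g2 x y).2]
  · linarith [(g3 x y).1]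
  · linarith [(g3 x y).2]

theorem monotone (hu : IsSolution F c u) (x : ℝ) : StrictMono fun y => u x y :=
  strictMono_of_deriv_pos fun y => hu.2.2.2 x y

end IsSolution

/-! ### Decay of the gradient along vertical lines -/

/-- If `f` varies little on a step of length `t` and `f''` is bounded then `f'` is small. -/
theorem abs_deriv_le_of_snd_bound {f f' f'' : ℝ → ℝ} {C t : ℝ} (ht : 0 < t)
    (hf : ∀ x, HasDerivAt f (f' x) x) (hf' : ∀ x, HasDerivAt f' (f'' x) x)
    (hC : ∀ x, |f'' x| ≤ C) (x : ℝ) : |f' x| ≤ |f (x + t) - f x| / t + C * t := by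
  have hlt : x < x + t := by linarith
  obtain ⟨ξ, hξ, he⟩ := exists_hasDerivAt_eq_slope f f' hlt
    (fun s _ => (hf s).continuousAt.continuousWithinAt) (fun s _ => hf s)
  have h1 := convex_univ.norm_image_sub_le_of_norm_hasDerivWithin_le
    (fun s _ => (hf' s).hasDerivWithinAt) (fun s _ => hC s) (Set.mem_univ ξ) (Set.mem_univ x)
  rw [Real.norm_eq_abs, Real.norm_eq_abs] at h1
  have hC0 : 0 ≤ C := (abs_nonneg _).trans (hC x)
  have h2 : |x - ξ| ≤ t := abs_le.2 ⟨by linarith [hξ.2], by linarith [hξ.1]⟩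
  have h3 : |f' ξ| = |f (x + t) - f x| / t := by
    rw [he, abs_div, add_sub_cancel_left, abs_of_pos ht]
  have h4 : |f' x| ≤ |f' x - f' ξ| + |f' ξ| := by
    simpa using abs_add_le (f' x - f' ξ) (f' ξ)
  nlinarith [mul_le_mul_of_nonneg_left h2 hC0]

theorem tendsto_zero_of_le_div_add {g : ℝ → ℝ} {h : ℝ → ℝ → ℝ} {C : ℝ} {l : Filter ℝ}
    (hg : ∀ t > 0, ∀ y, |g y| ≤ h t y / t + C * t) (hh : ∀ t > 0, Tendsto (h t) l (nhds 0)) :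
    Tendsto g l (nhds 0) := by
  rw [Metric.tendsto_nhds]
  intro ε hε
  have ht : 0 < ε / (2 * (|C| + 1)) := by positivity
  set t := ε / (2 * (|C| + 1))
  filter_upwards [(hh t ht).eventually (gt_mem_nhds (by positivity : 0 < t * (ε / 2)))] with y hy
  rw [Real.dist_eq, sub_zero]
  have h1 : h t y / t < ε / 2 := by rwa [div_lt_iff₀ ht, mul_comm]
  have h2 : C * t ≤ ε / 2 := by
    have e : (|C| + 1) * t = ε / 2 := by
      simp only [t]; field_simp
    have : C * t ≤ (|C| + 1) * t :=
      mul_le_mul_of_nonneg_right (by linarith [le_abs_self C]) ht.le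
    linarith
  linarith [hg t ht y]

namespace IsSolution

variable {F : ℝ → ℝ} {c : ℝ} {u : ℝ → ℝ → ℝ}

theorem tendsto_gradient_zero (hF : BalancedDoubleWell F) (hc : 0 ≤ c) (hu : IsSolution F c u)
    {l : Filter ℝ} {a : ℝ} (hl : ∀ t : ℝ, Tendsto (fun y => y + t) l l)
    (hlim : ∀ x, Tendsto (fun y => u x y) l (nhds a)) (x : ℝ) :
    Tendsto (fun y => pdx u x y) l (nhds 0) ∧ Tendsto (fun y => pdy u x y) l (nhds 0) := by
  obtain ⟨C, hC, hb⟩ := hu.exists_derivative_bound hF hc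
  refine ⟨tendsto_zero_of_le_div_add (h := fun t y => |u (x + t) y - u x y|) (C := C)
    (fun t ht y => ?_) (fun t ht => ?_), tendsto_zero_of_le_div_add
    (h := fun t y => |u x (y + t) - u x y|) (C := C) (fun t ht y => ?_) (fun t ht => ?_)⟩
  · exact abs_deriv_le_of_snd_bound ht (fun x => hasDerivAt_pdx hu.contDiff_one x y)
      (fun x => hasDerivAt_pdxx hu.contDiff_two x y) (fun x => (hb x y).2.2.1) x
  · simpa using ((hlim (x + t)).sub (hlim x)).abs
  · exact abs_deriv_le_of_snd_bound ht (fun y => hasDerivAt_pdy hu.contDiff_one x y)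
      (fun y => hasDerivAt_pdyy hu.contDiff_two x y) (fun y => (hb x y).2.2.2.2.2) y
  · simpa using (((hlim x).comp (hl t)).sub (hlim x)).abs

end IsSolution

/-! ### Momentum and Hamiltonian densities -/

/-- The flux density `uₓ uᵧ`. -/
noncomputable def momentumDensity (u : ℝ → ℝ → ℝ) (x y : ℝ) : ℝ := pdx u x y * pdy u x y

/-- The Hamiltonian density `(uₓ² - uᵧ²) / 2 + F(u)`. -/
noncomputable def hamiltonianDensity (F : ℝ → ℝ) (u : ℝ → ℝ → ℝ) (x y : ℝ) : ℝ :=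
  (1 / 2) * ((pdx u x y) ^ 2 - (pdy u x y) ^ 2) + F (u x y)

theorem abs_intervalIntegral_le_integral {g : ℝ → ℝ} (hg : Integrable g) (h0 : ∀ x, 0 ≤ g x)
    {a b : ℝ} (hab : a ≤ b) : |∫ x in a..b, g x| ≤ ∫ x, g x := by
  rw [abs_of_nonneg (intervalIntegral.integral_nonneg hab fun x _ => h0 x),
    intervalIntegral.integral_of_le hab]
  exact setIntegral_le_integral hg (Eventually.of_forall h0)

theorem continuous_slice_right {g : ℝ → ℝ → ℝ} (hg : Continuous fun p : ℝ × ℝ => g p.1 p.2)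
    (x : ℝ) : Continuous fun y => g x y :=
  hg.comp (f := fun y : ℝ => (x, y)) (by fun_prop)

theorem continuous_slice_left {g : ℝ → ℝ → ℝ} (hg : Continuous fun p : ℝ × ℝ => g p.1 p.2)
    (y : ℝ) : Continuous fun x => g x y :=
  hg.comp (f := fun x : ℝ => (x, y)) (by fun_prop)

namespace IsSolution

variable {F : ℝ → ℝ} {c : ℝ} {u : ℝ → ℝ → ℝ}

theorem contDiff_momentumDensity (hu : IsSolution F c u) :
    ContDiff ℝ 1 (fun p : ℝ × ℝ => momentumDensity u p.1 p.2) :=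
  hu.contDiff_dx_one.mul hu.contDiff_dy_one

theorem contDiff_hamiltonianDensity (hF : BalancedDoubleWell F) (hu : IsSolution F c u) :
    ContDiff ℝ 1 (fun p : ℝ × ℝ => hamiltonianDensity F u p.1 p.2) :=
  (contDiff_const.mul ((hu.contDiff_dx_one.pow 2).sub (hu.contDiff_dy_one.pow 2))).add
    ((hF.1.of_le (by norm_num)).comp hu.contDiff_one)

theorem continuous_dy_sq (hu : IsSolution F c u) :
    Continuous fun p : ℝ × ℝ => (pdy u p.1 p.2) ^ 2 :=
  hu.contDiff_dy.continuous.pow 2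

/-- The local conservation law obtained by multiplying the equation by `uᵧ`. -/
theorem pdy_hamiltonianDensity (hF : BalancedDoubleWell F) (hu : IsSolution F c u) (x y : ℝ) :
    pdy (hamiltonianDensity F u) x y = pdx (momentumDensity u) x y + c * (pdy u x y) ^ 2 := by
  have h1 := (hasDerivAt_pdx hu.contDiff_dx_one x y).mul (hasDerivAt_pdx hu.contDiff_dy_one x y)
  have h2 := ((((hasDerivAt_pdy hu.contDiff_dx_one x y).pow 2).sub
    ((hasDerivAt_pdy hu.contDiff_dy_one x y).pow 2)).const_mul (1 / 2)).add
    ((hF.hasDerivAt (u x y)).comp y (hasDerivAt_pdy hu.contDiff_one x y))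
  have e1 : pdx (momentumDensity u) x y = _ := h1.deriv
  have e2 : pdy (hamiltonianDensity F u) x y = _ := h2.deriv
  have e3 := hu.2.1 x y
  rw [e1, e2, ← e3, pdx_pdy_comm hu.contDiff_two]
  change _ = pdx (pdx u) x y * _ + _ + _
  change _ + (pdx (pdx u) x y + pdy (pdy u) x y + _) * _ = _
  simp
  ring

theorem box_identity (hF : BalancedDoubleWell F) (hu : IsSolution F c u) (a b y₁ y₂ : ℝ) :
    c * ∫ x in a..b, ∫ y in y₁..y₂, (pdy u x y) ^ 2 =
      (∫ x in a..b, hamiltonianDensity F u x y₂) - (∫ x in a..b, hamiltonianDensity F u x y₁)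
      - (∫ y in y₁..y₂, momentumDensity u b y) + ∫ y in y₁..y₂, momentumDensity u a y := by
  have hM := hu.contDiff_momentumDensity
  have hQ := hu.contDiff_hamiltonianDensity hF
  have heq : ∀ p : ℝ × ℝ, (-fderiv ℝ (fun p : ℝ × ℝ => momentumDensity u p.1 p.2) p) (1, 0)
      + fderiv ℝ (fun p : ℝ × ℝ => hamiltonianDensity F u p.1 p.2) p (0, 1)
      = c * (pdy u p.1 p.2) ^ 2 := fun p => by
    have h1 : pdx (momentumDensity u) p.1 p.2 = _ := (pdx_eq_fderiv hM p.1 p.2).deriv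
    have h2 : pdy (hamiltonianDensity F u) p.1 p.2 = _ := (pdy_eq_fderiv hQ p.1 p.2).deriv
    have h3 := hu.pdy_hamiltonianDensity hF p.1 p.2
    rw [h1, h2] at h3
    change -(fderiv ℝ (fun p : ℝ × ℝ => momentumDensity u p.1 p.2) p (1, 0)) + _ = _
    rw [h3]; ring
  have key := integral2_divergence_prod_of_hasFDerivAt
    (fun p : ℝ × ℝ => -momentumDensity u p.1 p.2)
    (fun p : ℝ × ℝ => hamiltonianDensity F u p.1 p.2)
    (fun p => -fderiv ℝ (fun p : ℝ × ℝ => momentumDensity u p.1 p.2) p)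
    (fun p => fderiv ℝ (fun p : ℝ × ℝ => hamiltonianDensity F u p.1 p.2) p) a y₁ b y₂
    hM.continuous.neg.continuousOn hQ.continuous.continuousOn
    (fun p _ => ((hM.differentiable one_ne_zero) p).hasFDerivAt.neg)
    (fun p _ => ((hQ.differentiable one_ne_zero) p).hasFDerivAt) (by
      simp only [heq]
      exact (hu.continuous_dy_sq.const_mul c).continuousOn.integrableOn_compact
        (isCompact_uIcc.prod isCompact_uIcc))
  simp only [heq, intervalIntegral.integral_const_mul, intervalIntegral.integral_neg] at key
  rw [key]; ring

end IsSolution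

namespace IsTravelingWave

variable {F : ℝ → ℝ} {c : ℝ} {u : ℝ → ℝ → ℝ}

theorem integrable_dy (hu : IsTravelingWave F c u) (x : ℝ) : Integrable fun y => pdy u x y := by
  have hcont : Continuous fun y => pdy u x y := continuous_slice_right hu.1.contDiff_dy.continuous x
  refine integrable_of_intervalIntegral_norm_bounded (a := fun i : ℝ => -i) (b := fun i => i)
    (l := atTop) 2 (fun i => hcont.integrableOn_Ioc) tendsto_neg_atTop_atBot tendsto_id ?_
  refine Eventually.of_forall fun i => ?_
  have : ∫ y in -i..i, ‖pdy u x y‖ = u x i - u x (-i) := by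
    simp_rw [Real.norm_of_nonneg (hu.1.2.2.2 x _).le]
    exact intervalIntegral.integral_eq_sub_of_hasDerivAt
      (fun y _ => hasDerivAt_pdy hu.1.contDiff_one x y) (hcont.intervalIntegrable _ _)
  rw [this]
  have h1 := abs_le.1 (hu.1.2.2.1 x i)
  have h2 := abs_le.1 (hu.1.2.2.1 x (-i))
  linarith [h1.2, h2.1]

theorem integral_dy (hu : IsTravelingWave F c u) (x : ℝ) : ∫ y, pdy u x y = 2 := by
  rw [integral_of_hasDerivAt_of_tendsto (fun y => hasDerivAt_pdy hu.1.contDiff_one x y)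
    (hu.integrable_dy x) (hu.2.2 x) (hu.2.1 x)]
  norm_num

theorem integrable_mul_dy (hu : IsTravelingWave F c u) {g : ℝ → ℝ} (hg : Continuous g) {C : ℝ}
    (hC : ∀ y, |g y| ≤ C) (x : ℝ) : Integrable fun y => g y * pdy u x y :=
  (hu.integrable_dy x).bdd_mul hg.aestronglyMeasurable (Eventually.of_forall hC)

theorem abs_integral_mul_dy_le (hu : IsTravelingWave F c u) {g : ℝ → ℝ} {C : ℝ}
    (hC : ∀ y, |g y| ≤ C) (x : ℝ) : |∫ y, g y * pdy u x y| ≤ 2 * C := by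
  have h := norm_integral_le_of_norm_le ((hu.integrable_dy x).const_mul C)
    (f := fun y => g y * pdy u x y) (Eventually.of_forall fun y => by
      rw [norm_mul, Real.norm_of_nonneg (hu.1.2.2.2 x y).le]
      exact mul_le_mul_of_nonneg_right (hC y) (hu.1.2.2.2 x y).le)
  rw [integral_const_mul, hu.integral_dy] at h
  rw [← Real.norm_eq_abs]; linarith

theorem integrable_momentumDensity (hF : BalancedDoubleWell F) (hc : 0 ≤ c)
    (hu : IsTravelingWave F c u) (x : ℝ) : Integrable fun y => momentumDensity u x y := by
  obtain ⟨C, hC, hb⟩ := hu.1.exists_derivative_bound hF hc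
  exact hu.integrable_mul_dy (continuous_slice_right hu.1.contDiff_dx.continuous x)
    (fun y => (hb x y).1) x

theorem integrable_dy_sq (hF : BalancedDoubleWell F) (hc : 0 ≤ c)
    (hu : IsTravelingWave F c u) (x : ℝ) : Integrable fun y => (pdy u x y) ^ 2 := by
  obtain ⟨C, hC, hb⟩ := hu.1.exists_derivative_bound hF hc
  simp_rw [pow_two]
  exact hu.integrable_mul_dy (continuous_slice_right hu.1.contDiff_dy.continuous x)
    (fun y => (hb x y).2.1) x

theorem tendsto_hamiltonianDensity_zero (hF : BalancedDoubleWell F) (hc : 0 ≤ c)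
    (hu : IsTravelingWave F c u) (x : ℝ) :
    Tendsto (fun y => hamiltonianDensity F u x y) atTop (nhds 0) ∧
    Tendsto (fun y => hamiltonianDensity F u x y) atBot (nhds 0) := by
  have key : ∀ {l : Filter ℝ} {a : ℝ}, F a = 0 → (∀ t : ℝ, Tendsto (fun y => y + t) l l) →
      (∀ x, Tendsto (fun y => u x y) l (nhds a)) →
      Tendsto (fun y => hamiltonianDensity F u x y) l (nhds 0) := by
    intro l a ha hl hlim
    obtain ⟨h1, h2⟩ := hu.1.tendsto_gradient_zero hF hc hl hlim x
    have h3 := (hF.1.continuous.tendsto a).comp (hlim x)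
    have h4 := (((h1.pow 2).sub (h2.pow 2)).const_mul (1 / 2)).add h3
    rw [ha] at h4
    norm_num at h4
    simpa [hamiltonianDensity] using h4
  exact ⟨key hF.2.2.2.2.2.2.2.2 (fun t => tendsto_atTop_add_const_right _ t tendsto_id) hu.2.1,
    key hF.2.2.2.2.2.2.2.1 (fun t => tendsto_atBot_add_const_right _ t tendsto_id) hu.2.2⟩

theorem exists_hamiltonianDensity_bound (hF : BalancedDoubleWell F) (hc : 0 ≤ c)
    (hu : IsTravelingWave F c u) : ∃ C > 0, ∀ x y, |hamiltonianDensity F u x y| ≤ C := by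
  obtain ⟨C, hC, hb⟩ := hu.1.exists_derivative_bound hF hc
  obtain ⟨K, hK, hk⟩ := hF.exists_bound
  refine ⟨C ^ 2 + K, by positivity, fun x y => ?_⟩
  have h1 := sq_le_sq' (abs_le.1 (hb x y).1).1 (abs_le.1 (hb x y).1).2
  have h2 := sq_le_sq' (abs_le.1 (hb x y).2.1).1 (abs_le.1 (hb x y).2.1).2
  have h3 := abs_le.1 (hk _ (hu.1.2.2.1 x y)).1
  rw [hamiltonianDensity, abs_le]
  constructor <;> nlinarith [sq_nonneg (pdx u x y), sq_nonneg (pdy u x y), h3.1, h3.2]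

/-- Balance of the vertical momentum between two vertical lines. -/
theorem momentum_balance (hF : BalancedDoubleWell F) (hc : 0 ≤ c)
    (hu : IsTravelingWave F c u) (a b : ℝ) :
    c * ∫ x in a..b, ∫ y, (pdy u x y) ^ 2 =
      (∫ y, momentumDensity u a y) - ∫ y, momentumDensity u b y := by
  obtain ⟨C, hC, hb⟩ := hu.1.exists_derivative_bound hF hc
  obtain ⟨K, hK, hQ⟩ := hu.exists_hamiltonianDensity_bound hF hc
  have hQc := (hu.1.contDiff_hamiltonianDensity hF).continuous
  have l1 : Tendsto (fun m : ℝ => ∫ x in a..b, ∫ y in -m..m, (pdy u x y) ^ 2) atTop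
      (nhds (∫ x in a..b, ∫ y, (pdy u x y) ^ 2)) := by
    refine intervalIntegral.tendsto_integral_filter_of_dominated_convergence (fun _ => 2 * C)
      ?_ ?_ intervalIntegrable_const ?_
    · refine Eventually.of_forall fun m => Continuous.aestronglyMeasurable ?_
      exact intervalIntegral.continuous_parametric_intervalIntegral_of_continuous'
        hu.1.continuous_dy_sq _ _
    · filter_upwards [eventually_ge_atTop 0] with m hm
      refine Eventually.of_forall fun x _ => ?_
      refine (abs_intervalIntegral_le_integral (hu.integrable_dy_sq hF hc x)
        (fun y => sq_nonneg _) (by linarith)).trans ((le_abs_self _).trans ?_)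
      simp_rw [pow_two]
      exact hu.abs_integral_mul_dy_le (fun y => (hb x y).2.1) x
    · exact Eventually.of_forall fun x _ => intervalIntegral_tendsto_integral
        (hu.integrable_dy_sq hF hc x) tendsto_neg_atTop_atBot tendsto_id
  have l2 : ∀ {s : ℝ → ℝ} {l : Filter ℝ}, Tendsto s atTop l →
      (∀ x, Tendsto (fun y => hamiltonianDensity F u x y) l (nhds 0)) →
      Tendsto (fun m : ℝ => ∫ x in a..b, hamiltonianDensity F u x (s m)) atTop (nhds 0) := by
    intro s l hs hl
    have := intervalIntegral.tendsto_integral_filter_of_dominated_convergence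
      (μ := volume) (a := a) (b := b) (l := atTop)
      (F := fun m x => hamiltonianDensity F u x (s m)) (f := fun _ => (0 : ℝ)) (fun _ => K)
      (Eventually.of_forall fun m => (continuous_slice_left hQc (s m)).aestronglyMeasurable)
      (Eventually.of_forall fun m => Eventually.of_forall fun x _ => hQ x (s m))
      intervalIntegrable_const (Eventually.of_forall fun x _ => (hl x).comp hs)
    simpa using this
  have l3 : ∀ x, Tendsto (fun m : ℝ => ∫ y in -m..m, momentumDensity u x y) atTop
      (nhds (∫ y, momentumDensity u x y)) := fun x => intervalIntegral_tendsto_integral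
    (hu.integrable_momentumDensity hF hc x) tendsto_neg_atTop_atBot tendsto_id
  have l4 := (((l2 tendsto_id fun x => (hu.tendsto_hamiltonianDensity_zero hF hc x).1).sub
    (l2 tendsto_neg_atTop_atBot fun x => (hu.tendsto_hamiltonianDensity_zero hF hc x).2)).sub
    (l3 b)).add (l3 a)
  have l5 := l1.const_mul c
  simp_rw [hu.1.box_identity hF] at l5
  rw [tendsto_nhds_unique l5 l4]
  ring

theorem exists_momentum_bound (hF : BalancedDoubleWell F) (hc : 0 ≤ c)
    (hu : IsTravelingWave F c u) : ∃ C, ∀ x, |∫ y, momentumDensity u x y| ≤ C := by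
  obtain ⟨C, hC, hb⟩ := hu.1.exists_derivative_bound hF hc
  exact ⟨2 * C, fun x => hu.abs_integral_mul_dy_le (fun y => (hb x y).1) x⟩

theorem integrable_dy_sq_prod (hF : BalancedDoubleWell F) (hc : 0 < c)
    (hu : IsTravelingWave F c u) : Integrable fun p : ℝ × ℝ => (pdy u p.1 p.2) ^ 2 := by
  obtain ⟨C, hb⟩ := hu.1.exists_derivative_bound hF hc.le
  obtain ⟨D, hD⟩ := hu.exists_momentum_bound hF hc.le
  have hmeas := hu.1.continuous_dy_sq.aestronglyMeasurable (μ := volume)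
  have hmeas' : AEStronglyMeasurable (fun x => ∫ y, (pdy u x y) ^ 2) volume :=
    hmeas.integral_prod_right'
  have hH0 : ∀ x, 0 ≤ ∫ y, (pdy u x y) ^ 2 := fun x => integral_nonneg fun y => sq_nonneg _
  have hH : ∀ x, ‖∫ y, (pdy u x y) ^ 2‖ ≤ 2 * C := fun x => by
    simp_rw [pow_two]
    exact hu.abs_integral_mul_dy_le (fun y => (hb.2 x y).2.1) x
  refine (integrable_prod_iff hmeas).2
    ⟨Eventually.of_forall fun x => hu.integrable_dy_sq hF hc.le x, ?_⟩
  have hnorm : (fun x => ∫ y, ‖(pdy u (x, y).1 (x, y).2) ^ 2‖)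
      = fun x => ∫ y, (pdy u x y) ^ 2 := by
    ext x; congr 1; ext y; exact Real.norm_of_nonneg (sq_nonneg _)
  rw [hnorm]
  refine integrable_of_intervalIntegral_norm_bounded (a := fun i : ℝ => -i) (b := fun i => i)
    (l := atTop) (2 * D / c) (fun i => ?_) tendsto_neg_atTop_atBot tendsto_id ?_
  · exact Measure.integrableOn_of_bounded (M := 2 * C) (by simp) hmeas' (Eventually.of_forall hH)
  · refine Eventually.of_forall fun i => ?_
    simp_rw [Real.norm_of_nonneg (hH0 _)]
    rw [le_div_iff₀' hc, hu.momentum_balance hF hc.le]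
    have h1 := abs_le.1 (hD (-i))
    have h2 := abs_le.1 (hD i)
    linarith [h1.2, h2.1]

end IsTravelingWave

/-! ### Decay of the vertical derivative as `x → +∞` -/

theorem abs_sub_le_of_gradient_bound {w : ℝ → ℝ → ℝ}
    (hw : ContDiff ℝ 1 (fun p : ℝ × ℝ => w p.1 p.2)) {C : ℝ}
    (hC : ∀ x y, |pdx w x y| ≤ C ∧ |pdy w x y| ≤ C) (x y x' y' : ℝ) :
    |w x' y' - w x y| ≤ C * (|x' - x| + |y' - y|) := by
  have h1 := convex_univ.norm_image_sub_le_of_norm_hasDerivWithin_le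
    (fun s _ => (hasDerivAt_pdx hw s y').hasDerivWithinAt) (fun s _ => (hC s y').1)
    (Set.mem_univ x) (Set.mem_univ x')
  have h2 := convex_univ.norm_image_sub_le_of_norm_hasDerivWithin_le
    (fun s _ => (hasDerivAt_pdy hw x s).hasDerivWithinAt) (fun s _ => (hC x s).2)
    (Set.mem_univ y) (Set.mem_univ y')
  simp only [Real.norm_eq_abs] at h1 h2
  calc |w x' y' - w x y| = |(w x' y' - w x y') + (w x y' - w x y)| := by ring_nf
    _ ≤ _ := (abs_add_le _ _).trans (by linarith)

namespace IsTravelingWave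

variable {F : ℝ → ℝ} {c : ℝ} {u : ℝ → ℝ → ℝ}

theorem momentum_antitone (hF : BalancedDoubleWell F) (hc : 0 ≤ c)
    (hu : IsTravelingWave F c u) : Antitone fun x => ∫ y, momentumDensity u x y := by
  intro a b hab
  have h := hu.momentum_balance hF hc a b
  have h0 : 0 ≤ c * ∫ x in a..b, ∫ y, (pdy u x y) ^ 2 := mul_nonneg hc
    (intervalIntegral.integral_nonneg hab fun x _ => integral_nonneg fun y => sq_nonneg _)
  change (∫ y, momentumDensity u b y) ≤ ∫ y, momentumDensity u a y
  linarith

theorem exists_tendsto_momentum (hF : BalancedDoubleWell F) (hc : 0 ≤ c)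
    (hu : IsTravelingWave F c u) :
    ∃ τ, Tendsto (fun x => ∫ y, momentumDensity u x y) atTop (nhds τ) := by
  obtain ⟨D, hD⟩ := hu.exists_momentum_bound hF hc
  refine ⟨_, tendsto_atTop_ciInf (hu.momentum_antitone hF hc) ⟨-D, ?_⟩⟩
  rintro _ ⟨x, rfl⟩
  exact (abs_le.1 (hD x)).1

theorem integrable_integral_dy_sq (hF : BalancedDoubleWell F) (hc : 0 < c)
    (hu : IsTravelingWave F c u) : Integrable fun x => ∫ y, (pdy u x y) ^ 2 :=
  (hu.integrable_dy_sq_prod hF hc).integral_prod_left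

theorem eventually_dy_le (hF : BalancedDoubleWell F) (hc : 0 < c)
    (hu : IsTravelingWave F c u) {ε : ℝ} (hε : 0 < ε) :
    ∀ᶠ x in atTop, ∀ y, |pdy u x y| ≤ ε := by
  obtain ⟨C, hC, hb⟩ := hu.1.exists_derivative_bound hF hc.le
  obtain ⟨τ, hτ⟩ := hu.exists_tendsto_momentum hF hc.le
  set r := ε / (4 * C) with hr
  have hr0 : 0 < r := by positivity
  have hdiff : Tendsto (fun x => (∫ y, momentumDensity u x y) - ∫ y, momentumDensity u (x + r) y)
      atTop (nhds 0) := by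
    simpa using hτ.sub (hτ.comp (tendsto_atTop_add_const_right _ r tendsto_id))
  have hpos : 0 < c * (r * (r * (ε / 2) ^ 2)) := by positivity
  filter_upwards [hdiff.eventually (gt_mem_nhds hpos)] with x hx y
  rw [abs_of_pos (hu.1.2.2.2 x y)]
  by_contra! hlt
  rw [← hu.momentum_balance hF hc.le] at hx
  have hlow : ∀ x' ∈ Set.Icc x (x + r), r * (ε / 2) ^ 2 ≤ ∫ y, (pdy u x' y) ^ 2 := by
    intro x' hx'
    have h1 : ∀ y' ∈ Set.Icc y (y + r), (ε / 2) ^ 2 ≤ (pdy u x' y') ^ 2 := by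
      intro y' hy'
      have h2 := abs_sub_le_of_gradient_bound hu.1.contDiff_dy_one
        (fun x y => (hb x y).2.2.2.2) x y x' y'
      rw [abs_of_nonneg (a := x' - x) (by linarith [hx'.1]),
        abs_of_nonneg (a := y' - y) (by linarith [hy'.1])] at h2
      have h3 : C * (x' - x + (y' - y)) ≤ C * (2 * r) :=
        mul_le_mul_of_nonneg_left (by linarith [hx'.2, hy'.2]) hC.le
      have h4 : C * (2 * r) = ε / 2 := by rw [hr]; field_simp; ring
      exact pow_le_pow_left₀ (by positivity) (by linarith [(abs_le.1 (h2.trans h3)).1]) 2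
    have h5 := intervalIntegral.integral_mono_on (μ := volume) (a := y) (b := y + r)
      (g := fun y => (pdy u x' y) ^ 2) (by linarith)
      (intervalIntegrable_const (c := (ε / 2) ^ 2))
      ((continuous_slice_right (g := fun x y => (pdy u x y) ^ 2) hu.1.continuous_dy_sq x').intervalIntegrable _ _) h1
    have h6 := abs_intervalIntegral_le_integral (hu.integrable_dy_sq hF hc.le x')
      (fun y => sq_nonneg _) (a := y) (b := y + r) (by linarith)
    rw [intervalIntegral.integral_const] at h5
    simp only [add_sub_cancel_left, smul_eq_mul] at h5
    exact h5.trans ((le_abs_self _).trans h6)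
  have h7 := intervalIntegral.integral_mono_on (μ := volume) (a := x) (b := x + r) (by linarith)
    (intervalIntegrable_const (c := r * (ε / 2) ^ 2))
    ((hu.integrable_integral_dy_sq hF hc).intervalIntegrable) hlow
  rw [intervalIntegral.integral_const] at h7
  simp only [add_sub_cancel_left, smul_eq_mul] at h7
  exact absurd hx (not_lt.2 (mul_le_mul_of_nonneg_left h7 hc.le))

theorem eventually_gradient_dy_le (hF : BalancedDoubleWell F) (hc : 0 < c)
    (hu : IsTravelingWave F c u) {ε : ℝ} (hε : 0 < ε) :
    ∀ᶠ x in atTop, ∀ y, |pdx (pdy u) x y| ≤ ε ∧ |pdy (pdy u) x y| ≤ ε := by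
  obtain ⟨C, hC, hgrad⟩ := exists_gradient_bound hc.le
  obtain ⟨K, hK, hb⟩ := hF.exists_bound
  set η := ε / (C * (1 + K)) with hη
  have hη0 : 0 < η := by positivity
  obtain ⟨X, hX⟩ := eventually_atTop.1 (hu.eventually_dy_le hF hc hη0)
  filter_upwards [eventually_ge_atTop (X + 1)] with x hx y
  have hX' : ∀ x', |x' - x| ≤ 1 → ∀ y', |pdy u x' y'| ≤ η := fun x' hx' =>
    hX x' (by linarith [(abs_le.1 hx').1])
  have h := hgrad (pdy u) hu.1.contDiff_dy x y η (K * η) (fun x' y' hx' _ => hX' x' hx' y')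
    fun x' y' hx' _ => by
      rw [hu.1.driftLaplacian_dy hF, abs_mul]
      exact mul_le_mul (hb _ (hu.1.2.2.1 _ _)).2.2 (hX' x' hx' y') (abs_nonneg _) hK.le
  have he : C * (η + K * η) = ε := by rw [hη]; field_simp
  rwa [he] at h

end IsTravelingWave

/-! ### Asymptotic conservation of the horizontal energy -/

/-- The energy `F(u) - uₓ² / 2` of a horizontal slice. -/
noncomputable def sliceEnergy (F : ℝ → ℝ) (u : ℝ → ℝ → ℝ) (x y : ℝ) : ℝ :=
  F (u x y) - (1 / 2) * (pdx u x y) ^ 2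

/-- A bounded function cannot satisfy `v'' + k v'² ≥ m > 0` on a long interval. -/
theorem length_le_of_le_snd_add_sq {v v' v'' : ℝ → ℝ} {k m C a L : ℝ} (hk : 0 ≤ k) (hm : 0 ≤ m)
    (hC : 0 ≤ C) (hL : 0 < L) (hv : ∀ t, HasDerivAt v (v' t) t)
    (hv' : ∀ t, HasDerivAt v' (v'' t) t) (h1 : ∀ t, |v t| ≤ 1) (h2 : ∀ t, |v' t| ≤ C)
    (h3 : ∀ t ∈ Set.Icc a (a + L), m ≤ v'' t + k * (v' t) ^ 2) :
    m * exp (-k) * L ≤ 2 * C * exp k := by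
  have hd : ∀ t, HasDerivAt (fun t => v' t * exp (k * v t))
      (exp (k * v t) * (v'' t + k * (v' t) ^ 2)) t := fun t =>
    ((hv' t).mul ((hv t).const_mul k).exp).congr_deriv (by ring)
  obtain ⟨ξ, hξ, he⟩ := exists_hasDerivAt_eq_slope _ _ (show a < a + L by linarith)
    (fun s _ => (hd s).continuousAt.continuousWithinAt) (fun s _ => hd s)
  have hb : ∀ t, |v' t * exp (k * v t)| ≤ C * exp k := fun t => by
    rw [abs_mul, abs_of_pos (exp_pos _)]
    refine mul_le_mul (h2 t) (exp_le_exp.2 ?_) (exp_pos _).le hC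
    nlinarith [(abs_le.1 (h1 t)).2]
  have hlow : m * exp (-k) ≤ exp (k * v ξ) * (v'' ξ + k * (v' ξ) ^ 2) := by
    rw [mul_comm m]
    refine mul_le_mul (exp_le_exp.2 ?_) (h3 ξ ⟨hξ.1.le, hξ.2.le⟩) hm (exp_pos _).le
    nlinarith [(abs_le.1 (h1 ξ)).1]
  rw [he, add_sub_cancel_left, le_div_iff₀ hL] at hlow
  linarith [(abs_le.1 (hb a)).1, (abs_le.1 (hb (a + L))).2]

theorem BalancedDoubleWell.exists_deriv_lower_bound {F : ℝ → ℝ} (hF : BalancedDoubleWell F)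
    {a b : ℝ} (ha : 0 < a) (hb : b < F 0) :
    ∃ m > 0, ∀ s ∈ Set.Icc (-1 : ℝ) 0, a ≤ F s → F s ≤ b → m ≤ deriv F s := by
  have hcomp : IsCompact (Set.Icc (-1 : ℝ) 0 ∩ F ⁻¹' Set.Icc a b) :=
    isCompact_Icc.inter_right (isClosed_Icc.preimage hF.1.continuous)
  obtain ⟨m, hm, h⟩ := hcomp.exists_forall_le' (f := deriv F)
    hF.contDiff_deriv_s8.continuous.continuousOn (a := 0) (fun s hs => by
      refine hF.2.2.2.2.2.1 s ⟨lt_of_le_of_ne hs.1.1 ?_, lt_of_le_of_ne hs.1.2 ?_⟩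
      · rintro rfl
        have := hs.2.1
        rw [hF.2.2.2.2.2.2.2.1] at this
        linarith
      · rintro rfl
        exact absurd hs.2.2 (not_le.2 hb))
  exact ⟨m, hm, fun s hs h1 h2 => h s ⟨hs, h1, h2⟩⟩

namespace IsSolution

variable {F : ℝ → ℝ} {c : ℝ} {u : ℝ → ℝ → ℝ}

theorem continuous_sliceEnergy (hF : BalancedDoubleWell F) (hu : IsSolution F c u) :
    Continuous fun p : ℝ × ℝ => sliceEnergy F u p.1 p.2 :=
  (hF.1.continuous.comp hu.1.continuous).sub ((hu.contDiff_dx.continuous.pow 2).const_mul _)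

theorem hasDerivAt_sliceEnergy (hF : BalancedDoubleWell F) (hu : IsSolution F c u) (x y : ℝ) :
    HasDerivAt (fun x => sliceEnergy F u x y)
      (pdx u x y * (pdy (pdy u) x y + c * pdy u x y)) x := by
  have h1 := (hF.hasDerivAt (u x y)).comp x (hasDerivAt_pdx hu.contDiff_one x y)
  have h2 := ((hasDerivAt_pdx hu.contDiff_dx_one x y).pow 2).const_mul (1 / 2)
  refine (h1.sub h2).congr_deriv ?_
  have e := hu.2.1 x y
  change pdx (pdx u) x y + pdy (pdy u) x y + _ = _ at e
  rw [← e]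
  simp
  ring

end IsSolution

namespace IsTravelingWave

variable {F : ℝ → ℝ} {c : ℝ} {u : ℝ → ℝ → ℝ}

theorem eventually_dyy_add_le (hF : BalancedDoubleWell F) (hc : 0 < c)
    (hu : IsTravelingWave F c u) {ε : ℝ} (hε : 0 < ε) :
    ∀ᶠ x in atTop, ∀ y, |pdy (pdy u) x y + c * pdy u x y| ≤ ε := by
  have hη : 0 < ε / (1 + c) := by positivity
  filter_upwards [hu.eventually_dy_le hF hc hη, hu.eventually_gradient_dy_le hF hc hη]
    with x h1 h2 y
  have h3 : |c * pdy u x y| ≤ c * (ε / (1 + c)) := by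
    rw [abs_mul, abs_of_pos hc]
    exact mul_le_mul_of_nonneg_left (h1 y) hc.le
  have h4 : ε / (1 + c) + c * (ε / (1 + c)) = ε := by field_simp
  linarith [abs_add_le (pdy (pdy u) x y) (c * pdy u x y), (h2 y).2]

theorem eventually_sliceEnergy_sub_le (hF : BalancedDoubleWell F) (hc : 0 < c)
    (hu : IsTravelingWave F c u) {ε L : ℝ} (hε : 0 < ε) (hL : 0 < L) :
    ∀ᶠ x in atTop, ∀ y, ∀ x' ∈ Set.Icc x (x + L),
      |sliceEnergy F u x' y - sliceEnergy F u x y| ≤ ε := by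
  obtain ⟨C, hC, hb⟩ := hu.1.exists_derivative_bound hF hc.le
  have hη : 0 < ε / (C * L) := by positivity
  obtain ⟨X, hX⟩ := eventually_atTop.1 (hu.eventually_dyy_add_le hF hc hη)
  filter_upwards [eventually_ge_atTop X] with x hx y x' hx'
  have h := (convex_Ici X).norm_image_sub_le_of_norm_hasDerivWithin_le
    (f := fun x => sliceEnergy F u x y) (C := C * (ε / (C * L)))
    (fun s _ => (hu.1.hasDerivAt_sliceEnergy hF s y).hasDerivWithinAt)
    (fun s hs => by
      rw [norm_mul]
      exact mul_le_mul (hb s y).1 (hX s hs y) (norm_nonneg _) hC.le)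
    (Set.mem_Ici.2 hx) (Set.mem_Ici.2 (hx.trans hx'.1))
  rw [Real.norm_eq_abs, Real.norm_of_nonneg (by linarith [hx'.1])] at h
  refine h.trans ?_
  have h1 : C * (ε / (C * L)) * L = ε := by field_simp
  exact (mul_le_mul_of_nonneg_left (by linarith [hx'.2]) (by positivity)).trans_eq h1

theorem eventually_neg_le_sliceEnergy (hF : BalancedDoubleWell F) (hc : 0 < c)
    (hu : IsTravelingWave F c u) {ε : ℝ} (hε : 0 < ε) :
    ∀ᶠ x in atTop, ∀ y, -ε ≤ sliceEnergy F u x y := by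
  have hL : 0 < 3 / √ε := by positivity
  filter_upwards [hu.eventually_sliceEnergy_sub_le hF hc (half_pos hε) hL] with x hx y
  by_contra! hlt
  obtain ⟨ξ, hξ, he⟩ := exists_hasDerivAt_eq_slope (fun x => u x y) (fun x => pdx u x y)
    (show x < x + 3 / √ε by linarith)
    (fun s _ => (hasDerivAt_pdx hu.1.contDiff_one s y).continuousAt.continuousWithinAt)
    (fun s _ => hasDerivAt_pdx hu.1.contDiff_one s y)
  have h1 := (abs_le.1 (hx y ξ ⟨hξ.1.le, hξ.2.le⟩)).2
  have h2 := hF.nonneg_s8 (hu.1.2.2.1 ξ y)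
  have h3 : ε ≤ (pdx u ξ y) ^ 2 := by
    simp only [sliceEnergy] at h1 hlt
    linarith
  rw [add_sub_cancel_left, eq_div_iff hL.ne'] at he
  have h4 : (pdx u ξ y * (3 / √ε)) ^ 2 ≤ 2 ^ 2 := by
    rw [he]
    have h5 := abs_le.1 (hu.1.2.2.1 (x + 3 / √ε) y)
    have h6 := abs_le.1 (hu.1.2.2.1 x y)
    exact sq_le_sq' (by linarith [h5.1, h6.2]) (by linarith [h5.2, h6.1])
  rw [mul_pow, div_pow, Real.sq_sqrt hε.le] at h4
  have h7 : ε * (3 ^ 2 / ε) ≤ (pdx u ξ y) ^ 2 * (3 ^ 2 / ε) :=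
    mul_le_mul_of_nonneg_right h3 (by positivity)
  have h8 : ε * (3 ^ 2 / ε) = 9 := by field_simp; norm_num
  linarith

theorem tendsto_sliceEnergy_atBot (hF : BalancedDoubleWell F) (hc : 0 ≤ c)
    (hu : IsTravelingWave F c u) (x : ℝ) :
    Tendsto (fun y => sliceEnergy F u x y) atBot (nhds 0) := by
  have h1 := (hu.1.tendsto_gradient_zero hF hc
    (fun t => tendsto_atBot_add_const_right _ t tendsto_id) hu.2.2 x).1
  have h2 := (hF.1.continuous.tendsto (-1)).comp (hu.2.2 x)
  rw [hF.2.2.2.2.2.2.2.1] at h2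
  have h3 := h2.sub ((h1.pow 2).const_mul (1 / 2))
  norm_num at h3
  simpa [sliceEnergy] using h3

theorem eventually_sliceEnergy_le (hF : BalancedDoubleWell F) (hc : 0 < c)
    (hu : IsTravelingWave F c u) {ε : ℝ} (hε : 0 < ε) :
    ∀ᶠ x in atTop, ∀ y, sliceEnergy F u x y ≤ ε := by
  rcases le_or_gt (F 0) ε with hF0 | hF0
  · refine Eventually.of_forall fun x y => ?_
    have h1 := hF.le_zero (hu.1.2.2.1 x y)
    simp only [sliceEnergy]
    nlinarith [sq_nonneg (pdx u x y)]
  obtain ⟨C, hC, hb⟩ := hu.1.exists_derivative_bound hF hc.le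
  obtain ⟨K, hK, hKb⟩ := hF.exists_bound
  obtain ⟨m, hm, hmb⟩ := hF.exists_deriv_lower_bound (a := 3 / 8 * ε) (b := 6 / 8 * ε)
    (by positivity) (by linarith)
  set k := 4 * (K + 1) / ε with hk
  have hk0 : 0 < k := by positivity
  set m₀ := min 1 m with hm₀
  have hm0 : 0 < m₀ := lt_min one_pos hm
  set L := (2 * C * exp k + 1) / (m₀ / 2 * exp (-k)) with hL
  have hL0 : 0 < L := by positivity
  obtain ⟨X, hX⟩ := eventually_atTop.1 (hu.eventually_dyy_add_le hF hc (half_pos hm0))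
  filter_upwards [hu.eventually_sliceEnergy_sub_le hF hc (ε := ε / 8) (by positivity) hL0,
    eventually_ge_atTop X] with x hx hXx y
  by_contra! hlt
  obtain ⟨y₁, hy₁, hy₁'⟩ := (((hu.tendsto_sliceEnergy_atBot hF hc.le x).eventually
    (gt_mem_nhds (half_pos hε))).and (eventually_le_atBot y)).exists
  obtain ⟨z, hz, hzE⟩ := intermediate_value_Icc hy₁' (f := fun y => sliceEnergy F u x y)
    (continuous_slice_right (hu.1.continuous_sliceEnergy hF) x).continuousOn
    (show ε / 2 ∈ _ from ⟨hy₁.le, by linarith⟩)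
  simp only at hzE
  have key := length_le_of_le_snd_add_sq (v := fun x => u x z) (a := x) hk0.le (half_pos hm0).le
    hC.le hL0 (fun t => hasDerivAt_pdx hu.1.contDiff_one t z)
    (fun t => hasDerivAt_pdx hu.1.contDiff_dx_one t z) (fun t => hu.1.2.2.1 t z)
    (fun t => (hb t z).1) (fun t ht => by
      have e := hu.1.2.1 t z
      change pdx (pdx u) t z + pdy (pdy u) t z + _ = _ at e
      have h1 := (abs_le.1 (hX t (hXx.trans ht.1) z)).2
      suffices h : m₀ ≤ deriv F (u t z) + k * (pdx u t z) ^ 2 by linarith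
      have hE1 := abs_le.1 (hx z t ht)
      have hE2 := abs_le.1 (hx y t ht)
      have hmono : u t z ≤ u t y := (hu.1.monotone t).monotone hz.2
      have hv := abs_le.1 (hu.1.2.2.1 t z)
      have hw := abs_le.1 (hu.1.2.2.1 t y)
      have hfast : ε / 4 ≤ (pdx u t z) ^ 2 → m₀ ≤ deriv F (u t z) + k * (pdx u t z) ^ 2 := by
        intro hq
        have h2 : k * (ε / 4) ≤ k * (pdx u t z) ^ 2 := mul_le_mul_of_nonneg_left hq hk0.le
        have h3 : k * (ε / 4) = K + 1 := by rw [hk]; field_simp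
        linarith [(abs_le.1 (hKb _ (hu.1.2.2.1 t z)).2.1).1, min_le_left 1 m]
      rw [hzE] at hE1
      simp only [sliceEnergy] at hE1 hE2 hlt
      rcases le_total 0 (u t z) with h0 | h0
      · have h4 := hF.antitoneOn_s8 ⟨h0, hv.2⟩ ⟨h0.trans hmono, hw.2⟩ hmono
        exact hfast (by nlinarith [sq_nonneg (pdx u t y), hE1.2, hE2.1])
      · rcases le_total (6 / 8 * ε) (F (u t z)) with h5 | h5
        · exact hfast (by linarith [hE1.2])
        · have h6 := hmb _ ⟨hv.1, h0⟩ (by nlinarith [sq_nonneg (pdx u t z), hE1.1]) h5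
          have h7 : 0 ≤ k * (pdx u t z) ^ 2 := by positivity
          linarith [min_le_right 1 m])
  have h8 : m₀ / 2 * exp (-k) * L = 2 * C * exp k + 1 := by rw [hL]; field_simp
  linarith

theorem eventually_abs_sliceEnergy_le (hF : BalancedDoubleWell F) (hc : 0 < c)
    (hu : IsTravelingWave F c u) {ε : ℝ} (hε : 0 < ε) :
    ∀ᶠ x in atTop, ∀ y, |sliceEnergy F u x y| ≤ ε := by
  filter_upwards [hu.eventually_neg_le_sliceEnergy hF hc hε, hu.eventually_sliceEnergy_le hF hc hε]
    with x h1 h2 y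
  exact abs_le.2 ⟨h1 y, h2 y⟩

end IsTravelingWave

/-! ### Asymptotic value of the momentum -/

theorem IsPreconnected.forall_pos_or_forall_neg {S : Set ℝ} (hS : IsPreconnected S) {f : ℝ → ℝ}
    (hf : ContinuousOn f S) (h0 : ∀ y ∈ S, f y ≠ 0) : (∀ y ∈ S, 0 < f y) ∨ ∀ y ∈ S, f y < 0 := by
  by_contra! h
  obtain ⟨⟨a, ha, ha'⟩, b, hb, hb'⟩ := h
  obtain ⟨z, hz, hz'⟩ := hS.intermediate_value ha hb hf ⟨ha', hb'⟩
  exact h0 z hz hz'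

theorem abs_sub_le_of_abs_sq_sub_sq_le {p q η : ℝ} (hp : 0 ≤ p) (hq : 0 ≤ q) (hη : 0 ≤ η)
    (h : |q ^ 2 - p ^ 2| ≤ η ^ 2) : |p - q| ≤ η := by
  obtain ⟨h1, h2⟩ := abs_le.1 h
  rw [abs_le]
  constructor <;> nlinarith

/-- The slope of the standing wave at height `s`. -/
noncomputable def standingSlope (F : ℝ → ℝ) (s : ℝ) : ℝ := √(2 * F s)

theorem continuous_standingSlope {F : ℝ → ℝ} (hF : BalancedDoubleWell F) :
    Continuous (standingSlope F) :=
  (hF.1.continuous.const_mul 2).sqrt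

namespace IsTravelingWave

variable {F : ℝ → ℝ} {c : ℝ} {u : ℝ → ℝ → ℝ}

theorem eventually_dx_near_standingSlope (hF : BalancedDoubleWell F) (hc : 0 < c)
    (hu : IsTravelingWave F c u) {η : ℝ} (hη : 0 < η) :
    ∀ᶠ x in atTop, ∃ σ : ℝ, (σ = 1 ∨ σ = -1) ∧
      ∀ y, |pdx u x y - σ * standingSlope F (u x y)| ≤ η := by
  set θ := η / 3 with hθ
  have hθ0 : 0 < θ := by positivity
  filter_upwards [hu.eventually_abs_sliceEnergy_le hF hc (ε := θ ^ 2 / 2) (by positivity)]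
    with x hx
  have hq0 : ∀ y, 0 ≤ standingSlope F (u x y) := fun y => sqrt_nonneg _
  have hqsq : ∀ y, (standingSlope F (u x y)) ^ 2 = 2 * F (u x y) := fun y =>
    sq_sqrt (by linarith [hF.nonneg_s8 (hu.1.2.2.1 x y)])
  have hdiff : ∀ y, |(standingSlope F (u x y)) ^ 2 - (pdx u x y) ^ 2| ≤ θ ^ 2 := fun y => by
    have h := abs_le.1 (hx y)
    simp only [sliceEnergy] at h
    rw [hqsq, abs_le]
    constructor <;> linarith [h.1, h.2]
  set S := {y | θ ^ 2 / 2 < F (u x y)} with hS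
  have hSconn : IsPreconnected S := by
    refine Set.OrdConnected.isPreconnected ⟨fun a ha b hb z hz => ?_⟩
    exact hF.lt_of_mem_Icc (abs_le.1 (hu.1.2.2.1 x a)).1 (abs_le.1 (hu.1.2.2.1 x b)).2
      ⟨(hu.1.monotone x).monotone hz.1, (hu.1.monotone x).monotone hz.2⟩ ha hb
  have hoff : ∀ y ∉ S, ∀ σ : ℝ, (σ = 1 ∨ σ = -1) →
      |pdx u x y - σ * standingSlope F (u x y)| ≤ η := by
    intro y hy σ hσ
    have h1 : F (u x y) ≤ θ ^ 2 / 2 := not_lt.1 hy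
    have h2 := hqsq y
    have h3 := abs_le.1 (hdiff y)
    have hq : standingSlope F (u x y) ≤ θ := by nlinarith [hq0 y]
    have hp : |pdx u x y| ≤ 2 * θ := abs_le_of_sq_le_sq (by nlinarith) (by positivity)
    have hp' := abs_le.1 hp
    rcases hσ with rfl | rfl <;> rw [abs_le] <;> constructor <;> linarith [hq0 y, hp'.1, hp'.2]
  have hne : ∀ y ∈ S, pdx u x y ≠ 0 := by
    intro y hy h0
    have h1 := abs_le.1 (hdiff y)
    rw [h0, hqsq] at h1
    have hy' : θ ^ 2 / 2 < F (u x y) := hy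
    linarith [h1.2]
  rcases hSconn.forall_pos_or_forall_neg
    (continuous_slice_right hu.1.contDiff_dx.continuous x).continuousOn hne with h | h
  · refine ⟨1, Or.inl rfl, fun y => ?_⟩
    by_cases hy : y ∈ S
    · rw [one_mul]
      linarith [abs_sub_le_of_abs_sq_sub_sq_le (h y hy).le (hq0 y) hθ0.le (hdiff y)]
    · exact hoff y hy 1 (Or.inl rfl)
  · refine ⟨-1, Or.inr rfl, fun y => ?_⟩
    by_cases hy : y ∈ S
    · have h1 := abs_sub_le_of_abs_sq_sub_sq_le (p := -pdx u x y) (by linarith [h y hy]) (hq0 y)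
        hθ0.le (by rw [neg_sq]; exact hdiff y)
      rw [← abs_neg]
      have h2 : -(pdx u x y - -1 * standingSlope F (u x y))
        = -pdx u x y - standingSlope F (u x y) := by ring
      rw [h2]; linarith
    · exact hoff y hy (-1) (Or.inr rfl)

theorem abs_standingSlope_le (hF : BalancedDoubleWell F) (hu : IsTravelingWave F c u) (x y : ℝ) :
    |standingSlope F (u x y)| ≤ standingSlope F 0 := by
  rw [standingSlope, abs_of_nonneg (sqrt_nonneg _)]
  exact sqrt_le_sqrt (by linarith [hF.le_zero (hu.1.2.2.1 x y)])

theorem integrable_standingSlope_mul_dy (hF : BalancedDoubleWell F) (hu : IsTravelingWave F c u)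
    (x : ℝ) : Integrable fun y => standingSlope F (u x y) * pdy u x y :=
  hu.integrable_mul_dy ((continuous_standingSlope hF).comp
    (continuous_slice_right hu.1.1.continuous x)) (hu.abs_standingSlope_le hF x) x

theorem integral_standingSlope_mul_dy (hF : BalancedDoubleWell F) (hu : IsTravelingWave F c u)
    (x : ℝ) : ∫ y, standingSlope F (u x y) * pdy u x y =
      ∫ s in (-1 : ℝ)..1, standingSlope F s := by
  have hd : ∀ s, HasDerivAt (fun s => ∫ t in (-1 : ℝ)..s, standingSlope F t)
      (standingSlope F s) s := fun s =>
    ((continuous_standingSlope hF).integral_hasStrictDerivAt (-1) s).hasDerivAt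
  have hcont : Continuous fun s => ∫ t in (-1 : ℝ)..s, standingSlope F t :=
    continuous_iff_continuousAt.2 fun s => (hd s).continuousAt
  rw [integral_of_hasDerivAt_of_tendsto
    (fun y => (hd (u x y)).comp y (hasDerivAt_pdy hu.1.contDiff_one x y))
    (hu.integrable_standingSlope_mul_dy hF x) ((hcont.tendsto (-1)).comp (hu.2.2 x))
    ((hcont.tendsto 1).comp (hu.2.1 x)), intervalIntegral.integral_same, sub_zero]

theorem abs_momentum_sub_le (hF : BalancedDoubleWell F) (hc : 0 ≤ c)
    (hu : IsTravelingWave F c u) {x σ η : ℝ}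
    (h : ∀ y, |pdx u x y - σ * standingSlope F (u x y)| ≤ η) :
    |(∫ y, momentumDensity u x y) - σ * ∫ s in (-1 : ℝ)..1, standingSlope F s| ≤ 2 * η := by
  have h1 := hu.abs_integral_mul_dy_le h x
  have h2 : ∀ y, (pdx u x y - σ * standingSlope F (u x y)) * pdy u x y
      = momentumDensity u x y - σ * (standingSlope F (u x y) * pdy u x y) := fun y => by
    rw [momentumDensity]; ring
  simp_rw [h2] at h1
  rwa [integral_sub (hu.integrable_momentumDensity hF hc x)
    ((hu.integrable_standingSlope_mul_dy hF x).const_mul σ), integral_const_mul,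
    hu.integral_standingSlope_mul_dy hF] at h1

theorem momentum_limit_eq_or_eq_neg (hF : BalancedDoubleWell F) (hc : 0 < c)
    (hu : IsTravelingWave F c u) {τ : ℝ}
    (hτ : Tendsto (fun x => ∫ y, momentumDensity u x y) atTop (nhds τ)) :
    τ = (∫ s in (-1 : ℝ)..1, standingSlope F s) ∨
      τ = -∫ s in (-1 : ℝ)..1, standingSlope F s := by
  set e := ∫ s in (-1 : ℝ)..1, standingSlope F s with he
  by_contra! h
  have h1 : 0 < |τ - e| := abs_pos.2 (sub_ne_zero.2 h.1)
  have h2 : 0 < |τ + e| := abs_pos.2 (by rw [← sub_neg_eq_add]; exact sub_ne_zero.2 h.2)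
  set η := min |τ - e| |τ + e| / 3 with hη
  have hη0 : 0 < η := by have := lt_min h1 h2; positivity
  have hη1 : 3 * η ≤ |τ - e| := by rw [hη]; linarith [min_le_left |τ - e| |τ + e|]
  have hη2 : 3 * η ≤ |τ + e| := by rw [hη]; linarith [min_le_right |τ - e| |τ + e|]
  obtain ⟨x, ⟨σ, hσ, hx⟩, hx'⟩ := ((hu.eventually_dx_near_standingSlope hF hc hη0).and
    (Metric.tendsto_nhds.1 hτ η hη0)).exists
  have h3 := hu.abs_momentum_sub_le hF hc.le hx
  rw [Real.dist_eq, abs_sub_comm] at hx'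
  rw [← he] at h3
  rcases hσ with rfl | rfl
  · rw [one_mul] at h3
    linarith [abs_sub_le τ (∫ y, momentumDensity u x y) e]
  · rw [neg_one_mul] at h3
    have := abs_sub_le τ (∫ y, momentumDensity u x y) (-e)
    rw [sub_neg_eq_add τ] at this
    linarith

end IsTravelingWave

/-! ### Reflection in `x` -/

section Reflection

variable {F : ℝ → ℝ} {c : ℝ} {u : ℝ → ℝ → ℝ}

theorem pdx_reflect (w : ℝ → ℝ → ℝ) (x y : ℝ) :
    pdx (fun x y => w (-x) y) x y = -pdx w (-x) y :=
  deriv_comp_neg (fun t => w t y) x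

theorem pdxx_reflect (w : ℝ → ℝ → ℝ) (x y : ℝ) :
    pdxx (fun x y => w (-x) y) x y = pdxx w (-x) y := by
  simp only [pdxx, pdx_reflect]
  rw [deriv.fun_neg, deriv_comp_neg (fun t => pdx w t y), neg_neg]

theorem momentumDensity_reflect (w : ℝ → ℝ → ℝ) (x y : ℝ) :
    momentumDensity (fun x y => w (-x) y) x y = -momentumDensity w (-x) y := by
  rw [momentumDensity, pdx_reflect, neg_mul]
  rfl

theorem IsTravelingWave.reflect (hu : IsTravelingWave F c u) :
    IsTravelingWave F c fun x y => u (-x) y := by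
  refine ⟨⟨?_, fun x y => ?_, fun x y => hu.1.2.2.1 (-x) y, fun x y => hu.1.2.2.2 (-x) y⟩,
    fun x => hu.2.1 (-x), fun x => hu.2.2 (-x)⟩
  · exact hu.1.1.comp (contDiff_fst.neg.prodMk contDiff_snd)
  · rw [pdxx_reflect]
    exact hu.1.2.1 (-x) y

end Reflection

namespace IsTravelingWave

variable {F : ℝ → ℝ} {c : ℝ} {u : ℝ → ℝ → ℝ}

theorem integral_dy_sq_pos (hF : BalancedDoubleWell F) (hc : 0 < c)
    (hu : IsTravelingWave F c u) : 0 < ∫ p : ℝ × ℝ, (pdy u p.1 p.2) ^ 2 := by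
  rw [integral_pos_iff_support_of_nonneg (fun p => sq_nonneg _) (hu.integrable_dy_sq_prod hF hc)]
  have : Function.support (fun p : ℝ × ℝ => (pdy u p.1 p.2) ^ 2) = Set.univ :=
    Set.eq_univ_of_forall fun p => pow_ne_zero 2 (hu.1.2.2.2 p.1 p.2).ne'
  rw [this]
  exact isOpen_univ.measure_pos _ Set.univ_nonempty

/-- The total dissipation equals twice the energy of the standing wave, and the momentum tends to
minus this energy as `x → +∞`. -/
theorem total_balance_and_momentum_limit (hF : BalancedDoubleWell F) (hc : 0 < c)
    (hu : IsTravelingWave F c u) :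
    c * ∫ p : ℝ × ℝ, (pdy u p.1 p.2) ^ 2 = 2 * ∫ s in (-1 : ℝ)..1, standingSlope F s ∧
    Tendsto (fun x => ∫ y, momentumDensity u x y) atTop
      (nhds (-∫ s in (-1 : ℝ)..1, standingSlope F s)) := by
  obtain ⟨τ, hτ⟩ := hu.exists_tendsto_momentum hF hc.le
  obtain ⟨τ', hτ'⟩ := hu.reflect.exists_tendsto_momentum hF hc.le
  have e1 := hu.momentum_limit_eq_or_eq_neg hF hc hτ
  have e2 := hu.reflect.momentum_limit_eq_or_eq_neg hF hc hτ'
  have hpos := mul_pos hc (hu.integral_dy_sq_pos hF hc)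
  have l1 : Tendsto (fun n : ℝ => c * ∫ x in -n..n, ∫ y, (pdy u x y) ^ 2) atTop
      (nhds (c * ∫ p : ℝ × ℝ, (pdy u p.1 p.2) ^ 2)) := by
    have := intervalIntegral_tendsto_integral (hu.integrable_integral_dy_sq hF hc)
      tendsto_neg_atTop_atBot tendsto_id
    rw [← integral_prod (fun p : ℝ × ℝ => (pdy u p.1 p.2) ^ 2)
      (hu.integrable_dy_sq_prod hF hc)] at this
    exact this.const_mul c
  simp_rw [momentumDensity_reflect, integral_neg] at hτ'
  simp_rw [hu.momentum_balance hF hc.le] at l1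
  have l2 := tendsto_nhds_unique l1 ((by simpa using hτ'.neg :
    Tendsto (fun n : ℝ => ∫ y, momentumDensity u (-n) y) atTop (nhds (-τ'))).sub hτ)
  have he : 0 ≤ ∫ s in (-1 : ℝ)..1, standingSlope F s :=
    intervalIntegral.integral_nonneg (by norm_num) fun s _ => sqrt_nonneg _
  rw [l2] at hpos ⊢
  rcases e1 with e1 | e1 <;> rcases e2 with e2 | e2 <;> rw [e1, e2] at hpos <;>
    first | exact absurd hpos (by linarith) | skip
  exact ⟨by rw [e1, e2]; ring, e1 ▸ hτ⟩

theorem eventually_dx_le (hF : BalancedDoubleWell F) (hc : 0 < c)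
    (hu : IsTravelingWave F c u) {η : ℝ} (hη : 0 < η) :
    ∀ᶠ x in atTop, ∀ y, pdx u x y ≤ -standingSlope F (u x y) + η := by
  obtain ⟨hbal, hlim⟩ := hu.total_balance_and_momentum_limit hF hc
  have hpos := mul_pos hc (hu.integral_dy_sq_pos hF hc)
  set e := ∫ s in (-1 : ℝ)..1, standingSlope F s with he
  have he0 : 0 < e := by linarith
  have hθ : 0 < min η (e / 3) := by positivity
  filter_upwards [hu.eventually_dx_near_standingSlope hF hc hθ, Metric.tendsto_nhds.1 hlim e he0]
    with x ⟨σ, hσ, h1⟩ h2 y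
  rcases hσ with rfl | rfl
  · have h3 := hu.abs_momentum_sub_le hF hc.le h1
    rw [← he, one_mul] at h3
    rw [Real.dist_eq] at h2
    linarith [(abs_le.1 h3).1, (abs_lt.1 h2).2, min_le_right η (e / 3)]
  · linarith [(abs_le.1 (h1 y)).2, min_le_left η (e / 3)]

end IsTravelingWave

/-! ### Exponential decay of the Hamiltonian density on lower half-planes -/

theorem hasDerivAt_diagonal {u : ℝ → ℝ → ℝ} (hu : ContDiff ℝ 1 (fun p : ℝ × ℝ => u p.1 p.2))
    (a b t : ℝ) : HasDerivAt (fun t => u (a + t) (b + t))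
      (pdx u (a + t) (b + t) + pdy u (a + t) (b + t)) t := by
  have h := ((hu.differentiable one_ne_zero) (a + t, b + t)).hasFDerivAt.comp_hasDerivAt
    (f := fun t : ℝ => (a + t, b + t)) t
    (((hasDerivAt_id t).const_add a).prodMk ((hasDerivAt_id t).const_add b))
  refine h.congr_deriv ?_
  have e : ((1 : ℝ), (1 : ℝ)) = (1, 0) + (0, 1) := by simp
  rw [e, map_add]
  exact congrArg₂ _ (pdx_eq_fderiv hu _ _).deriv.symm (pdy_eq_fderiv hu _ _).deriv.symm

theorem pdx_const_add (w : ℝ → ℝ → ℝ) (a : ℝ) : pdx (fun x y => a + w x y) = pdx w := by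
  ext x y; exact deriv_const_add _

theorem pdy_const_add (w : ℝ → ℝ → ℝ) (a : ℝ) : pdy (fun x y => a + w x y) = pdy w := by
  ext x y; exact deriv_const_add _

theorem driftLaplacian_const_add (c : ℝ) (w : ℝ → ℝ → ℝ) (a x y : ℝ) :
    driftLaplacian c (fun x y => a + w x y) x y = driftLaplacian c w x y := by
  simp only [driftLaplacian, pdxx, pdyy, pdx_const_add, pdy_const_add]

theorem integrable_exp_neg_mul_abs {κ : ℝ} (hκ : 0 < κ) :
    Integrable fun x : ℝ => exp (-(κ * |x|)) := by
  rw [← integrableOn_univ, ← Set.Iic_union_Ioi (a := (0 : ℝ))]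
  refine IntegrableOn.union
    ((integrableOn_exp_mul_Iic hκ 0).congr_fun (fun x hx => ?_) measurableSet_Iic)
    ((integrableOn_exp_mul_Ioi (neg_lt_zero.2 hκ) 0).congr_fun (fun x hx => ?_) measurableSet_Ioi)
  · simp only [abs_of_nonpos (Set.mem_Iic.1 hx), mul_neg, neg_neg]
  · simp only [abs_of_pos (Set.mem_Ioi.1 hx), neg_mul]

namespace IsTravelingWave

variable {F : ℝ → ℝ} {c : ℝ} {u : ℝ → ℝ → ℝ}

theorem exists_wedge (hF : BalancedDoubleWell F) (hc : 0 < c) (hu : IsTravelingWave F c u)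
    {δ : ℝ} (hδ : 0 < δ) (hδ1 : δ < 1) :
    ∃ X Y, ∀ x ≥ X, ∀ y ≤ Y + (x - X), u x y ≤ -1 + δ := by
  have hq : 0 < standingSlope F (-1 + δ) :=
    sqrt_pos.2 (mul_pos two_pos (hF.pos ⟨by linarith, by linarith⟩))
  have hη : 0 < standingSlope F (-1 + δ) / 4 := by positivity
  obtain ⟨X, hX⟩ := eventually_atTop.1 ((hu.eventually_dx_le hF hc hη).and
    (hu.eventually_dy_le hF hc hη))
  obtain ⟨Y, hY⟩ := ((hu.2.2 X).eventually (gt_mem_nhds (show (-1 : ℝ) < -1 + δ by linarith))).exists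
  refine ⟨X, Y, fun x hx y hy => ?_⟩
  have hd := fun t => hasDerivAt_diagonal hu.1.contDiff_one X Y t
  have h := image_le_of_deriv_right_lt_deriv_boundary (a := 0) (b := x - X)
    (fun t _ => (hd t).continuousAt.continuousWithinAt) (fun t _ => (hd t).hasDerivWithinAt)
    (B := fun _ => -1 + δ) (B' := fun _ => 0) (by simpa using hY.le)
    (fun t => hasDerivAt_const t _) (fun t ht he => by
      obtain ⟨h1, h2⟩ := hX (X + t) (by linarith [ht.1])
      have h3 := h1 (Y + t)
      rw [he] at h3
      linarith [(abs_le.1 (h2 (Y + t))).2]) (Set.right_mem_Icc.2 (sub_nonneg.2 hx))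
  simp only [add_sub_cancel] at h
  exact ((hu.1.monotone x).monotone hy).trans h

theorem exists_exp_bound (hF : BalancedDoubleWell F) (hc : 0 < c) (hu : IsTravelingWave F c u)
    (Y : ℝ) : ∃ C > 0, ∃ κ > 0, ∃ A, ∀ x ≥ A, ∀ y ≤ Y, 1 + u x y ≤ C * exp (-(κ * x)) := by
  obtain ⟨μ, hμ, δ, hδ, hδ1, hlin⟩ := hF.exists_linear_lower_bound
  obtain ⟨X, Y₀, hw⟩ := hu.exists_wedge hF hc hδ hδ1
  set k := min 1 (μ / (1 + c)) with hk
  have hk0 : 0 < k := by positivity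
  have hkμ : k ^ 2 + c * k ≤ μ := by
    have h1 : k ≤ 1 := min_le_left _ _
    have h2 : k * (1 + c) ≤ μ := (le_div_iff₀ (by positivity)).1 (min_le_right _ _)
    nlinarith
  set A := max X (X + Y - Y₀) with hA
  have hA1 : X ≤ A := le_max_left _ _
  have hA2 : X + Y - Y₀ ≤ A := le_max_right _ _
  refine ⟨4 * exp (k / 2 * A), by positivity, k / 2, by positivity, A, fun x hx y hy => ?_⟩
  have hin : ∀ x' y', |x' - x| ≤ (x - A) / 2 → |y' - y| ≤ (x - A) / 2 → u x' y' ≤ -1 + δ := by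
    intro x' y' hx' hy'
    have h1 := (abs_le.1 hx').1
    have h2 := (abs_le.1 hy').2
    exact hw x' (by linarith) y' (by linarith)
  have h := exp_small_at_center (v := fun x y => 1 + u x y) (contDiff_const.add hu.1.contDiff_two)
    (x₀ := x) (y₀ := y) (r := (x - A) / 2) hc.le hμ hk0 hkμ (by linarith)
    (fun x' y' hx' hy' => by linarith [hin x' y' hx' hy'])
    (fun x' y' hx' hy' => by
      rw [driftLaplacian_const_add, driftLaplacian, hu.1.2.1, add_comm 1]
      exact hlin _ ⟨(abs_le.1 (hu.1.2.2.1 x' y')).1, hin x' y' hx' hy'⟩)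
  refine h.trans_eq ?_
  rw [mul_assoc, ← exp_add]
  ring_nf

theorem exists_hamiltonianDensity_exp_bound (hF : BalancedDoubleWell F) (hc : 0 < c)
    (hu : IsTravelingWave F c u) (Y : ℝ) :
    ∃ C > 0, ∃ κ > 0, ∀ x ≥ 0, ∀ y ≤ Y, |hamiltonianDensity F u x y| ≤ C * exp (-(κ * x)) := by
  obtain ⟨C, hC, κ, hκ, A, hA⟩ := hu.exists_exp_bound hF hc (Y + 1)
  obtain ⟨G, hG, hgrad⟩ := exists_gradient_bound hc.le
  obtain ⟨K, hK, hlin⟩ := hF.exists_linear_upper_bound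
  obtain ⟨D, hD, hb⟩ := hu.1.exists_derivative_bound hF hc.le
  obtain ⟨M, hM, hQ⟩ := hu.exists_hamiltonianDensity_bound hF hc.le
  set B := C * exp κ with hB
  have hB0 : 0 < B := by positivity
  have hlarge : ∀ x ≥ A + 1, ∀ y ≤ Y, |hamiltonianDensity F u x y| ≤
      (D * (G * (1 + K)) + K) * B * exp (-(κ * x)) := by
    intro x hx y hy
    have hexp : B * exp (-(κ * x)) = C * exp (-(κ * (x - 1))) := by
      rw [hB, mul_assoc, ← exp_add]; ring_nf
    have hv : ∀ x' y', |x' - x| ≤ 1 → |y' - y| ≤ 1 → 1 + u x' y' ≤ B * exp (-(κ * x)) := by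
      intro x' y' hx' hy'
      have h1 := (abs_le.1 hx').1
      have h2 := (abs_le.1 hy').2
      refine (hA x' (by linarith) y' (by linarith)).trans ?_
      rw [hexp]
      refine mul_le_mul_of_nonneg_left (exp_le_exp.2 ?_) hC.le
      nlinarith
    have hv0 : ∀ x' y', 0 ≤ 1 + u x' y' := fun x' y' => by
      linarith [(abs_le.1 (hu.1.2.2.1 x' y')).1]
    obtain ⟨g1, g2⟩ := hgrad (fun x y => 1 + u x y) (contDiff_const.add hu.1.contDiff_two) x y
      (B * exp (-(κ * x))) (K * (B * exp (-(κ * x))))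
      (fun x' y' hx' hy' => by rw [abs_of_nonneg (hv0 x' y')]; exact hv x' y' hx' hy')
      (fun x' y' hx' hy' => by
        rw [driftLaplacian_const_add, driftLaplacian, hu.1.2.1]
        refine (hlin _ (hu.1.2.2.1 x' y')).1.trans (mul_le_mul_of_nonneg_left ?_ hK.le)
        rw [add_comm]; exact hv x' y' hx' hy')
    rw [pdx_const_add] at g1
    rw [pdy_const_add] at g2
    set E := B * exp (-(κ * x)) with hE
    have h3 := (hlin _ (hu.1.2.2.1 x y)).2
    have h4 := mul_le_mul_of_nonneg_left (hv x y (by simp) (by simp)) hK.le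
    have h5 := hF.nonneg_s8 (hu.1.2.2.1 x y)
    have hsq : ∀ {p : ℝ}, |p| ≤ D → |p| ≤ G * (E + K * E) → p ^ 2 ≤ D * (G * (E + K * E)) := by
      intro p h1 h2
      rw [← sq_abs, sq]
      exact mul_le_mul h1 h2 (abs_nonneg _) hD.le
    have s1 := hsq (hb x y).1 g1
    have s2 := hsq (hb x y).2.1 g2
    have e1 : (D * (G * (1 + K)) + K) * B * exp (-(κ * x)) = D * (G * (E + K * E)) + K * E := by
      rw [hE]; ring
    rw [e1, hamiltonianDensity, abs_le]
    constructor <;> nlinarith [sq_nonneg (pdx u x y), sq_nonneg (pdy u x y)]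
  refine ⟨(D * (G * (1 + K)) + K) * B + M * exp (κ * |A + 1|), by positivity, κ, hκ,
    fun x hx y hy => ?_⟩
  rw [add_mul]
  rcases le_total (A + 1) x with h | h
  · exact (hlarge x h y hy).trans (le_add_of_nonneg_right (by positivity))
  · refine ((hQ x y).trans ?_).trans (le_add_of_nonneg_left (by positivity))
    rw [mul_assoc, ← exp_add]
    refine le_mul_of_one_le_right hM.le (one_le_exp ?_)
    nlinarith [le_abs_self (A + 1)]

end IsTravelingWave

/-! ### The Hamiltonian of horizontal lines -/

theorem hamiltonianDensity_reflect (F : ℝ → ℝ) (w : ℝ → ℝ → ℝ) (x y : ℝ) :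
    hamiltonianDensity F (fun x y => w (-x) y) x y = hamiltonianDensity F w (-x) y := by
  rw [hamiltonianDensity, pdx_reflect, neg_sq]
  rfl

namespace IsTravelingWave

variable {F : ℝ → ℝ} {c : ℝ} {u : ℝ → ℝ → ℝ}

theorem exists_hamiltonianDensity_majorant (hF : BalancedDoubleWell F) (hc : 0 < c)
    (hu : IsTravelingWave F c u) (Y : ℝ) :
    ∃ g : ℝ → ℝ, Integrable g ∧ ∀ y ≤ Y, ∀ x, |hamiltonianDensity F u x y| ≤ g x := by
  obtain ⟨C₁, hC₁, κ₁, hκ₁, h1⟩ := hu.exists_hamiltonianDensity_exp_bound hF hc Y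
  obtain ⟨C₂, hC₂, κ₂, hκ₂, h2⟩ := hu.reflect.exists_hamiltonianDensity_exp_bound hF hc Y
  refine ⟨fun x => C₁ * exp (-(κ₁ * |x|)) + C₂ * exp (-(κ₂ * |x|)),
    ((integrable_exp_neg_mul_abs hκ₁).const_mul C₁).add
      ((integrable_exp_neg_mul_abs hκ₂).const_mul C₂), fun y hy x => ?_⟩
  rcases le_total 0 x with h | h
  · refine le_trans ?_ (le_add_of_nonneg_right (by positivity))
    rw [abs_of_nonneg h]
    exact h1 x h y hy
  · refine le_trans ?_ (le_add_of_nonneg_left (by positivity))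
    rw [abs_of_nonpos h]
    have h3 := h2 (-x) (neg_nonneg.2 h) y hy
    rwa [hamiltonianDensity_reflect, neg_neg] at h3

theorem integrable_hamiltonianDensity (hF : BalancedDoubleWell F) (hc : 0 < c)
    (hu : IsTravelingWave F c u) (y : ℝ) : Integrable fun x => hamiltonianDensity F u x y := by
  obtain ⟨g, hg, h⟩ := hu.exists_hamiltonianDensity_majorant hF hc y
  exact hg.mono' (continuous_slice_left
    (hu.1.contDiff_hamiltonianDensity hF).continuous y).aestronglyMeasurable
    (Eventually.of_forall (h y le_rfl))

theorem tendsto_hamiltonian_atBot (hF : BalancedDoubleWell F) (hc : 0 < c)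
    (hu : IsTravelingWave F c u) :
    Tendsto (fun y => ∫ x, hamiltonianDensity F u x y) atBot (nhds 0) := by
  obtain ⟨g, hg, h⟩ := hu.exists_hamiltonianDensity_majorant hF hc 0
  have := tendsto_integral_filter_of_dominated_convergence (l := atBot) (μ := volume)
    (F := fun y x => hamiltonianDensity F u x y) (f := fun _ => (0 : ℝ)) g
    (Eventually.of_forall fun y => (continuous_slice_left
      (hu.1.contDiff_hamiltonianDensity hF).continuous y).aestronglyMeasurable)
    ((eventually_le_atBot 0).mono fun y hy => Eventually.of_forall (h y hy)) hg
    (Eventually.of_forall fun x => (hu.tendsto_hamiltonianDensity_zero hF hc.le x).2)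
  simpa using this

theorem tendsto_intervalIntegral_momentumDensity (hF : BalancedDoubleWell F) (hc : 0 < c)
    (hu : IsTravelingWave F c u) (y₁ y₂ : ℝ) :
    Tendsto (fun x => ∫ y in y₁..y₂, momentumDensity u x y) atTop (nhds 0) := by
  obtain ⟨C, hC, hb⟩ := hu.1.exists_derivative_bound hF hc.le
  rw [Metric.tendsto_nhds]
  intro ε hε
  set η := ε / (2 * C * (|y₂ - y₁| + 1)) with hη
  have hη0 : 0 < η := by positivity
  filter_upwards [hu.eventually_dy_le hF hc hη0] with x hx
  have h := intervalIntegral.norm_integral_le_of_norm_le_const (a := y₁) (b := y₂)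
    (f := fun y => momentumDensity u x y) (C := C * η) fun y _ => by
      rw [momentumDensity, norm_mul]
      exact mul_le_mul (hb x y).1 (hx y) (norm_nonneg _) hC.le
  rw [dist_zero_right]
  have h1 : C * η * (|y₂ - y₁| + 1) = ε / 2 := by rw [hη]; field_simp
  have h2 : 0 < C * η := by positivity
  nlinarith

theorem integrable_intervalIntegral_dy_sq (hF : BalancedDoubleWell F) (hc : 0 < c)
    (hu : IsTravelingWave F c u) {y₁ y₂ : ℝ} (h : y₁ ≤ y₂) :
    Integrable fun x => ∫ y in y₁..y₂, (pdy u x y) ^ 2 :=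
  (hu.integrable_integral_dy_sq hF hc).mono'
    (intervalIntegral.continuous_parametric_intervalIntegral_of_continuous'
      hu.1.continuous_dy_sq _ _).aestronglyMeasurable
    (Eventually.of_forall fun x => abs_intervalIntegral_le_integral
      (hu.integrable_dy_sq hF hc.le x) (fun _ => sq_nonneg _) h)

theorem hamiltonian_sub_hamiltonian (hF : BalancedDoubleWell F) (hc : 0 < c)
    (hu : IsTravelingWave F c u) {y₁ y₂ : ℝ} (h : y₁ ≤ y₂) :
    (∫ x, hamiltonianDensity F u x y₂) - (∫ x, hamiltonianDensity F u x y₁) =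
      c * ∫ x, ∫ y in y₁..y₂, (pdy u x y) ^ 2 := by
  have l1 := (intervalIntegral_tendsto_integral (hu.integrable_intervalIntegral_dy_sq hF hc h)
    tendsto_neg_atTop_atBot tendsto_id).const_mul c
  have l2 := fun y => intervalIntegral_tendsto_integral (hu.integrable_hamiltonianDensity hF hc y)
    tendsto_neg_atTop_atBot tendsto_id
  have l3 := hu.tendsto_intervalIntegral_momentumDensity hF hc y₁ y₂
  have l4 := hu.reflect.tendsto_intervalIntegral_momentumDensity hF hc y₁ y₂
  simp_rw [momentumDensity_reflect, intervalIntegral.integral_neg] at l4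
  simp_rw [hu.1.box_identity hF] at l1
  have := tendsto_nhds_unique l1 ((((l2 y₂).sub (l2 y₁)).sub l3).add l4.neg |>.congr fun n => by
    simp)
  rw [this]
  ring

theorem tendsto_hamiltonian_atTop (hF : BalancedDoubleWell F) (hc : 0 < c)
    (hu : IsTravelingWave F c u) :
    Tendsto (fun y => ∫ x, hamiltonianDensity F u x y) atTop
      (nhds (c * ∫ p : ℝ × ℝ, (pdy u p.1 p.2) ^ 2)) := by
  have l1 : Tendsto (fun m : ℝ => ∫ x, ∫ y in -m..m, (pdy u x y) ^ 2) atTop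
      (nhds (∫ x, ∫ y, (pdy u x y) ^ 2)) := by
    refine tendsto_integral_filter_of_dominated_convergence _ ?_ ?_
      (hu.integrable_integral_dy_sq hF hc) ?_
    · exact Eventually.of_forall fun m =>
        (intervalIntegral.continuous_parametric_intervalIntegral_of_continuous'
          hu.1.continuous_dy_sq _ _).aestronglyMeasurable
    · filter_upwards [eventually_ge_atTop 0] with m hm
      exact Eventually.of_forall fun x => abs_intervalIntegral_le_integral
        (hu.integrable_dy_sq hF hc.le x) (fun _ => sq_nonneg _) (by linarith)
    · exact Eventually.of_forall fun x => intervalIntegral_tendsto_integral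
        (hu.integrable_dy_sq hF hc.le x) tendsto_neg_atTop_atBot tendsto_id
  have l2 := (l1.const_mul c).add
    ((hu.tendsto_hamiltonian_atBot hF hc).comp tendsto_neg_atTop_atBot)
  rw [add_zero, ← integral_prod (fun p : ℝ × ℝ => (pdy u p.1 p.2) ^ 2)
    (hu.integrable_dy_sq_prod hF hc)] at l2
  refine l2.congr' ?_
  filter_upwards [eventually_ge_atTop 0] with m hm
  rw [← hu.hamiltonian_sub_hamiltonian hF hc (by linarith : -m ≤ m)]
  simp

end IsTravelingWave

/-- Limits of the Hamiltonian `ρ` at `±∞` and the total balance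
`c ∫_{ℝ²} uᵧ² = 2𝔢` (from the proof of Lemma 2.6, Case (i)). -/
theorem rho_limits_and_total_balance
    (F : ℝ → ℝ) (hF : BalancedDoubleWell F) (c : ℝ) (hc : 0 < c)
    (u : ℝ → ℝ → ℝ) (hu : IsTravelingWave F c u) :
    Tendsto (fun y => ∫ x,
        ((1 / 2) * ((pdx u x y) ^ 2 - (pdy u x y) ^ 2) + F (u x y)))
      atBot (nhds 0) ∧
    Tendsto (fun y => ∫ x,
        ((1 / 2) * ((pdx u x y) ^ 2 - (pdy u x y) ^ 2) + F (u x y)))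
      atTop (nhds (2 * ∫ s in (-1 : ℝ)..1, Real.sqrt (2 * F s))) ∧
    c * ∫ p : ℝ × ℝ, (pdy u p.1 p.2) ^ 2 =
      2 * ∫ s in (-1 : ℝ)..1, Real.sqrt (2 * F s) := by
  exact ⟨hu.tendsto_hamiltonian_atBot hF hc,
    (hu.total_balance_and_momentum_limit hF hc).1 ▸ hu.tendsto_hamiltonian_atTop hF hc,
    (hu.total_balance_and_momentum_limit hF hc).1⟩
end
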